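/- arXiv:2605.21438 — 2 statements merged into one kernel-verified Lean document; each statement's English description precedes it below -/
import Mathlib

section
/- Let d > 2 be an integer and c₀ ∈ (0,1]. There exist δ_s ∈ (0,1/2] and C > 0, depending only on (d, c₀), such that for every admissible kernel J on ℤ^d with constant c₀ and every G ∈ 𝒢 with (J,G) satisfying Assumption G, for every β < β(δ_s) and every x ∈ ℤ^d with |x| ≤ 2σ_J: F_β(x) ≤ (C/σ_J^d)·(σ_J/(σ_J∨|x|))^{d−2}. -/
open scoped ENNReal

noncomputable section

namespace Blackbox

/-- Supremum norm of a lattice point. -/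
def supNorm {d : ℕ} (x : Fin d → ℤ) : ℝ :=
  ((Finset.univ.sup fun i => (x i).natAbs : ℕ) : ℝ)

/-- Squared Euclidean norm of a lattice point. -/
def sqNorm {d : ℕ} (x : Fin d → ℤ) : ℝ :=
  ∑ i, ((x i : ℝ)) ^ 2

/-- Invariance under coordinate permutations and sign flips of individual coordinates. -/
def IsSymmFun {d : ℕ} {α : Type*} (f : (Fin d → ℤ) → α) : Prop :=
  ∀ (π : Equiv.Perm (Fin d)) (e : Fin d → Bool) (x : Fin d → ℤ),
    f (fun i => (if e i then -1 else 1) * x (π i)) = f x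

/-- First coordinate (dot product with `e₁`). -/
def e1 {d : ℕ} {α : Type*} [Zero α] (y : Fin d → α) : α :=
  if h : 0 < d then y ⟨0, h⟩ else 0

/-- An admissible kernel on `ℤ^d` with constant `c₀`. -/
structure AdmissibleKernel (d : ℕ) (c₀ : ℝ) where
  J : (Fin d → ℤ) → ℝ
  nonneg : ∀ x, 0 ≤ J x
  zero_at_zero : J 0 = 0
  summable : Summable J
  norm_one : ∑' x, J x = 1
  symm : IsSymmFun J
  R : ℝ
  R_ge_one : 1 ≤ R
  range_le : ∀ x, 0 < J x → supNorm x ≤ R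
  range_attained : ∃ x, 0 < J x ∧ supNorm x = R
  summable_sq : Summable fun x => sqNorm x * J x
  sigma_lower : c₀ * R ≤ Real.sqrt (∑' x, sqNorm x * J x)
  J_upper : ∀ x, J x ≤ c₀⁻¹ / R ^ d

/-- `σ_J`, the square root of the variance of the kernel. -/
def AdmissibleKernel.sigma {d : ℕ} {c₀ : ℝ} (K : AdmissibleKernel d c₀) : ℝ :=
  Real.sqrt (∑' x, sqNorm x * K.J x)

/-- A family `G ∈ 𝒢` together with an admissible kernel `J` such that `(J,G)` satisfies
Assumption G (with error-term family `H`). -/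
structure Model (d : ℕ) (c₀ : ℝ) where
  K : AdmissibleKernel d c₀
  G : ℝ → (Fin d → ℤ) → ℝ≥0∞
  βc : ℝ≥0∞
  βc_pos : 0 < βc
  init : ∀ x, G 0 x = if x = 0 then 1 else 0
  G' : ℝ → (Fin d → ℤ) → ℝ
  mono : ∀ (x : Fin d → ℤ) ⦃β₁ β₂ : ℝ⦄, 0 ≤ β₁ → β₁ ≤ β₂ →
    ENNReal.ofReal β₂ ≤ βc → G β₁ x ≤ G β₂ x
  deriv : ∀ (x : Fin d → ℤ) ⦃β : ℝ⦄, 0 ≤ β → ENNReal.ofReal β < βc →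
    HasDerivWithinAt (fun t => (G t x).toReal) (G' β x) (Set.Ici 0) β
  symm : ∀ β, IsSymmFun (G β)
  expDecay : ∀ ⦃β : ℝ⦄, 0 ≤ β → ENNReal.ofReal β < βc →
    ∃ C > (0:ℝ), ∃ c > (0:ℝ), ∀ x, G β x ≤ ENNReal.ofReal (C * Real.exp (-c * supNorm x))
  limit : βc ≠ ⊤ → ∀ x, G βc.toReal x = ⨆ β ∈ Set.Ico (0 : ℝ) βc.toReal, G β x
  I1 : ∀ ⦃β' β : ℝ⦄, 0 ≤ β' → β' ≤ β → ENNReal.ofReal β < βc →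
    ∀ x, G β x ≤ G β' x + ENNReal.ofReal (β - β') *
      ∑' p : (Fin d → ℤ) × (Fin d → ℤ),
        G β' p.1 * ENNReal.ofReal (K.J p.2) * G β (x - p.1 - p.2)
  H : ℝ → (Fin d → ℤ) → ℝ
  H_nonneg : ∀ β x, 0 ≤ H β x
  H_zero : ∀ x, H 0 x = 0
  H_symm : ∀ β x, H β (-x) = H β x
  H_cont : ∀ x, ContinuousOn (fun β => H β x)
    {β : ℝ | 0 ≤ β ∧ ENNReal.ofReal β < βc}
  H_expDecay : ∀ ⦃β : ℝ⦄, 0 ≤ β → ENNReal.ofReal β < βc →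
    ∃ C > (0:ℝ), ∃ c > (0:ℝ), ∀ x, H β x ≤ C * Real.exp (-c * supNorm x)
  I2 : ∀ ⦃β : ℝ⦄, 0 ≤ β → ENNReal.ofReal β < βc → ∀ x,
    (∑' p : (Fin d → ℤ) × (Fin d → ℤ),
      (G β p.1).toReal * (K.J p.2 - H β p.2) * (G β (x - p.1 - p.2)).toReal)
      ≤ G' β x

namespace Model

variable {d : ℕ} {c₀ : ℝ}

def sigma (M : Model d c₀) : ℝ := M.K.sigma

/-- `F_β = J * G_β`. -/
def F (M : Model d c₀) (β : ℝ) (x : Fin d → ℤ) : ℝ≥0∞ :=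
  ∑' y, ENNReal.ofReal (M.K.J y) * M.G β (x - y)

/-- The susceptibility `χ(β)`. -/
def chi (M : Model d c₀) (β : ℝ) : ℝ≥0∞ := ∑' x, M.G β x

/-- `ξ(β)²`. -/
def xiSq (M : Model d c₀) (β : ℝ) : ℝ≥0∞ :=
  (∑' x, ENNReal.ofReal (sqNorm x) * M.F β x) / M.chi β

/-- The correlation length of order two, `ξ(β)`. -/
def xi (M : Model d c₀) (β : ℝ) : ℝ := Real.sqrt (M.xiSq β).toReal

/-- The error term `E(β)`. -/
def E (M : Model d c₀) (β : ℝ) : ℝ≥0∞ :=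
  ⨆ t ∈ Set.Icc (0 : ℝ) β,
    (ENNReal.ofReal (∑' x, M.H t x) +
      ENNReal.ofReal (∑' x, sqNorm x * M.H t x) / M.xiSq t)

/-- `β(δ)`. -/
def betaOf (M : Model d c₀) (δ : ℝ) : ℝ :=
  sSup {β : ℝ | 0 ≤ β ∧ ENNReal.ofReal β < M.βc ∧ M.E β < ENNReal.ofReal δ}

/-- One-step distribution of the effective random walk at parameter `β`. -/
def effStep (M : Model d c₀) (β : ℝ) (y : Fin d → ℤ) : ℝ≥0∞ :=
  M.F β y / M.chi β

/-- `k`-step distribution of the effective random walk at parameter `β`. -/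
def effIter (M : Model d c₀) (β : ℝ) : ℕ → (Fin d → ℤ) → ℝ≥0∞
  | 0 => fun x => if x = 0 then 1 else 0
  | n + 1 => fun x => ∑' y, M.effStep β y * M.effIter β n (x - y)

/-- Moment generating function `M_β(s)` of the first coordinate of one step of the
effective random walk. -/
def Mgf (M : Model d c₀) (β s : ℝ) : ℝ≥0∞ :=
  ∑' y : Fin d → ℤ, M.effStep β y * ENNReal.ofReal (Real.exp (s / M.xi β * ((e1 y : ℤ) : ℝ)))

end Model

end Blackbox
open Blackbox

/-!
Let `a = (t - s) * χ(s)`. The renewal inequality `F_t ≤ F_s + (t - s) • F_s * F_t` dominates `F_t`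
by `F_s` convolved with the Green function of a random walk with step distribution `F_s / χ(s)`,
killed with probability `1 - a` at every step. By Parseval, and because in dimension `d > 2` the
Fourier transform of the Green function has an integrable singularity once the kurtosis of the step
distribution is bounded, `∑ F_t²` exceeds `∑ F_s²` at most by a factor of order
`(1 - a) ^ (-3 / 4)`.

Choose scales `s₀ = 0 < s₁ < s₂ < ⋯` with `χ(s_n) = l ^ n`. The lower differential inequality for
`χ` gives `1 - a ≥ 1 / (2 * l)` between consecutive scales, so for `l` large `∑ F²` is multiplied by
at most `l ^ (3 / 4)` up to a constant, hence by at most `l / 2`, while `χ` is multiplied by `l`.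
The kurtosis bound passes from one scale to the next because, up to an error controlled by `δ`, the
renewal inequality is an equality, and a geometric sum of `l` steps has a nearly universal kurtosis.
Finally `t - s_n ≤ l ^ (-n)` and `F_s * F_t ≤ 2 * ∑ F_t²`, so the increments of `sup F` between
consecutive scales are summable as a geometric series of ratio `1 / 2`.
-/

namespace Blackbox

section Convolution

variable {A : Type*} [AddCommGroup A]

/-- Convolution of two `ℝ≥0∞`-valued functions on a discrete group. -/
def conv (f g : A → ℝ≥0∞) (x : A) : ℝ≥0∞ := ∑' y, f y * g (x - y)

variable {f g h : A → ℝ≥0∞}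

lemma conv_comm (f g : A → ℝ≥0∞) : conv f g = conv g f := by
  funext x
  rw [conv, ← (Equiv.subLeft x).tsum_eq]
  simp [conv, mul_comm]

lemma tsum_conv_mul (f g w : A → ℝ≥0∞) :
    ∑' x, conv f g x * w x = ∑' y, ∑' z, f y * g z * w (y + z) := by
  simp_rw [conv, ← ENNReal.tsum_mul_right]
  rw [ENNReal.tsum_comm]
  refine tsum_congr fun y => ?_
  rw [← (Equiv.addLeft y).tsum_eq]
  simp

lemma tsum_conv (f g : A → ℝ≥0∞) : ∑' x, conv f g x = (∑' x, f x) * ∑' x, g x := by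
  simpa [ENNReal.tsum_mul_left, ENNReal.tsum_mul_right] using tsum_conv_mul f g 1

lemma conv_assoc (f g h : A → ℝ≥0∞) : conv (conv f g) h = conv f (conv g h) := by
  funext x
  have hleft := tsum_conv_mul f g fun y => h (x - y)
  rw [conv, hleft]
  refine tsum_congr fun y => ?_
  simp only [conv, ← ENNReal.tsum_mul_left, mul_assoc, sub_add_eq_sub_sub]

lemma conv_mono {f' g' : A → ℝ≥0∞} (hf : f ≤ f') (hg : g ≤ g') : conv f g ≤ conv f' g' :=
  fun x => ENNReal.tsum_le_tsum fun y => mul_le_mul' (hf y) (hg (x - y))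

lemma conv_add (f g h : A → ℝ≥0∞) : conv f (g + h) = conv f g + conv f h := by
  funext x
  simp [conv, mul_add, ENNReal.tsum_add]

lemma conv_smul (c : ℝ≥0∞) (f g : A → ℝ≥0∞) : conv f (c • g) = c • conv f g := by
  funext x
  simp [conv, mul_left_comm, ENNReal.tsum_mul_left]

lemma conv_tsum {κ : Type*} (f : A → ℝ≥0∞) (g : κ → A → ℝ≥0∞) (x : A) :
    conv f (fun y => ∑' k, g k y) x = ∑' k, conv f (g k) x := by
  simp only [conv, ← ENNReal.tsum_mul_left]
  exact ENNReal.tsum_comm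

lemma conv_map_equiv (e : A ≃+ A) (f g : A → ℝ≥0∞) :
    conv (f ∘ e) (g ∘ e) = conv f g ∘ e := by
  funext x
  rw [Function.comp_apply, conv, conv,
    ← e.toEquiv.tsum_eq fun y => f y * g (e x - y)]
  simp

lemma conv_le_tsum_sq_add_tsum_sq (f g : A → ℝ≥0∞) (x : A) :
    conv f g x ≤ ∑' y, f y ^ 2 + ∑' y, g y ^ 2 := by
  rw [← (Equiv.subLeft x).tsum_eq fun y => g y ^ 2, ← ENNReal.tsum_add]
  refine ENNReal.tsum_le_tsum fun y => ?_
  obtain hfg | hgf := le_total (f y) (g (x - y))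
  · exact (mul_le_mul_left hfg _).trans (le_add_left (sq _).ge)
  · exact (mul_le_mul_right hgf _).trans (le_add_right (sq _).ge)

lemma inv_smul_le_add_conv {a m : ℝ≥0∞} (hm0 : m ≠ 0) (hm : m ≠ ∞) (hle : g ≤ f + a • conv f g) :
    m⁻¹ • g ≤ m⁻¹ • f + (a * m) • conv (m⁻¹ • f) (m⁻¹ • g) := by
  have hconv : (a * m) • conv (m⁻¹ • f) (m⁻¹ • g) = m⁻¹ • (a • conv f g) := by
    rw [conv_smul, conv_comm, conv_smul, conv_comm, smul_smul, smul_smul, smul_smul,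
      mul_assoc a, ENNReal.mul_inv_cancel hm0 hm, mul_one, mul_comm]
  rw [hconv, ← smul_add]
  exact smul_le_smul_of_nonneg_left hle bot_le

lemma tsum_iterate_conv (f g : A → ℝ≥0∞) (n : ℕ) :
    ∑' x, (conv f)^[n] g x = (∑' x, f x) ^ n * ∑' x, g x := by
  induction n with
  | zero => simp
  | succ n ih => rw [Function.iterate_succ_apply', tsum_conv, ih, pow_succ', mul_assoc]

/-- The Green function `∑ₖ aᵏ f^{*(k+1)}` of the random walk with step distribution `f` which
survives each further step with weight `a`. -/
def resolvent (a : ℝ≥0∞) (f : A → ℝ≥0∞) (x : A) : ℝ≥0∞ := ∑' k : ℕ, a ^ k * (conv f)^[k] f x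

lemma resolvent_eq (a : ℝ≥0∞) (f : A → ℝ≥0∞) :
    resolvent a f = f + a • conv f (resolvent a f) := by
  funext x
  have hconv : conv f (resolvent a f) x = ∑' k, a ^ k * (conv f)^[k + 1] f x := by
    simp only [Function.iterate_succ_apply']
    exact (conv_tsum f (fun k => a ^ k • (conv f)^[k] f) x).trans
      (tsum_congr fun k => congrFun (conv_smul _ _ _) x)
  rw [resolvent, tsum_eq_zero_add' ENNReal.summable, Pi.add_apply, Pi.smul_apply, hconv,
    smul_eq_mul, ← ENNReal.tsum_mul_left]
  simp [pow_succ', mul_assoc]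

lemma tsum_resolvent (a : ℝ≥0∞) (f : A → ℝ≥0∞) :
    ∑' x, resolvent a f x = (1 - a * ∑' x, f x)⁻¹ * ∑' x, f x := by
  simp_rw [resolvent]
  rw [ENNReal.tsum_comm]
  simp_rw [ENNReal.tsum_mul_left, tsum_iterate_conv, ← mul_assoc, ← mul_pow]
  rw [ENNReal.tsum_mul_right, ENNReal.tsum_geometric]

lemma le_resolvent_add_iterate {a : ℝ≥0∞} (hg : g ≤ f + a • conv f g) (n : ℕ) :
    g ≤ resolvent a f + a ^ n • (conv f)^[n] g := by
  induction n with
  | zero => simp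
  | succ n ih =>
    calc g ≤ f + a • conv f g := hg
      _ ≤ f + a • conv f (resolvent a f + a ^ n • (conv f)^[n] g) := by
        gcongr
        exact conv_mono le_rfl ih
      _ = resolvent a f + a ^ (n + 1) • (conv f)^[n + 1] g := by
        rw [conv_add, conv_smul, smul_add, ← add_assoc, ← resolvent_eq, smul_smul, ← pow_succ',
          Function.iterate_succ_apply']

theorem le_resolvent {a : ℝ≥0∞} (ha : a * ∑' x, f x < 1) (hg : ∑' x, g x ≠ ∞)
    (hle : g ≤ f + a • conv f g) : g ≤ resolvent a f := by
  intro x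
  have hbound (n : ℕ) : g x ≤ resolvent a f x + (a * ∑' x, f x) ^ n * ∑' x, g x := by
    refine (le_resolvent_add_iterate hle n x).trans ?_
    rw [mul_pow, mul_assoc, ← tsum_iterate_conv]
    exact add_le_add_right (mul_le_mul_right (ENNReal.le_tsum x) _) _
  have hlim := (ENNReal.Tendsto.mul_const
    (ENNReal.tendsto_pow_atTop_nhds_zero_of_lt_one ha) (.inr hg)).const_add (resolvent a f x)
  simpa using ge_of_tendsto' hlim hbound

end Convolution

section Fourier

open MeasureTheory UnitAddTorus
open scoped ComplexConjugate

variable {ι : Type*} [Fintype ι]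

lemma volume_unitAddTorus_eq_pi_haar :
    (volume : Measure (UnitAddTorus ι)) = Measure.pi fun _ => AddCircle.haarAddCircle := by
  rw [volume_pi]
  congr 1
  funext _
  exact AddCircle.volume_eq_smul_haarAddCircle.trans (by simp)

instance isNegInvariant_unitAddTorus :
    (volume : Measure (UnitAddTorus ι)).IsNegInvariant :=
  have : (volume : Measure UnitAddCircle).IsNegInvariant :=
    Measure.IsAddHaarMeasure.isNegInvariant_of_regular _
  Measure.pi.isNegInvariant _

-- `UnitAddTorus.mFourierCoeff` integrates against a Haar measure that is not definitionally
-- `volume`.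
lemma hasSum_sq_norm_mFourierCoeff (g : C(UnitAddTorus ι, ℂ)) :
    HasSum (fun x => ‖mFourierCoeff g x‖ ^ 2) (∫ θ, ‖g θ‖ ^ 2) := by
  rw [volume_unitAddTorus_eq_pi_haar]
  set μ : Measure (UnitAddTorus ι) := Measure.pi fun _ => AddCircle.haarAddCircle
  have hcoeff (x : ι → ℤ) : mFourierCoeff (ContinuousMap.toLp 2 μ ℂ g) x = mFourierCoeff g x :=
    mFourierCoeff_toLp g x
  simp only [← hcoeff]
  convert hasSum_sq_mFourierCoeff (ContinuousMap.toLp 2 μ ℂ g) using 1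
  refine integral_congr_ae ?_
  filter_upwards [ContinuousMap.coeFn_toLp (p := 2) (𝕜 := ℂ) μ g] with θ hθ
  rw [hθ]

lemma mFourierCoeff_tsum {c : (ι → ℤ) → ℂ} (hc : Summable fun x => c x • mFourier x)
    (n : ι → ℤ) : mFourierCoeff (∑' x, c x • mFourier x : C(UnitAddTorus ι, ℂ)) n = c n := by
  set μ : Measure (UnitAddTorus ι) := Measure.pi fun _ => AddCircle.haarAddCircle
  have hsum := (hc.hasSum.mapL (ContinuousMap.toLp 2 μ ℂ)).mapL (innerSL ℂ (mFourierLp 2 n))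
  rw [← mFourierCoeff_toLp, ← mFourierBasis_repr, HilbertBasis.repr_apply_apply, coe_mFourierBasis]
  refine hsum.unique ((hasSum_ite_eq n (c n)).congr_fun fun m => ?_)
  have horth := orthonormal_iff_ite.mp orthonormal_mFourier n m
  rw [map_smul, map_smul, innerSL_apply_apply]
  refine (congrArg (c m • ·) horth).trans ?_
  obtain rfl | hne := eq_or_ne n m
  · simp
  · simp [hne, hne.symm]

lemma norm_mFourier_apply (x : ι → ℤ) (θ : UnitAddTorus ι) : ‖mFourier x θ‖ = 1 := by
  simp [mFourier, norm_prod, Circle.norm_coe]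

lemma mFourier_apply_sub (x : ι → ℤ) (θ η : UnitAddTorus ι) :
    mFourier x (θ - η) = mFourier x θ * conj (mFourier x η) := by
  rw [← mFourier_neg]
  simp only [mFourier, ContinuousMap.coe_mk, ← Finset.prod_mul_distrib]
  refine Finset.prod_congr rfl fun i _ => ?_
  simp [fourier_apply, sub_eq_add_neg, AddCircle.toCircle_add]

lemma re_mFourier_coe (x : ι → ℤ) (t : ι → ℝ) :
    (mFourier x fun i => (t i : UnitAddCircle)).re = Real.cos (2 * Real.pi * ∑ i, x i * t i) := by
  have hexp : (mFourier x fun i => (t i : UnitAddCircle)) =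
      Complex.exp (((2 * Real.pi * ∑ i, x i * t i : ℝ) : ℂ) * Complex.I) := by
    simp only [mFourier, ContinuousMap.coe_mk, fourier_coe_apply, ← Complex.exp_sum]
    congr 1
    push_cast
    simp only [Finset.mul_sum, Finset.sum_mul]
    exact Finset.sum_congr rfl fun i _ => by ring
  rw [hexp, Complex.exp_ofReal_mul_I_re]

/-- The characteristic function `θ ↦ ∑ₓ f(x) e^{2πi x·θ}` of a mass distribution `f` on the lattice
`ℤ^ι`, a continuous function on the torus when `f` has finite total mass. -/
def charFn (f : (ι → ℤ) → ℝ≥0∞) : C(UnitAddTorus ι, ℂ) :=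
  ∑' x, ((f x).toReal : ℂ) • mFourier x

variable {f g : (ι → ℤ) → ℝ≥0∞}

lemma summable_norm_charFn (hf : ∑' x, f x ≠ ∞) :
    Summable fun x => ‖((f x).toReal : ℂ) • (mFourier x : C(UnitAddTorus ι, ℂ))‖ := by
  simpa [norm_smul, mFourier_norm] using ENNReal.summable_toReal hf

lemma hasSum_charFn (hf : ∑' x, f x ≠ ∞) (θ : UnitAddTorus ι) :
    HasSum (fun x => ((f x).toReal : ℂ) * mFourier x θ) (charFn f θ) :=
  (summable_norm_charFn hf).of_norm.hasSum.mapL (ContinuousMap.evalCLM ℂ θ)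

theorem lintegral_sq_norm_charFn (hf : ∑' x, f x ≠ ∞) :
    ∫⁻ θ, ‖charFn f θ‖ₑ ^ 2 = ∑' x, f x ^ 2 := by
  have hsum := hasSum_sq_norm_mFourierCoeff (charFn f)
  simp only [charFn, mFourierCoeff_tsum (summable_norm_charFn hf).of_norm] at hsum
  have hint : Integrable fun θ => ‖charFn f θ‖ ^ 2 :=
    ((charFn f).continuous.norm.pow 2).integrable_of_hasCompactSupport
      (HasCompactSupport.of_compactSpace _)
  calc ∫⁻ θ, ‖charFn f θ‖ₑ ^ 2 = ∫⁻ θ, ENNReal.ofReal (‖charFn f θ‖ ^ 2) := by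
        simp only [ENNReal.ofReal_pow (norm_nonneg _), ofReal_norm]
    _ = ∑' x, ENNReal.ofReal (‖((f x).toReal : ℂ)‖ ^ 2) := by
        rw [← ofReal_integral_eq_lintegral_ofReal hint (.of_forall fun _ => sq_nonneg _)]
        rw [charFn, ← hsum.tsum_eq, ENNReal.ofReal_tsum_of_nonneg (fun _ => sq_nonneg _)
          hsum.summable]
    _ = ∑' x, f x ^ 2 := by
        refine tsum_congr fun x => ?_
        rw [Complex.norm_real, Real.norm_eq_abs, sq_abs, ENNReal.ofReal_pow ENNReal.toReal_nonneg,
          ENNReal.ofReal_toReal (ENNReal.ne_top_of_tsum_ne_top hf x)]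

lemma charFn_apply (hf : ∑' x, f x ≠ ∞) (θ : UnitAddTorus ι) :
    charFn f θ = ∑' x, ((f x).toReal : ℂ) * mFourier x θ :=
  (hasSum_charFn hf θ).tsum_eq.symm

lemma charFn_add_apply (hf : ∑' x, f x ≠ ∞) (hg : ∑' x, g x ≠ ∞) (θ : UnitAddTorus ι) :
    charFn (f + g) θ = charFn f θ + charFn g θ := by
  have hfg : ∑' x, (f + g) x ≠ ∞ := by simp [ENNReal.tsum_add, hf, hg]
  refine (hasSum_charFn hfg θ).unique
    (((hasSum_charFn hf θ).add (hasSum_charFn hg θ)).congr_fun fun x => ?_)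
  rw [Pi.add_apply, ENNReal.toReal_add (ENNReal.ne_top_of_tsum_ne_top hf x)
    (ENNReal.ne_top_of_tsum_ne_top hg x), Complex.ofReal_add, add_mul]

lemma charFn_smul_apply {c : ℝ≥0∞} (hc : c ≠ ∞) (hf : ∑' x, f x ≠ ∞) (θ : UnitAddTorus ι) :
    charFn (c • f) θ = c.toReal * charFn f θ := by
  have hcf : ∑' x, (c • f) x ≠ ∞ := by
    simpa [ENNReal.tsum_mul_left] using ENNReal.mul_ne_top hc hf
  refine (hasSum_charFn hcf θ).unique (((hasSum_charFn hf θ).mul_left _).congr_fun fun x => ?_)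
  simp [mul_assoc]

theorem charFn_conv_apply (hf : ∑' x, f x ≠ ∞) (hg : ∑' x, g x ≠ ∞) (θ : UnitAddTorus ι) :
    charFn (conv f g) θ = charFn f θ * charFn g θ := by
  have hfg : ∑' x, conv f g x ≠ ∞ := by rw [tsum_conv]; exact ENNReal.mul_ne_top hf hg
  let shear : (ι → ℤ) × (ι → ℤ) ≃ (ι → ℤ) × (ι → ℤ) :=
    (Equiv.prodComm _ _).trans (Equiv.prodShear (.refl _) Equiv.subRight)
  have hprod := summable_mul_of_summable_norm (hasSum_charFn hf θ).summable.norm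
    (hasSum_charFn hg θ).summable.norm
  rw [charFn_apply hf, charFn_apply hg, tsum_mul_tsum_of_summable_norm
    (hasSum_charFn hf θ).summable.norm (hasSum_charFn hg θ).summable.norm, ← shear.tsum_eq]
  refine Eq.trans ?_ (shear.summable_iff.mpr hprod).tsum_prod.symm
  rw [charFn_apply hfg]
  refine tsum_congr fun x => ?_
  have hx : (conv f g x).toReal = ∑' y, (f y).toReal * (g (x - y)).toReal := by
    simp only [← ENNReal.toReal_mul]
    exact ENNReal.tsum_toReal_eq
      (ENNReal.ne_top_of_tsum_ne_top (ENNReal.ne_top_of_tsum_ne_top hfg x))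
  rw [hx, Complex.ofReal_tsum, ← tsum_mul_right]
  refine tsum_congr fun y => ?_
  have hadd : mFourier x θ = mFourier y θ * mFourier (x - y) θ := by
    rw [← mFourier_add, add_sub_cancel]
  simp only [Function.comp_apply, shear, Equiv.trans_apply, Equiv.prodComm_apply, Prod.swap_prod_mk,
    Equiv.prodShear_apply, Equiv.refl_apply, Equiv.subRight_apply, hadd]
  push_cast
  ring

lemma im_charFn_of_even (hf : ∑' x, f x ≠ ∞) (heven : ∀ x, f (-x) = f x) (θ : UnitAddTorus ι) :
    (charFn f θ).im = 0 := by
  rw [← Complex.conj_eq_iff_im, charFn_apply hf, Complex.conj_tsum, ← (Equiv.neg _).tsum_eq]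
  simp [heven, mFourier_neg]

lemma hasSum_one_sub_re_charFn (hf : ∑' x, f x = 1) (θ : UnitAddTorus ι) :
    HasSum (fun x => (f x).toReal * (1 - (mFourier x θ).re)) (1 - (charFn f θ).re) := by
  have hfin : ∑' x, f x ≠ ∞ := hf ▸ ENNReal.one_ne_top
  have hmass : HasSum (fun x => (f x).toReal) 1 := by
    simpa [← ENNReal.tsum_toReal_eq (ENNReal.ne_top_of_tsum_ne_top hfin), hf] using
      ENNReal.hasSum_toReal hfin
  simpa [mul_sub] using hmass.sub (Complex.hasSum_re (hasSum_charFn hfin θ))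

lemma norm_charFn_le (hf : ∑' x, f x ≠ ∞) (θ : UnitAddTorus ι) :
    ‖charFn f θ‖ ≤ (∑' x, f x).toReal := by
  have hnorm (x : ι → ℤ) : ‖((f x).toReal : ℂ) * mFourier x θ‖ = (f x).toReal := by
    simp [norm_mFourier_apply]
  rw [charFn_apply hf, ENNReal.tsum_toReal_eq (ENNReal.ne_top_of_tsum_ne_top hf)]
  refine (norm_tsum_le_tsum_norm ?_).trans_eq (tsum_congr hnorm)
  simpa only [hnorm] using ENNReal.summable_toReal hf

lemma one_sub_re_mul_conj_le {z w : ℂ} (hz : ‖z‖ = 1) (hw : ‖w‖ = 1) :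
    1 - (z * conj w).re ≤ 2 * (1 - z.re) + 2 * (1 - w.re) := by
  have hz' : z.re ^ 2 + z.im ^ 2 = 1 := by rw [← Complex.sq_norm_sub_sq_re z, hz]; ring
  have hw' : w.re ^ 2 + w.im ^ 2 = 1 := by rw [← Complex.sq_norm_sub_sq_re w, hw]; ring
  rw [Complex.mul_re, Complex.conj_re, Complex.conj_im]
  nlinarith [sq_nonneg (z.re + w.re - 2), sq_nonneg (z.im + w.im)]

theorem one_sub_re_charFn_sub_le (hf : ∑' x, f x = 1) (θ η : UnitAddTorus ι) :
    1 - (charFn f (θ - η)).re ≤ 2 * (1 - (charFn f θ).re) + 2 * (1 - (charFn f η).re) := by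
  refine hasSum_le (fun x => ?_) (hasSum_one_sub_re_charFn hf (θ - η))
    (((hasSum_one_sub_re_charFn hf θ).mul_left 2).add
      ((hasSum_one_sub_re_charFn hf η).mul_left 2))
  have hx := mul_le_mul_of_nonneg_left (one_sub_re_mul_conj_le
    (norm_mFourier_apply x θ) (norm_mFourier_apply x η)) (f x).toReal_nonneg
  rw [mFourier_apply_sub]
  linarith

end Fourier

section Energy

open MeasureTheory

variable {𝕋 : Type*} [AddCommGroup 𝕋] [MeasurableSpace 𝕋] [MeasurableAdd₂ 𝕋] [MeasurableNeg 𝕋]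
  {μ : Measure 𝕋}

-- Squaring `∫ u` gives `(∫ u)² ≤ 2 (∫ κ) (∫ u)`, from which one factor `∫ u` cancels.
lemma lintegral_le_two_mul_lintegral_of_mul_le [SFinite μ] [μ.IsAddLeftInvariant]
    [μ.IsNegInvariant] {u κ : 𝕋 → ℝ≥0∞} (hu : Measurable u) (hκ : Measurable κ)
    (hle : ∀ x y, u x * u y ≤ κ (x - y) * (u x + u y)) (hfin : ∫⁻ x, u x ∂μ ≠ ∞) :
    ∫⁻ x, u x ∂μ ≤ 2 * ∫⁻ x, κ x ∂μ := by
  set I := ∫⁻ x, u x ∂μ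
  set K := ∫⁻ x, κ x ∂μ
  have hfirst : ∫⁻ x, ∫⁻ y, κ (x - y) * u x ∂μ ∂μ = K * I := by
    rw [← lintegral_const_mul _ hu]
    refine lintegral_congr fun x => ?_
    rw [lintegral_mul_const _ (by fun_prop), lintegral_sub_left_eq_self κ]
  have hsecond : ∫⁻ x, ∫⁻ y, κ (x - y) * u y ∂μ ∂μ = K * I := by
    rw [lintegral_lintegral_swap (by fun_prop), ← lintegral_const_mul _ hu]
    refine lintegral_congr fun y => ?_
    rw [lintegral_mul_const _ (by fun_prop), lintegral_sub_right_eq_self κ]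
  have hsquare : I * I ≤ 2 * K * I :=
    calc I * I = ∫⁻ x, ∫⁻ y, u x * u y ∂μ ∂μ := by
          simp_rw [lintegral_const_mul _ hu]
          exact (lintegral_mul_const _ hu).symm
      _ ≤ ∫⁻ x, ∫⁻ y, (κ (x - y) * u x + κ (x - y) * u y) ∂μ ∂μ := by
          gcongr with x y
          exact (hle x y).trans_eq (mul_add _ _ _)
      _ = K * I + K * I := by
          nth_rw 1 [← hfirst]
          rw [← hsecond, ← lintegral_add_left (by fun_prop)]
          exact lintegral_congr fun x => lintegral_add_left (by fun_prop) _
      _ = 2 * K * I := by ring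
  obtain hI | hI := eq_or_ne I 0
  · simp [hI]
  · exact (ENNReal.mul_le_mul_iff_left hI hfin).mp hsquare

lemma measure_mul_setLIntegral_le_of_translates [SFinite μ] [μ.IsAddLeftInvariant]
    [μ.IsNegInvariant] {S B : Set 𝕋} (hB : MeasurableSet B)
    {W Φ : 𝕋 → ℝ≥0∞} (hW : Measurable W) (hΦ : Measurable Φ) {m : ℝ≥0∞}
    (hone : ∀ η ∈ S, ∀ θ, η - θ ∈ B → 1 ≤ Φ θ)
    (htranslate : ∀ θ, ∫⁻ η, B.indicator 1 (η - θ) * W η ∂μ ≤ m) :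
    μ B * ∫⁻ η in S, W η ∂μ ≤ m * ∫⁻ θ, Φ θ ∂μ := by
  have : Measurable (B.indicator (1 : 𝕋 → ℝ≥0∞)) := measurable_one.indicator hB
  calc μ B * ∫⁻ η in S, W η ∂μ
      = ∫⁻ η in S, ∫⁻ θ, B.indicator 1 (η - θ) * W η ∂μ ∂μ := by
        rw [← lintegral_const_mul _ hW]
        refine lintegral_congr fun η => ?_
        rw [lintegral_mul_const _ (by fun_prop), lintegral_sub_left_eq_self (B.indicator 1) η,
          lintegral_indicator_one hB]
    _ ≤ ∫⁻ η in S, ∫⁻ θ, Φ θ * (B.indicator 1 (η - θ) * W η) ∂μ ∂μ := by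
        refine setLIntegral_mono (by fun_prop) fun η hη => lintegral_mono fun θ => ?_
        by_cases hmem : η - θ ∈ B
        · exact le_mul_of_one_le_left' (hone η hη θ hmem)
        · simp [hmem]
    _ ≤ ∫⁻ η, ∫⁻ θ, Φ θ * (B.indicator 1 (η - θ) * W η) ∂μ ∂μ := setLIntegral_le_lintegral _ _
    _ = ∫⁻ θ, Φ θ * ∫⁻ η, B.indicator 1 (η - θ) * W η ∂μ ∂μ := by
        rw [lintegral_lintegral_swap (by fun_prop)]
        exact lintegral_congr fun θ => lintegral_const_mul _ (by fun_prop)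
    _ ≤ ∫⁻ θ, Φ θ * m ∂μ := by
        gcongr with θ
        exact htranslate θ
    _ = m * ∫⁻ θ, Φ θ ∂μ := by rw [lintegral_mul_const _ hΦ, mul_comm]

lemma inv_sq_mul_inv_sq_le {P Q R : ℝ} (hP : 0 < P) (hQ : 0 < Q) (hR : 0 < R)
    (hle : 2 * R ≤ P + Q) :
    P⁻¹ ^ 2 * Q⁻¹ ^ 2 ≤ R⁻¹ ^ 2 * (P⁻¹ ^ 2 + Q⁻¹ ^ 2) := by
  wlog hPQ : P ≤ Q generalizing P Q
  · rw [mul_comm (P⁻¹ ^ 2), add_comm]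
    exact this hQ hP (by linarith) (le_of_not_ge hPQ)
  have hQR : Q⁻¹ ^ 2 ≤ R⁻¹ ^ 2 := by
    have : R ≤ Q := by linarith
    gcongr
  calc P⁻¹ ^ 2 * Q⁻¹ ^ 2 ≤ P⁻¹ ^ 2 * R⁻¹ ^ 2 := by gcongr
    _ ≤ R⁻¹ ^ 2 * (P⁻¹ ^ 2 + Q⁻¹ ^ 2) := by
      nlinarith [mul_nonneg (sq_nonneg R⁻¹) (sq_nonneg Q⁻¹)]

variable {φ : 𝕋 → ℝ} {a : ℝ}

lemma one_sub_mul_pos {s : ℝ} (ha0 : 0 ≤ a) (ha1 : a < 1) (hs : s ≤ 1) : 0 < 1 - a * s := by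
  nlinarith

lemma lintegral_translate_inv_sq_le [IsFiniteMeasure μ] [μ.IsAddLeftInvariant] [μ.IsNegInvariant]
    (hφm : Measurable φ) (hφ : ∀ θ, φ θ ≤ 1)
    (hsub : ∀ θ η, 1 - φ (θ - η) ≤ 2 * (1 - φ θ) + 2 * (1 - φ η)) {B : Set 𝕋}
    (hB : MeasurableSet B) (ha : 1 / 2 ≤ a) (ha1 : a < 1) {κ : 𝕋 → ℝ≥0∞} (hκm : Measurable κ)
    (hκ : ∀ θ ∈ B, ∀ η ∈ B,
      ENNReal.ofReal ((1 - a + (1 - φ (θ - η)) / 8)⁻¹ ^ 2) ≤ κ (θ - η)) (θ : 𝕋) :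
    ∫⁻ η, B.indicator 1 (η - θ) * ENNReal.ofReal ((1 - a * φ η)⁻¹ ^ 2) ∂μ ≤
      2 * ∫⁻ η, κ η ∂μ := by
  have : Measurable (B.indicator (1 : 𝕋 → ℝ≥0∞)) := measurable_one.indicator hB
  have hpos (η : 𝕋) : 0 < 1 - a * φ η := one_sub_mul_pos (by linarith) ha1 (hφ η)
  refine lintegral_le_two_mul_lintegral_of_mul_le (by fun_prop) hκm (fun x y => ?_) ?_
  · by_cases hx : x - θ ∈ B
    · by_cases hy : y - θ ∈ B
      · have hxy := hκ _ hx _ hy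
        rw [sub_sub_sub_cancel_right] at hxy
        simp only [Set.indicator_of_mem, hx, hy, Pi.one_apply, one_mul]
        refine le_trans ?_ (mul_le_mul_left hxy _)
        rw [← ENNReal.ofReal_add (by positivity) (by positivity),
          ← ENNReal.ofReal_mul (by positivity), ← ENNReal.ofReal_mul (by positivity)]
        refine ENNReal.ofReal_le_ofReal (inv_sq_mul_inv_sq_le (hpos x) (hpos y) ?_ ?_)
        · nlinarith [hφ (x - y)]
        · nlinarith [hφ x, hφ y, hsub x y]
      · simp [hy]
    · simp [hx]
  · have hbound (η : 𝕋) : B.indicator 1 (η - θ) * ENNReal.ofReal ((1 - a * φ η)⁻¹ ^ 2) ≤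
        ENNReal.ofReal ((1 - a)⁻¹ ^ 2) := by
      have hind : B.indicator (1 : 𝕋 → ℝ≥0∞) (η - θ) ≤ 1 :=
        Set.indicator_le_self' (fun _ _ => zero_le_one) _
      refine (mul_le_of_le_one_left' hind).trans (ENNReal.ofReal_le_ofReal ?_)
      have h1a : 0 < 1 - a := by linarith
      exact pow_le_pow_left₀ (inv_nonneg.mpr (hpos η).le)
        (inv_anti₀ h1a (by nlinarith [hφ η])) 2
    refine ne_top_of_le_ne_top ?_ (lintegral_mono hbound)
    rw [lintegral_const]
    exact ENNReal.mul_ne_top ENNReal.ofReal_ne_top (measure_ne_top _ _)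

lemma setLIntegral_compl_sq_div_le {X : Type*} [MeasurableSpace X] {μ : Measure X} {φ : X → ℝ}
    (hφm : Measurable φ) (ha0 : 0 ≤ a) (ha1 : a < 1) :
    ∫⁻ θ in {θ | 3 / 4 < φ θ}ᶜ, ENNReal.ofReal ((φ θ / (1 - a * φ θ)) ^ 2) ∂μ ≤
      ∫⁻ θ, ENNReal.ofReal (16 * φ θ ^ 2) ∂μ := by
  refine (setLIntegral_mono (by fun_prop) fun θ hθ => ?_).trans (setLIntegral_le_lintegral _ _)
  have hθ' : φ θ ≤ 3 / 4 := not_lt.mp hθ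
  have hquarter : 1 / 4 ≤ 1 - a * φ θ := by nlinarith
  have hone : 1 ≤ 16 * (1 - a * φ θ) ^ 2 := by nlinarith
  rw [div_pow]
  refine ENNReal.ofReal_le_ofReal ((div_le_iff₀ (by positivity)).mpr ?_)
  nlinarith [sq_nonneg (φ θ)]

lemma measure_mul_setLIntegral_sq_div_le [IsFiniteMeasure μ] [μ.IsAddLeftInvariant]
    [μ.IsNegInvariant] (hφm : Measurable φ) (hφ : ∀ θ, φ θ ≤ 1)
    (hsub : ∀ θ η, 1 - φ (θ - η) ≤ 2 * (1 - φ θ) + 2 * (1 - φ η)) {B : Set 𝕋}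
    (hB : MeasurableSet B) (hBφ : ∀ θ ∈ B, 1 - φ θ ≤ 1 / 8) (ha : 1 / 2 ≤ a) (ha1 : a < 1)
    {κ : 𝕋 → ℝ≥0∞} (hκm : Measurable κ)
    (hκ : ∀ θ ∈ B, ∀ η ∈ B,
      ENNReal.ofReal ((1 - a + (1 - φ (θ - η)) / 8)⁻¹ ^ 2) ≤ κ (θ - η)) :
    μ B * ∫⁻ θ in {θ | 3 / 4 < φ θ}, ENNReal.ofReal ((φ θ / (1 - a * φ θ)) ^ 2) ∂μ ≤
      (2 * ∫⁻ θ, κ θ ∂μ) * ∫⁻ θ, ENNReal.ofReal (16 * φ θ ^ 2) ∂μ := by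
  have htranslates := measure_mul_setLIntegral_le_of_translates (μ := μ) (S := {θ | 3 / 4 < φ θ})
    hB (W := fun η => ENNReal.ofReal ((1 - a * φ η)⁻¹ ^ 2)) (by fun_prop)
    (Φ := fun θ => ENNReal.ofReal (16 * φ θ ^ 2)) (by fun_prop) ?_
    (lintegral_translate_inv_sq_le hφm hφ hsub hB ha ha1 hκm hκ)
  · refine (mul_le_mul_right (setLIntegral_mono (by fun_prop) fun θ hθ => ?_) _).trans htranslates
    have hθ' : 3 / 4 < φ θ := hθ
    have hsq : φ θ ^ 2 ≤ 1 := by nlinarith [hφ θ]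
    rw [div_eq_mul_inv, mul_pow]
    exact ENNReal.ofReal_le_ofReal (mul_le_of_le_one_left (sq_nonneg _) hsq)
  · intro η hη θ hmem
    have hη' : 3 / 4 < φ η := hη
    have hdiff := hsub η (η - θ)
    rw [sub_sub_cancel] at hdiff
    rw [ENNReal.one_le_ofReal]
    nlinarith [hBφ _ hmem]

theorem measure_mul_lintegral_sq_div_le [IsFiniteMeasure μ] [μ.IsAddLeftInvariant]
    [μ.IsNegInvariant] (hφm : Measurable φ) (hφ : ∀ θ, φ θ ≤ 1)
    (hsub : ∀ θ η, 1 - φ (θ - η) ≤ 2 * (1 - φ θ) + 2 * (1 - φ η)) {B : Set 𝕋}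
    (hB : MeasurableSet B) (hBφ : ∀ θ ∈ B, 1 - φ θ ≤ 1 / 8) (ha : 1 / 2 ≤ a) (ha1 : a < 1)
    {κ : 𝕋 → ℝ≥0∞} (hκm : Measurable κ)
    (hκ : ∀ θ ∈ B, ∀ η ∈ B,
      ENNReal.ofReal ((1 - a + (1 - φ (θ - η)) / 8)⁻¹ ^ 2) ≤ κ (θ - η)) :
    μ B * ∫⁻ θ, ENNReal.ofReal ((φ θ / (1 - a * φ θ)) ^ 2) ∂μ ≤
      (16 * μ B + 32 * ∫⁻ θ, κ θ ∂μ) * ∫⁻ θ, ENNReal.ofReal (φ θ ^ 2) ∂μ := by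
  have hlow := setLIntegral_compl_sq_div_le (μ := μ) hφm (by linarith) ha1
  have hhigh := measure_mul_setLIntegral_sq_div_le (μ := μ) hφm hφ hsub hB hBφ ha ha1 hκm hκ
  calc μ B * ∫⁻ θ, ENNReal.ofReal ((φ θ / (1 - a * φ θ)) ^ 2) ∂μ
      ≤ (2 * ∫⁻ θ, κ θ ∂μ) * ∫⁻ θ, ENNReal.ofReal (16 * φ θ ^ 2) ∂μ +
          μ B * ∫⁻ θ, ENNReal.ofReal (16 * φ θ ^ 2) ∂μ := by
        rw [← lintegral_add_compl _ (measurableSet_lt measurable_const hφm), mul_add]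
        gcongr
    _ = (16 * μ B + 32 * ∫⁻ θ, κ θ ∂μ) * ∫⁻ θ, ENNReal.ofReal (φ θ ^ 2) ∂μ := by
        simp_rw [ENNReal.ofReal_mul (show (0 : ℝ) ≤ 16 by norm_num), ENNReal.ofReal_ofNat]
        rw [lintegral_const_mul _ (by fun_prop)]
        ring

end Energy

section CharFnBounds

open MeasureTheory UnitAddTorus

variable {ι : Type*} {f : (ι → ℤ) → ℝ≥0∞} {X r : ℝ}

/-- The `k`-th absolute moment `∑ₓ |xᵢ|ᵏ f(x)` of the `i`-th coordinate under the mass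
distribution `f`. -/
def coordMoment (k : ℕ) (i : ι) (f : (ι → ℤ) → ℝ≥0∞) : ℝ≥0∞ :=
  ∑' x, ((x i).natAbs : ℝ≥0∞) ^ k * f x

lemma coordMoment_two_le_four (i : ι) (f : (ι → ℤ) → ℝ≥0∞) :
    coordMoment 2 i f ≤ coordMoment 4 i f := by
  refine ENNReal.tsum_le_tsum fun x => mul_le_mul_left ?_ _
  obtain h0 | hpos := (x i).natAbs.eq_zero_or_pos
  · simp [h0]
  · exact_mod_cast Nat.pow_le_pow_right hpos (by norm_num)

lemma hasSum_toReal_coordMoment {k : ℕ} (hk : Even k) {i : ι} (hf : coordMoment k i f ≠ ∞) :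
    HasSum (fun x => (x i : ℝ) ^ k * (f x).toReal) (coordMoment k i f).toReal := by
  rw [coordMoment, ENNReal.tsum_toReal_eq (ENNReal.ne_top_of_tsum_ne_top hf)]
  refine (ENNReal.summable_toReal hf).hasSum.congr_fun fun x => ?_
  simp [Nat.cast_natAbs, hk.pow_abs]

lemma hasSum_mul_coord_of_ne (hsymm : ∀ (s : ι → ℤˣ) x, f (s • x) = f x)
    (hf : ∀ i, coordMoment 2 i f ≠ ∞) {i j : ι} (hij : i ≠ j) :
    HasSum (fun x => (x i : ℝ) * x j * (f x).toReal) 0 := by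
  classical
  have hsq (k : ι) := (hasSum_toReal_coordMoment even_two (hf k)).summable
  have hsummable : Summable fun x : ι → ℤ => (x i : ℝ) * x j * (f x).toReal := by
    refine .of_norm_bounded ((hsq i).add (hsq j)) fun x => ?_
    rw [norm_mul, norm_mul, Real.norm_of_nonneg ENNReal.toReal_nonneg, ← add_mul,
      Real.norm_eq_abs, Real.norm_eq_abs, ← sq_abs (x i : ℝ), ← sq_abs (x j : ℝ)]
    gcongr
    nlinarith [sq_nonneg (|(x i : ℝ)| - |(x j : ℝ)|), sq_nonneg |(x i : ℝ)|, sq_nonneg |(x j : ℝ)|]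
  obtain ⟨S, hS⟩ := hsummable
  have hneg : HasSum (fun x : ι → ℤ => (x i : ℝ) * x j * (f x).toReal) (-S) := by
    rw [← (MulAction.toPerm (Function.update (1 : ι → ℤˣ) i (-1))).hasSum_iff]
    refine hS.neg.congr_fun fun x => ?_
    simp [hsymm, Function.update_of_ne hij.symm, Units.smul_def]
  have hzero : S = 0 := by linarith [hS.unique hneg]
  rwa [hzero] at hS

lemma exists_coe_eq_of_abs_eq_norm (θ : UnitAddTorus ι) :
    ∃ t : ι → ℝ, (fun i => (t i : UnitAddCircle)) = θ ∧ ∀ i, |t i| = ‖θ i‖ := by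
  have hcoord (v : UnitAddCircle) : ∃ t : ℝ, (t : UnitAddCircle) = v ∧ |t| = ‖v‖ := by
    obtain ⟨s, rfl⟩ := QuotientAddGroup.mk_surjective v
    refine ⟨s - round s, ?_, UnitAddCircle.norm_eq.symm⟩
    have hround : ((round s : ℝ) : UnitAddCircle) = 0 :=
      (AddCircle.coe_eq_zero_iff 1).mpr ⟨round s, by simp⟩
    rw [AddCircle.coe_sub, hround, sub_zero]
  choose t ht hnorm using fun i => hcoord (θ i)
  exact ⟨t, funext ht, hnorm⟩

variable [Fintype ι]

theorem hasSum_sq_inner (hsymm : ∀ (s : ι → ℤˣ) x, f (s • x) = f x) (hX0 : 0 ≤ X)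
    (hX : ∀ i, coordMoment 2 i f = ENNReal.ofReal X) (t : ι → ℝ) :
    HasSum (fun x => (∑ i, x i * t i) ^ 2 * (f x).toReal) (X * ∑ i, t i ^ 2) := by
  classical
  have hfin (i : ι) : coordMoment 2 i f ≠ ∞ := by simp [hX i]
  have hexpand : HasSum (fun x : ι → ℤ => ∑ i, ∑ j, t i * t j * (x i * x j * (f x).toReal))
      (∑ i, ∑ j, t i * t j * if i = j then X else 0) := by
    refine hasSum_sum fun i _ => hasSum_sum fun j _ => .mul_left _ ?_
    split_ifs with hij
    · subst hij
      simpa [hX, hX0, sq] using hasSum_toReal_coordMoment even_two (hfin i)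
    · exact hasSum_mul_coord_of_ne hsymm hfin hij
  convert hexpand using 1
  · funext x
    rw [sq, Finset.sum_mul_sum, Finset.sum_mul]
    refine Finset.sum_congr rfl fun i _ => ?_
    rw [Finset.sum_mul]
    exact Finset.sum_congr rfl fun j _ => by ring
  · simp only [mul_ite, mul_zero, Finset.sum_ite_eq, Finset.mem_univ, if_true, Finset.mul_sum]
    exact Finset.sum_congr rfl fun i _ => by ring

lemma sum_pow_four_le (v : ι → ℝ) : (∑ i, v i) ^ 4 ≤ (Fintype.card ι : ℝ) ^ 3 * ∑ i, v i ^ 4 := by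
  calc (∑ i, v i) ^ 4 ≤ (∑ i, |v i|) ^ 4 := by
        rw [← (by decide : Even 4).pow_abs]
        gcongr
        exact Finset.abs_sum_le_sum_abs _ _
    _ ≤ (Fintype.card ι : ℝ) ^ 3 * ∑ i, |v i| ^ 4 := by
        simpa using pow_sum_le_card_mul_sum_pow (s := Finset.univ) (fun i _ => abs_nonneg (v i)) 3
    _ = (Fintype.card ι : ℝ) ^ 3 * ∑ i, v i ^ 4 := by simp only [(by decide : Even 4).pow_abs]

lemma one_sub_cos_two_pi_mul_le (s : ℝ) : 1 - Real.cos (2 * Real.pi * s) ≤ 20 * s ^ 2 := by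
  have hpi : Real.pi ^ 2 ≤ 10 := by nlinarith [Real.pi_lt_d2, Real.pi_pos]
  nlinarith [Real.one_sub_sq_div_two_le_cos (x := 2 * Real.pi * s), sq_nonneg s]

lemma le_one_sub_cos_two_pi_mul (s : ℝ) :
    8 * s ^ 2 - 32 * s ^ 4 ≤ 1 - Real.cos (2 * Real.pi * s) := by
  obtain h | h := le_or_gt |s| (1 / 2)
  · have hs : |2 * Real.pi * s| ≤ Real.pi := by
      rw [abs_mul, abs_of_pos Real.two_pi_pos]
      nlinarith [Real.pi_pos]
    have hcos := Real.cos_le_one_sub_mul_cos_sq hs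
    have hsq : 2 / Real.pi ^ 2 * (2 * Real.pi * s) ^ 2 = 8 * s ^ 2 := by
      field_simp
      ring
    rw [hsq] at hcos
    nlinarith [sq_nonneg (s ^ 2)]
  · have hsq : 1 / 4 ≤ s ^ 2 := by
      rw [← sq_abs]
      nlinarith
    nlinarith [Real.cos_le_one (2 * Real.pi * s)]

theorem one_sub_re_charFn_le (hsymm : ∀ (s : ι → ℤˣ) x, f (s • x) = f x) (hf : ∑' x, f x = 1)
    (hX0 : 0 ≤ X) (hX : ∀ i, coordMoment 2 i f = ENNReal.ofReal X) (θ : UnitAddTorus ι) :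
    1 - (charFn f θ).re ≤ 20 * (X * ∑ i, ‖θ i‖ ^ 2) := by
  obtain ⟨t, rfl, ht⟩ := exists_coe_eq_of_abs_eq_norm θ
  simp only [← ht, sq_abs]
  refine hasSum_le (fun x => ?_) (hasSum_one_sub_re_charFn hf _)
    ((hasSum_sq_inner hsymm hX0 hX t).mul_left 20)
  rw [re_mFourier_coe]
  nlinarith [one_sub_cos_two_pi_mul_le (∑ i, x i * t i), (f x).toReal_nonneg]

lemma exists_hasSum_inner_pow_four_le (hr : 0 ≤ r)
    (hf : ∀ i, coordMoment 4 i f ≤ ENNReal.ofReal (r * X ^ 2)) (t : ι → ℝ) :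
    ∃ S ≤ (Fintype.card ι : ℝ) ^ 3 * (r * X ^ 2 * (∑ i, t i ^ 2) ^ 2),
      HasSum (fun x => (∑ i, x i * t i) ^ 4 * (f x).toReal) S := by
  have hcoord (i : ι) := hasSum_toReal_coordMoment (by decide : Even 4)
    (ne_top_of_le_ne_top ENNReal.ofReal_ne_top (hf i))
  have hmajorant := (hasSum_sum fun i (_ : i ∈ Finset.univ) =>
    (hcoord i).mul_left (t i ^ 4)).mul_left ((Fintype.card ι : ℝ) ^ 3)
  have hle (x : ι → ℤ) : (∑ i, x i * t i) ^ 4 * (f x).toReal ≤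
      (Fintype.card ι : ℝ) ^ 3 * ∑ i, t i ^ 4 * ((x i : ℝ) ^ 4 * (f x).toReal) :=
    calc (∑ i, x i * t i) ^ 4 * (f x).toReal
        ≤ ((Fintype.card ι : ℝ) ^ 3 * ∑ i, (x i * t i) ^ 4) * (f x).toReal := by
          gcongr
          exact sum_pow_four_le _
      _ = _ := by
          rw [mul_assoc, Finset.sum_mul]
          congr 1
          exact Finset.sum_congr rfl fun i _ => by ring
  have hsummable := hmajorant.summable.of_nonneg_of_le (fun x => by positivity) hle
  refine ⟨_, (hasSum_le hle hsummable.hasSum hmajorant).trans ?_, hsummable.hasSum⟩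
  gcongr
  calc ∑ i, t i ^ 4 * (coordMoment 4 i f).toReal ≤ ∑ i, (t i ^ 2) ^ 2 * (r * X ^ 2) := by
        gcongr with i
        · exact (pow_mul (t i) 2 2).le
        · exact ENNReal.toReal_le_of_le_ofReal (by positivity) (hf i)
    _ = r * X ^ 2 * ∑ i, (t i ^ 2) ^ 2 := by rw [← Finset.sum_mul, mul_comm]
    _ ≤ r * X ^ 2 * (∑ i, t i ^ 2) ^ 2 := by
        gcongr
        exact Finset.sum_sq_le_sq_sum_of_nonneg fun i _ => sq_nonneg _

theorem le_one_sub_re_charFn (hsymm : ∀ (s : ι → ℤˣ) x, f (s • x) = f x) (hf : ∑' x, f x = 1)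
    (hX0 : 0 ≤ X) (hX : ∀ i, coordMoment 2 i f = ENNReal.ofReal X) (hr : 0 ≤ r)
    (hfour : ∀ i, coordMoment 4 i f ≤ ENNReal.ofReal (r * X ^ 2)) {θ : UnitAddTorus ι}
    (hθ : 8 * (Fintype.card ι : ℝ) ^ 3 * r * X * ∑ i, ‖θ i‖ ^ 2 ≤ 1) :
    4 * (X * ∑ i, ‖θ i‖ ^ 2) ≤ 1 - (charFn f θ).re := by
  obtain ⟨t, rfl, ht⟩ := exists_coe_eq_of_abs_eq_norm θ
  simp only [← ht, sq_abs] at hθ ⊢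
  obtain ⟨S, hS, hsum⟩ := exists_hasSum_inner_pow_four_le hr hfour t
  have hlower : 8 * (X * ∑ i, t i ^ 2) - 32 * S ≤
      1 - (charFn f fun i => (t i : UnitAddCircle)).re := by
    refine hasSum_le (fun x => ?_) (((hasSum_sq_inner hsymm hX0 hX t).mul_left 8).sub
      (hsum.mul_left 32)) (hasSum_one_sub_re_charFn hf _)
    rw [re_mFourier_coe]
    nlinarith [le_one_sub_cos_two_pi_mul (∑ i, x i * t i), (f x).toReal_nonneg]
  have hXT : 0 ≤ X * ∑ i, t i ^ 2 := by positivity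
  nlinarith [mul_le_mul_of_nonneg_left hθ hXT]

end CharFnBounds

section SingularKernel

open MeasureTheory UnitAddTorus

lemma lintegral_Icc_ofReal_rpow {α s : ℝ} (hα : -1 < α) (hs : 0 ≤ s) :
    ∫⁻ u in Set.Icc 0 s, ENNReal.ofReal u ^ α = ENNReal.ofReal (s ^ (α + 1) / (α + 1)) := by
  have hint : IntegrableOn (fun u : ℝ => u ^ α) (Set.Ioc 0 s) :=
    (intervalIntegrable_iff_integrableOn_Ioc_of_le hs).mp
      (intervalIntegral.intervalIntegrable_rpow' hα)
  have hnonneg : ∀ᵐ u ∂volume.restrict (Set.Ioc 0 s), 0 ≤ u ^ α :=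
    (ae_restrict_mem measurableSet_Ioc).mono fun u hu => Real.rpow_nonneg hu.1.le _
  calc ∫⁻ u in Set.Icc 0 s, ENNReal.ofReal u ^ α
      = ∫⁻ u in Set.Ioc 0 s, ENNReal.ofReal (u ^ α) := by
        rw [← restrict_Ioc_eq_restrict_Icc]
        exact setLIntegral_congr_fun measurableSet_Ioc fun u hu => ENNReal.ofReal_rpow_of_pos hu.1
    _ = ENNReal.ofReal (s ^ (α + 1) / (α + 1)) := by
        rw [← ofReal_integral_eq_lintegral_ofReal hint hnonneg,
          ← intervalIntegral.integral_of_le hs, integral_rpow (.inl hα),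
          Real.zero_rpow (by linarith), sub_zero]

lemma lintegral_closedBall_enorm_rpow_le {α s : ℝ} (hα : -1 < α) (hs : 0 ≤ s) :
    ∫⁻ v in Metric.closedBall (0 : UnitAddCircle) s, ‖v‖ₑ ^ α ≤
      ENNReal.ofReal (2 * (s ^ (α + 1) / (α + 1))) := by
  set h : ℝ → ℝ≥0∞ := (Set.Icc 0 s).indicator fun u => ENNReal.ofReal u ^ α
  have hh : Measurable h := (by fun_prop : Measurable _).indicator measurableSet_Icc
  have hle (v : ℝ) (hv : v ∈ Set.Ioc (-1 / 2 : ℝ) (-1 / 2 + 1)) :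
      (Metric.closedBall (0 : UnitAddCircle) s).indicator (‖·‖ₑ ^ α) v ≤ h v + h (-v) := by
    have hnorm : ‖(v : UnitAddCircle)‖ = |v| := by
      rw [AddCircle.norm_coe_eq_abs_iff 1 one_ne_zero, abs_le]
      constructor <;> norm_num <;> linarith [hv.1, hv.2]
    have hind : (Metric.closedBall (0 : UnitAddCircle) s).indicator (‖·‖ₑ ^ α) v = h |v| := by
      simp only [h, Set.indicator, ← ofReal_norm, mem_closedBall_zero_iff, hnorm, Set.mem_Icc,
        abs_nonneg, true_and]
    rw [hind]
    obtain habs | habs := abs_choice v <;> rw [habs]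
    · exact le_self_add
    · exact le_add_self
  calc ∫⁻ v in Metric.closedBall (0 : UnitAddCircle) s, ‖v‖ₑ ^ α
      = ∫⁻ v in Set.Ioc (-1 / 2 : ℝ) (-1 / 2 + 1),
          (Metric.closedBall (0 : UnitAddCircle) s).indicator (‖·‖ₑ ^ α) v := by
        rw [UnitAddCircle.lintegral_preimage,
          lintegral_indicator Metric.isClosed_closedBall.measurableSet]
    _ ≤ ∫⁻ v in Set.Ioc (-1 / 2 : ℝ) (-1 / 2 + 1), (h v + h (-v)) :=
        setLIntegral_mono (by fun_prop) hle
    _ ≤ ∫⁻ v, (h v + h (-v)) := setLIntegral_le_lintegral _ _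
    _ = ENNReal.ofReal (2 * (s ^ (α + 1) / (α + 1))) := by
        rw [lintegral_add_left hh, lintegral_neg_eq_self, lintegral_indicator measurableSet_Icc,
          lintegral_Icc_ofReal_rpow hα hs, ← two_mul, ENNReal.ofReal_mul zero_le_two,
          ENNReal.ofReal_ofNat]

variable {ι : Type*} [Fintype ι]

lemma lintegral_prod_coord {Y : Type*} [MeasureSpace Y]
    [IsProbabilityMeasure (volume : Measure Y)] {g : Y → ℝ≥0∞} (hg : Measurable g) :
    ∫⁻ θ : ι → Y, ∏ i, g (θ i) = (∫⁻ v, g v) ^ Fintype.card ι := by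
  have hindep := ProbabilityTheory.iIndepFun_pi (μ := fun _ : ι => (volume : Measure Y))
    (X := fun _ => g) (fun _ => hg.aemeasurable)
  rw [volume_pi, ProbabilityTheory.lintegral_prod_eq_prod_lintegral_of_indepFun Finset.univ _
    hindep fun i => hg.comp (measurable_pi_apply i)]
  have hcoord (i : ι) := (measurePreserving_eval
    (fun _ : ι => (volume : Measure Y)) i).lintegral_comp hg
  simp only [Function.eval] at hcoord
  simp [hcoord]

lemma inv_add_sq_le {ε y : ℝ} (hε : 0 < ε) (hy : 0 ≤ y) :
    ENNReal.ofReal ((ε + y)⁻¹ ^ 2) ≤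
      ENNReal.ofReal (ε ^ (-3 / 4 : ℝ)) * ENNReal.ofReal y ^ (-5 / 4 : ℝ) := by
  obtain rfl | hy := hy.eq_or_lt
  · have hε' : ENNReal.ofReal (ε ^ (-3 / 4 : ℝ)) ≠ 0 :=
      (ENNReal.ofReal_pos.mpr (by positivity)).ne'
    rw [ENNReal.ofReal_zero, ENNReal.zero_rpow_of_neg (by norm_num), ENNReal.mul_top hε']
    exact le_top
  rw [ENNReal.ofReal_rpow_of_pos hy, ← ENNReal.ofReal_mul (by positivity)]
  refine ENNReal.ofReal_le_ofReal ?_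
  have hyoung : ε ^ (3 / 8 : ℝ) * y ^ (5 / 8 : ℝ) ≤ ε + y := by
    linarith [Real.geom_mean_le_arith_mean2_weighted (w₁ := 3 / 8) (w₂ := 5 / 8) (by norm_num)
      (by norm_num) hε.le hy.le (by norm_num)]
  calc (ε + y)⁻¹ ^ 2 ≤ (ε ^ (3 / 8 : ℝ) * y ^ (5 / 8 : ℝ))⁻¹ ^ 2 := by gcongr
    _ = ε ^ (-3 / 4 : ℝ) * y ^ (-5 / 4 : ℝ) := by
      rw [mul_inv, mul_pow, ← Real.rpow_neg hε.le, ← Real.rpow_neg hy.le, ← Real.rpow_mul_natCast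
        hε.le, ← Real.rpow_mul_natCast hy.le]
      norm_num

lemma rpow_neg_sum_sq_le_prod (v : ι → ℝ≥0∞) {p α : ℝ} (hp : 0 < p)
    (hα : α * Fintype.card ι = 2 * p) : (∑ i, v i ^ 2) ^ (-p) ≤ ∏ i, v i ^ (-α) := by
  set T := ∑ i, v i ^ 2
  have hα0 : 0 ≤ α := by
    by_contra! hneg
    nlinarith [(Fintype.card ι).cast_nonneg (α := ℝ)]
  calc T ^ (-p) = ∏ _i : ι, T ^ (-(α / 2)) := by
        rw [Finset.prod_const, Finset.card_univ, ← ENNReal.rpow_mul_natCast]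
        congr 1
        linarith
    _ ≤ ∏ i, v i ^ (-α) := by
        refine Finset.prod_le_prod' fun i _ => ?_
        have hi : v i ^ 2 ≤ T := Finset.single_le_sum (f := fun i => v i ^ 2)
          (fun _ _ => zero_le) (Finset.mem_univ i)
        rw [ENNReal.rpow_neg, ENNReal.rpow_neg, ENNReal.inv_le_inv]
        calc v i ^ α = (v i ^ 2) ^ (α / 2) := by
              rw [← ENNReal.rpow_two, ← ENNReal.rpow_mul, mul_div_cancel₀ α two_ne_zero]
          _ ≤ T ^ (α / 2) := by gcongr

/-- The power singularity `∏ᵢ ‖θᵢ‖^{-α}` of the torus, cut off outside the box of radius `s`. -/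
def boxSingularity (α s : ℝ) (θ : UnitAddTorus ι) : ℝ≥0∞ :=
  ∏ i, (Metric.closedBall (0 : UnitAddCircle) s).indicator (‖·‖ₑ ^ (-α)) (θ i)

lemma measurable_indicator_closedBall_rpow (α s : ℝ) :
    Measurable ((Metric.closedBall (0 : UnitAddCircle) s).indicator (‖·‖ₑ ^ (-α))) :=
  (by fun_prop : Measurable _).indicator Metric.isClosed_closedBall.measurableSet

lemma measurable_boxSingularity (α s : ℝ) :
    Measurable (boxSingularity α s : UnitAddTorus ι → ℝ≥0∞) :=
  Finset.measurable_prod _ fun i _ =>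
    (measurable_indicator_closedBall_rpow α s).comp (measurable_pi_apply i)

lemma lintegral_boxSingularity_le {α s : ℝ} (hα : α < 1) (hs : 0 ≤ s) :
    ∫⁻ θ : UnitAddTorus ι, boxSingularity α s θ ≤
      ENNReal.ofReal (2 * (s ^ (1 - α) / (1 - α))) ^ Fintype.card ι := by
  have : IsProbabilityMeasure (volume : Measure UnitAddCircle) := ⟨UnitAddCircle.measure_univ⟩
  simp only [boxSingularity]
  rw [lintegral_prod_coord (measurable_indicator_closedBall_rpow α s),
    lintegral_indicator Metric.isClosed_closedBall.measurableSet]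
  gcongr
  simpa only [neg_add_eq_sub] using lintegral_closedBall_enorm_rpow_le (neg_lt_neg hα) hs

lemma boxSingularity_eq_prod {α s : ℝ} {θ : UnitAddTorus ι} (hθ : ∀ i, ‖θ i‖ ≤ s) :
    boxSingularity α s θ = ∏ i, ‖θ i‖ₑ ^ (-α) :=
  Finset.prod_congr rfl fun i _ => Set.indicator_of_mem (by simpa using hθ i) _

end SingularKernel

section GreenFunction

open MeasureTheory UnitAddTorus

variable {ι : Type*} {p : (ι → ℤ) → ℝ≥0∞} {X r : ℝ}

/-- `p` is the step distribution of a walk on `ℤ^ι` which is invariant under sign changes of the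
coordinates, has variance `X > 0` in every coordinate, and kurtosis at most `r`. -/
structure IsIsotropicStep (p : (ι → ℤ) → ℝ≥0∞) (X r : ℝ) : Prop where
  smul_eq : ∀ (s : ι → ℤˣ) x, p (s • x) = p x
  tsum_eq_one : ∑' x, p x = 1
  pos : 0 < X
  coordMoment_two : ∀ i, coordMoment 2 i p = ENNReal.ofReal X
  coordMoment_four_le : ∀ i, coordMoment 4 i p ≤ ENNReal.ofReal (r * X ^ 2)

lemma IsIsotropicStep.tsum_ne_top (hp : IsIsotropicStep p X r) : ∑' x, p x ≠ ∞ := by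
  simp [hp.tsum_eq_one]

lemma IsIsotropicStep.one_le_mul [Nonempty ι] (hp : IsIsotropicStep p X r) : 1 ≤ r * X := by
  obtain ⟨i⟩ := ‹Nonempty ι›
  have h := (coordMoment_two_le_four i p).trans (hp.coordMoment_four_le i)
  rw [hp.coordMoment_two i, ENNReal.ofReal_le_ofReal_iff'] at h
  have hX := hp.pos
  nlinarith [h.resolve_right hX.not_ge]

variable [Fintype ι]

lemma IsIsotropicStep.re_charFn_le_one (hp : IsIsotropicStep p X r) (θ : UnitAddTorus ι) :
    (charFn p θ).re ≤ 1 := by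
  simpa [hp.tsum_eq_one] using
    (Complex.re_le_norm _).trans (norm_charFn_le hp.tsum_ne_top θ)

lemma IsIsotropicStep.exists_scale [Nonempty ι] (hp : IsIsotropicStep p X r) (hr : 1 ≤ r) :
    ∃ s : ℝ, 0 < s ∧ s ≤ 1 ∧ 8 * (Fintype.card ι : ℝ) ^ 4 * r * X * s ^ 2 = 1 := by
  have hX := hp.pos
  have hcard : (1 : ℝ) ≤ Fintype.card ι := by exact_mod_cast Fintype.card_pos
  have hge : 1 ≤ 8 * (Fintype.card ι : ℝ) ^ 4 * r * X := by
    nlinarith [one_le_pow₀ hcard (n := 4), hp.one_le_mul]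
  refine ⟨(√(8 * (Fintype.card ι : ℝ) ^ 4 * r * X))⁻¹, by positivity,
    inv_le_one_of_one_le₀ (Real.one_le_sqrt.mpr hge), ?_⟩
  rw [inv_pow, Real.sq_sqrt (by positivity), mul_inv_cancel₀ (by positivity)]

/-- The constant in the bounds on the Green function of a walk with kurtosis `r` on `ℤ^d`. -/
def greenConst (d : ℕ) (r : ℝ) : ℝ := 12 ^ d * (16 * (d : ℝ) ^ 4 * r) ^ (5 / 4 : ℝ)

lemma one_le_greenConst {d : ℕ} (hd : 0 < d) (hr : 1 ≤ r) : 1 ≤ greenConst d r := by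
  have hd' : (1 : ℝ) ≤ d := Nat.one_le_cast.mpr hd
  have hbase : 1 ≤ 16 * (d : ℝ) ^ 4 * r := by nlinarith [one_le_pow₀ hd' (n := 4)]
  exact one_le_mul_of_one_le_of_one_le (one_le_pow₀ (by norm_num))
    (Real.one_le_rpow hbase (by norm_num))

lemma volume_pi_closedBall {ρ : ℝ} (hρ0 : 0 ≤ ρ) (hρ : 2 * ρ ≤ 1) :
    volume (Set.univ.pi fun _ : ι => Metric.closedBall (0 : UnitAddCircle) ρ) =
      ENNReal.ofReal ((2 * ρ) ^ Fintype.card ι) := by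
  simp [volume_pi_pi, AddCircle.volume_closedBall, min_eq_right hρ,
    ENNReal.ofReal_pow (mul_nonneg zero_le_two hρ0)]

lemma sum_sq_norm_le {θ : UnitAddTorus ι} {s : ℝ} (hθ : ∀ i, ‖θ i‖ ≤ s) :
    ∑ i, ‖θ i‖ ^ 2 ≤ Fintype.card ι * s ^ 2 := by
  calc ∑ i, ‖θ i‖ ^ 2 ≤ ∑ _i : ι, s ^ 2 := by
        gcongr with i
        exact hθ i
    _ = Fintype.card ι * s ^ 2 := by simp

lemma IsIsotropicStep.inv_sq_le_boxSingularity (hp : IsIsotropicStep p X r) (hr : 0 ≤ r)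
    {ε s α : ℝ} (hε : 0 < ε) (hα : α * Fintype.card ι = 5 / 2)
    (hs : 8 * (Fintype.card ι : ℝ) ^ 4 * r * X * s ^ 2 ≤ 1) {θ : UnitAddTorus ι}
    (hθ : ∀ i, ‖θ i‖ ≤ s) :
    ENNReal.ofReal ((ε + (1 - (charFn p θ).re) / 8)⁻¹ ^ 2) ≤
      ENNReal.ofReal (ε ^ (-3 / 4 : ℝ) * (X / 2) ^ (-5 / 4 : ℝ)) * boxSingularity α s θ := by
  have hX := hp.pos
  have hsmall : 8 * (Fintype.card ι : ℝ) ^ 3 * r * X * ∑ i, ‖θ i‖ ^ 2 ≤ 1 :=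
    calc 8 * (Fintype.card ι : ℝ) ^ 3 * r * X * ∑ i, ‖θ i‖ ^ 2
        ≤ 8 * (Fintype.card ι : ℝ) ^ 3 * r * X * (Fintype.card ι * s ^ 2) := by
          gcongr
          exact sum_sq_norm_le hθ
      _ ≤ 1 := by linarith
  have hquad := le_one_sub_re_charFn hp.smul_eq hp.tsum_eq_one hX.le hp.coordMoment_two hr
    hp.coordMoment_four_le hsmall
  calc ENNReal.ofReal ((ε + (1 - (charFn p θ).re) / 8)⁻¹ ^ 2)
      ≤ ENNReal.ofReal ((ε + X / 2 * ∑ i, ‖θ i‖ ^ 2)⁻¹ ^ 2) := by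
        have hle : ε + X / 2 * ∑ i, ‖θ i‖ ^ 2 ≤ ε + (1 - (charFn p θ).re) / 8 := by linarith
        have hpos : 0 < ε + X / 2 * ∑ i, ‖θ i‖ ^ 2 := by positivity
        have hpos' := hpos.trans_le hle
        gcongr
    _ ≤ ENNReal.ofReal (ε ^ (-3 / 4 : ℝ)) *
          ENNReal.ofReal (X / 2 * ∑ i, ‖θ i‖ ^ 2) ^ (-5 / 4 : ℝ) :=
        inv_add_sq_le hε (by positivity)
    _ = ENNReal.ofReal (ε ^ (-3 / 4 : ℝ) * (X / 2) ^ (-5 / 4 : ℝ)) *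
          (∑ i, ‖θ i‖ₑ ^ 2) ^ (-(5 / 4) : ℝ) := by
        have hsum : ENNReal.ofReal (∑ i, ‖θ i‖ ^ 2) = ∑ i, ‖θ i‖ₑ ^ 2 := by
          rw [ENNReal.ofReal_sum_of_nonneg fun i _ => sq_nonneg _]
          simp [ENNReal.ofReal_pow]
        rw [ENNReal.ofReal_mul (by positivity), hsum, ENNReal.ofReal_mul (by positivity),
          ENNReal.mul_rpow_of_ne_top ENNReal.ofReal_ne_top (by simp [← hsum]),
          ENNReal.ofReal_rpow_of_pos (by positivity), mul_assoc, neg_div 4 (5 : ℝ)]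
    _ ≤ _ := by
        rw [boxSingularity_eq_prod hθ]
        gcongr
        exact rpow_neg_sum_sq_le_prod _ (by norm_num) (by linarith)

lemma lintegral_boxSingularity_le_of_two_lt_card (hι : 2 < Fintype.card ι) {s α : ℝ} (hs : 0 < s)
    (hα : α * Fintype.card ι = 5 / 2) :
    ∫⁻ θ : UnitAddTorus ι, boxSingularity α s θ ≤
      ENNReal.ofReal (s ^ Fintype.card ι * (12 ^ Fintype.card ι * (s ^ 2) ^ (-5 / 4 : ℝ))) := by
  have hcard : (3 : ℝ) ≤ Fintype.card ι := by exact_mod_cast hι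
  have hα1 : α ≤ 5 / 6 := by nlinarith
  have hpow : (s ^ (1 - α)) ^ Fintype.card ι = s ^ Fintype.card ι * (s ^ 2) ^ (-5 / 4 : ℝ) := by
    rw [← Real.rpow_mul_natCast hs.le, ← Real.rpow_natCast s (Fintype.card ι),
      ← Real.rpow_natCast_mul hs.le, ← Real.rpow_add hs]
    congr 1
    push_cast
    linarith
  have hs' : s ^ (1 - α) / (1 - α) ≤ 6 * s ^ (1 - α) := by
    rw [div_le_iff₀ (by linarith)]
    nlinarith [Real.rpow_nonneg hs.le (1 - α)]
  refine (lintegral_boxSingularity_le (by linarith) hs.le).trans ?_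
  have h1α : 0 < 1 - α := by linarith
  rw [← ENNReal.ofReal_pow (by positivity)]
  refine ENNReal.ofReal_le_ofReal ?_
  calc (2 * (s ^ (1 - α) / (1 - α))) ^ Fintype.card ι
      ≤ (2 * (6 * s ^ (1 - α))) ^ Fintype.card ι := by gcongr
    _ = _ := by rw [← mul_assoc, mul_pow, hpow]; ring

lemma IsIsotropicStep.one_sub_re_charFn_le_inv_eight (hp : IsIsotropicStep p X r)
    (hι : 2 < Fintype.card ι) (hr : 1 ≤ r) {s : ℝ}
    (hs : 8 * (Fintype.card ι : ℝ) ^ 4 * r * X * s ^ 2 ≤ 1) {θ : UnitAddTorus ι}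
    (hθ : ∀ i, ‖θ i‖ ≤ s / 2) :
    1 - (charFn p θ).re ≤ 1 / 8 := by
  have hX := hp.pos
  have hcard : (3 : ℝ) ≤ Fintype.card ι := by exact_mod_cast hι
  calc 1 - (charFn p θ).re
      ≤ 20 * (X * ∑ i, ‖θ i‖ ^ 2) :=
        one_sub_re_charFn_le hp.smul_eq hp.tsum_eq_one hX.le hp.coordMoment_two θ
    _ ≤ 20 * (X * (Fintype.card ι * (s / 2) ^ 2)) := by
        gcongr
        exact sum_sq_norm_le hθ
    _ = 1 / 8 * (8 * (Fintype.card ι * (5 * 1)) * X * s ^ 2) := by ring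
    _ ≤ 1 / 8 * (8 * (Fintype.card ι * (Fintype.card ι ^ 3 * r)) * X * s ^ 2) := by
        gcongr
        nlinarith [pow_le_pow_left₀ (by norm_num) hcard 3]
    _ = 1 / 8 * (8 * (Fintype.card ι : ℝ) ^ 4 * r * X * s ^ 2) := by ring
    _ ≤ 1 / 8 := by linarith

lemma rpow_mul_lintegral_boxSingularity_le (hι : 2 < Fintype.card ι) (hX : 0 < X) (hr : 0 < r)
    {ε s α : ℝ} (hε : 0 < ε) (hs : 0 < s) (hα : α * Fintype.card ι = 5 / 2)
    (hsX : 8 * (Fintype.card ι : ℝ) ^ 4 * r * X * s ^ 2 = 1) :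
    ENNReal.ofReal (ε ^ (-3 / 4 : ℝ) * (X / 2) ^ (-5 / 4 : ℝ)) *
        ∫⁻ θ : UnitAddTorus ι, boxSingularity α s θ ≤
      ENNReal.ofReal (s ^ Fintype.card ι) *
        ENNReal.ofReal (greenConst (Fintype.card ι) r * ε ^ (-3 / 4 : ℝ)) := by
  have : (0 : ℝ) < Fintype.card ι := by exact_mod_cast zero_lt_two.trans hι
  have hscale : (X / 2) ^ (-5 / 4 : ℝ) * (s ^ 2) ^ (-5 / 4 : ℝ) =
      (16 * (Fintype.card ι : ℝ) ^ 4 * r) ^ (5 / 4 : ℝ) := by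
    have hinv : X / 2 * s ^ 2 = (16 * (Fintype.card ι : ℝ) ^ 4 * r)⁻¹ := by
      refine eq_inv_of_mul_eq_one_left ?_
      linarith
    rw [← Real.mul_rpow (by positivity) (by positivity), hinv, Real.inv_rpow (by positivity),
      ← Real.rpow_neg (by positivity), neg_div, neg_neg]
  refine (mul_le_mul_right (lintegral_boxSingularity_le_of_two_lt_card hι hs hα) _).trans_eq ?_
  rw [← ENNReal.ofReal_mul (by positivity), ← ENNReal.ofReal_mul (by positivity), greenConst,
    ← hscale]
  congr 1
  ring

theorem IsIsotropicStep.lintegral_sq_div_one_sub_le (hp : IsIsotropicStep p X r)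
    (hι : 2 < Fintype.card ι) (hr : 1 ≤ r) {a : ℝ} (ha : 1 / 2 ≤ a) (ha1 : a < 1) :
    ∫⁻ θ, ENNReal.ofReal (((charFn p θ).re / (1 - a * (charFn p θ).re)) ^ 2) ≤
      (16 + 32 * ENNReal.ofReal (greenConst (Fintype.card ι) r * (1 - a) ^ (-3 / 4 : ℝ))) *
        ∫⁻ θ, ENNReal.ofReal ((charFn p θ).re ^ 2) := by
  have hcard : (0 : ℝ) < Fintype.card ι := by exact_mod_cast zero_lt_two.trans hι
  have : Nonempty ι := Fintype.card_pos_iff.mp (zero_lt_two.trans hι)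
  obtain ⟨s, hs, hs1, hsX⟩ := hp.exists_scale hr
  have hα : 5 / 2 / Fintype.card ι * (Fintype.card ι : ℝ) = 5 / 2 := div_mul_cancel₀ _ hcard.ne'
  set B : Set (UnitAddTorus ι) := Set.univ.pi fun _ => Metric.closedBall 0 (s / 2)
  have hmem {θ : UnitAddTorus ι} (hθ : θ ∈ B) (i : ι) : ‖θ i‖ ≤ s / 2 := by
    simpa using hθ i (Set.mem_univ i)
  have hB : volume B = ENNReal.ofReal (s ^ Fintype.card ι) := by
    rw [volume_pi_closedBall (by positivity) (by linarith), mul_div_cancel₀ _ two_ne_zero]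
  have henergy := measure_mul_lintegral_sq_div_le (μ := volume) (B := B) (by fun_prop)
    hp.re_charFn_le_one (one_sub_re_charFn_sub_le hp.tsum_eq_one)
    (MeasurableSet.univ_pi fun _ => Metric.isClosed_closedBall.measurableSet)
    (fun θ hθ => hp.one_sub_re_charFn_le_inv_eight hι hr hsX.le (hmem hθ)) ha ha1
    ((measurable_boxSingularity _ s).const_mul _)
    (fun θ hθ η hη => hp.inv_sq_le_boxSingularity (by linarith) (by linarith) hα hsX.le fun i =>
      (norm_sub_le _ _).trans (by linarith [hmem hθ i, hmem hη i]))
  rw [lintegral_const_mul _ (measurable_boxSingularity _ s), hB] at henergy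
  have hs0 : ENNReal.ofReal (s ^ Fintype.card ι) ≠ 0 :=
    (ENNReal.ofReal_pos.mpr (by positivity)).ne'
  refine (ENNReal.mul_le_mul_iff_right hs0 ENNReal.ofReal_ne_top).mp (henergy.trans ?_)
  have hκ := rpow_mul_lintegral_boxSingularity_le hι hp.pos (zero_lt_one.trans_le hr)
    (sub_pos.mpr ha1) hs hα hsX
  grw [hκ]
  exact (by ring : _ = _).le

end GreenFunction

section SquareSum

open MeasureTheory UnitAddTorus

variable {ι : Type*} {p f g : (ι → ℤ) → ℝ≥0∞} {X r a : ℝ}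

lemma neg_eq_of_smul_eq (hf : ∀ (s : ι → ℤˣ) x, f (s • x) = f x) (x : ι → ℤ) : f (-x) = f x := by
  rw [← hf (-1) x]
  congr 1
  ext
  simp [Units.smul_def]

lemma IsIsotropicStep.tsum_resolvent_ne_top (hp : IsIsotropicStep p X r) (ha1 : a < 1) :
    ∑' x, resolvent (ENNReal.ofReal a) p x ≠ ∞ := by
  rw [tsum_resolvent, hp.tsum_eq_one]
  simpa [tsub_eq_zero_iff_le] using ha1

/-- The mass distribution `f` on `ℤ^ι` is finite, non-degenerate and invariant under sign changes
of the coordinates, its coordinates have the same variance, and its kurtosis is at most `r`. -/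
structure IsIsotropicMass (f : (ι → ℤ) → ℝ≥0∞) (r : ℝ) : Prop where
  smul_eq : ∀ (s : ι → ℤˣ) x, f (s • x) = f x
  tsum_ne_top : ∑' x, f x ≠ ∞
  coordMoment_two_eq : ∀ i j, coordMoment 2 i f = coordMoment 2 j f
  coordMoment_two_ne_zero : ∀ i, coordMoment 2 i f ≠ 0
  coordMoment_four_ne_top : ∀ i, coordMoment 4 i f ≠ ∞
  kurtosis_le : ∀ i, coordMoment 4 i f * ∑' x, f x ≤ ENNReal.ofReal r * coordMoment 2 i f ^ 2

lemma coordMoment_smul (k : ℕ) (i : ι) (c : ℝ≥0∞) (f : (ι → ℤ) → ℝ≥0∞) :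
    coordMoment k i (c • f) = c * coordMoment k i f := by
  simp [coordMoment, mul_left_comm, ENNReal.tsum_mul_left]

lemma IsIsotropicMass.tsum_ne_zero [Nonempty ι] (hf : IsIsotropicMass f r) : ∑' x, f x ≠ 0 := by
  obtain ⟨i⟩ := ‹Nonempty ι›
  intro h
  rw [ENNReal.tsum_eq_zero] at h
  exact hf.coordMoment_two_ne_zero i (by simp [coordMoment, h])

lemma IsIsotropicMass.coordMoment_two_ne_top (hf : IsIsotropicMass f r) (i : ι) :
    coordMoment 2 i f ≠ ∞ :=
  ((coordMoment_two_le_four i f).trans_lt (hf.coordMoment_four_ne_top i).lt_top).ne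

theorem IsIsotropicMass.exists_isIsotropicStep [Nonempty ι] (hf : IsIsotropicMass f r)
    (hr : 0 ≤ r) : ∃ X, IsIsotropicStep ((∑' x, f x)⁻¹ • f) X r := by
  have hm0 := hf.tsum_ne_zero
  have hm := hf.tsum_ne_top
  obtain ⟨i⟩ := ‹Nonempty ι›
  set m := ∑' x, f x
  have hX0 : m⁻¹ * coordMoment 2 i f ≠ 0 :=
    mul_ne_zero (ENNReal.inv_ne_zero.mpr hm) (hf.coordMoment_two_ne_zero i)
  have hX : m⁻¹ * coordMoment 2 i f ≠ ∞ :=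
    ENNReal.mul_ne_top (ENNReal.inv_ne_top.mpr hm0) (hf.coordMoment_two_ne_top i)
  refine ⟨(m⁻¹ * coordMoment 2 i f).toReal, fun s x => ?_, ?_, ENNReal.toReal_pos hX0 hX,
    fun j => ?_, fun j => ?_⟩
  · simp [hf.smul_eq]
  · simp [ENNReal.tsum_mul_left, m, ENNReal.inv_mul_cancel hm0 hm]
  · rw [coordMoment_smul, ENNReal.ofReal_toReal hX, hf.coordMoment_two_eq j i]
  · rw [coordMoment_smul, ENNReal.ofReal_mul hr, ENNReal.ofReal_pow ENNReal.toReal_nonneg,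
      ENNReal.ofReal_toReal hX, hf.coordMoment_two_eq i j]
    calc m⁻¹ * coordMoment 4 j f = m⁻¹ ^ 2 * (coordMoment 4 j f * m) := by
          rw [sq, mul_comm _ m, mul_assoc, ← mul_assoc m⁻¹ m, ENNReal.inv_mul_cancel hm0 hm,
            one_mul]
      _ ≤ m⁻¹ ^ 2 * (ENNReal.ofReal r * coordMoment 2 j f ^ 2) :=
          mul_le_mul_right (hf.kurtosis_le j) _
      _ = ENNReal.ofReal r * (m⁻¹ * coordMoment 2 j f) ^ 2 := by ring

variable [Fintype ι]

lemma IsIsotropicStep.ofReal_re_charFn (hp : IsIsotropicStep p X r) (θ : UnitAddTorus ι) :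
    ((charFn p θ).re : ℂ) = charFn p θ :=
  Complex.ext rfl (by simp [im_charFn_of_even hp.tsum_ne_top (neg_eq_of_smul_eq hp.smul_eq)])

lemma IsIsotropicStep.charFn_resolvent_apply (hp : IsIsotropicStep p X r) (ha0 : 0 ≤ a)
    (ha1 : a < 1) (θ : UnitAddTorus ι) :
    charFn (resolvent (ENNReal.ofReal a) p) θ =
      ((charFn p θ).re / (1 - a * (charFn p θ).re) : ℝ) := by
  have hV := hp.tsum_resolvent_ne_top ha1
  have hpole := one_sub_mul_pos ha0 ha1 (hp.re_charFn_le_one θ)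
  have heq := congrArg (charFn · θ) (resolvent_eq (ENNReal.ofReal a) p)
  have hconv : ∑' x, conv p (resolvent (ENNReal.ofReal a) p) x ≠ ∞ := by
    rw [tsum_conv]
    exact ENNReal.mul_ne_top hp.tsum_ne_top hV
  have hsmul : ∑' x, (ENNReal.ofReal a • conv p (resolvent (ENNReal.ofReal a) p)) x ≠ ∞ := by
    simpa [ENNReal.tsum_mul_left] using ENNReal.mul_ne_top ENNReal.ofReal_ne_top hconv
  rw [charFn_add_apply hp.tsum_ne_top hsmul, charFn_smul_apply ENNReal.ofReal_ne_top hconv,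
    charFn_conv_apply hp.tsum_ne_top hV, ENNReal.toReal_ofReal ha0] at heq
  rw [Complex.ofReal_div, eq_div_iff (by exact_mod_cast hpole.ne')]
  push_cast
  rw [hp.ofReal_re_charFn]
  linear_combination heq

lemma one_le_greenConst_mul_rpow [Nonempty ι] (hr : 1 ≤ r) (ha0 : 0 ≤ a) (ha1 : a < 1) :
    1 ≤ ENNReal.ofReal (greenConst (Fintype.card ι) r * (1 - a) ^ (-3 / 4 : ℝ)) := by
  rw [← ENNReal.ofReal_one]
  refine ENNReal.ofReal_le_ofReal (one_le_mul_of_one_le_of_one_le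
    (one_le_greenConst Fintype.card_pos hr) ?_)
  exact Real.one_le_rpow_of_pos_of_le_one_of_nonpos (by linarith) (by linarith) (by norm_num)

lemma div_one_sub_mul_sq_le {s : ℝ} (ha0 : 0 ≤ a) (ha : a ≤ 1 / 2) (hs : s ≤ 1) :
    (s / (1 - a * s)) ^ 2 ≤ 4 * s ^ 2 := by
  have hden : 1 / 2 ≤ 1 - a * s := by nlinarith
  rw [div_pow, div_le_iff₀ (by positivity)]
  nlinarith [sq_nonneg s, mul_self_le_mul_self (by norm_num) hden]

lemma enorm_ofReal_sq (s : ℝ) : ‖(s : ℂ)‖ₑ ^ 2 = ENNReal.ofReal (s ^ 2) := by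
  rw [← ofReal_norm, Complex.norm_real, Real.norm_eq_abs, ← ENNReal.ofReal_pow (abs_nonneg s),
    sq_abs]

theorem IsIsotropicStep.tsum_resolvent_sq_le (hp : IsIsotropicStep p X r)
    (hι : 2 < Fintype.card ι) (hr : 1 ≤ r) (ha0 : 0 ≤ a) (ha1 : a < 1) :
    ∑' x, resolvent (ENNReal.ofReal a) p x ^ 2 ≤
      48 * ENNReal.ofReal (greenConst (Fintype.card ι) r * (1 - a) ^ (-3 / 4 : ℝ)) *
        ∑' x, p x ^ 2 := by
  have : Nonempty ι := Fintype.card_pos_iff.mp (zero_lt_two.trans hι)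
  have hφ (θ : UnitAddTorus ι) : ‖charFn p θ‖ₑ ^ 2 = ENNReal.ofReal ((charFn p θ).re ^ 2) := by
    rw [← enorm_ofReal_sq, hp.ofReal_re_charFn]
  rw [← lintegral_sq_norm_charFn (hp.tsum_resolvent_ne_top ha1),
    ← lintegral_sq_norm_charFn hp.tsum_ne_top]
  simp only [hp.charFn_resolvent_apply ha0 ha1, enorm_ofReal_sq, hφ]
  set K := ENNReal.ofReal (greenConst (Fintype.card ι) r * (1 - a) ^ (-3 / 4 : ℝ))
  have hK : 1 ≤ K := one_le_greenConst_mul_rpow hr ha0 ha1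
  obtain ha | ha := le_total a (1 / 2)
  · calc ∫⁻ θ, ENNReal.ofReal (((charFn p θ).re / (1 - a * (charFn p θ).re)) ^ 2)
        ≤ ∫⁻ θ, 4 * ENNReal.ofReal ((charFn p θ).re ^ 2) := by
          refine lintegral_mono fun θ => ?_
          rw [← ENNReal.ofReal_ofNat, ← ENNReal.ofReal_mul (by norm_num)]
          exact ENNReal.ofReal_le_ofReal (div_one_sub_mul_sq_le ha0 ha (hp.re_charFn_le_one θ))
      _ = 4 * 1 * ∫⁻ θ, ENNReal.ofReal ((charFn p θ).re ^ 2) := by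
          rw [lintegral_const_mul _ (by fun_prop), mul_one]
      _ ≤ _ := by
          gcongr
          norm_num
  · refine (hp.lintegral_sq_div_one_sub_le hι hr ha ha1).trans ?_
    gcongr
    calc 16 + 32 * K ≤ 16 * K + 32 * K := by
          gcongr
          exact le_mul_of_one_le_right' hK
      _ = 48 * K := by ring

theorem IsIsotropicMass.tsum_sq_le (hf : IsIsotropicMass f r) (hι : 2 < Fintype.card ι)
    (hr : 1 ≤ r) (ha0 : 0 ≤ a) (ha1 : a < 1) {c : ℝ≥0∞} (hc : c * ∑' x, f x = ENNReal.ofReal a)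
    (hg : ∑' x, g x ≠ ∞) (hle : g ≤ f + c • conv f g) :
    ∑' x, g x ^ 2 ≤
      48 * ENNReal.ofReal (greenConst (Fintype.card ι) r * (1 - a) ^ (-3 / 4 : ℝ)) *
        ∑' x, f x ^ 2 := by
  have : Nonempty ι := Fintype.card_pos_iff.mp (zero_lt_two.trans hι)
  obtain ⟨X, hp⟩ := hf.exists_isIsotropicStep (by linarith)
  have hm0 := hf.tsum_ne_zero
  have hm := hf.tsum_ne_top
  set m := ∑' x, f x
  have : m * m⁻¹ = 1 := ENNReal.mul_inv_cancel hm0 hm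
  have hscale : m⁻¹ • g ≤ resolvent (ENNReal.ofReal a) (m⁻¹ • f) := by
    refine le_resolvent ?_ ?_ ?_
    · rw [hp.tsum_eq_one]
      simpa using ha1
    · simpa [ENNReal.tsum_mul_left] using ENNReal.mul_ne_top (ENNReal.inv_ne_top.mpr hm0) hg
    · rw [← hc]
      exact inv_smul_le_add_conv hm0 hm hle
  have hbound := (ENNReal.tsum_le_tsum fun x => pow_le_pow_left' (hscale x) 2).trans
    (hp.tsum_resolvent_sq_le hι hr ha0 ha1)
  simp only [Pi.smul_apply, smul_eq_mul, mul_pow, ENNReal.tsum_mul_left] at hbound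
  rw [mul_left_comm] at hbound
  have hm2 : m⁻¹ ^ 2 ≠ 0 := pow_ne_zero 2 (ENNReal.inv_ne_zero.mpr hm)
  exact (ENNReal.mul_le_mul_iff_right hm2 (by simp [hm0])).mp hbound

end SquareSum

section Moments

variable {ι : Type*} {f g : (ι → ℤ) → ℝ≥0∞}

lemma coordMoment_add (k : ℕ) (i : ι) (f g : (ι → ℤ) → ℝ≥0∞) :
    coordMoment k i (f + g) = coordMoment k i f + coordMoment k i g := by
  simp [coordMoment, mul_add, ENNReal.tsum_add]

lemma coordMoment_two_sq_le (i : ι) (f : (ι → ℤ) → ℝ≥0∞) :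
    coordMoment 2 i f ^ 2 ≤ (∑' x, f x) * coordMoment 4 i f := by
  have hamgm (m n : ℕ) : 2 * (m ^ 2 * n ^ 2 : ℝ≥0∞) ≤ m ^ 4 + n ^ 4 := by
    have h := two_mul_le_add_sq (m ^ 2) (n ^ 2)
    rw [mul_assoc, ← pow_mul, ← pow_mul] at h
    exact_mod_cast h
  refine (ENNReal.mul_le_mul_iff_right two_ne_zero ENNReal.ofNat_ne_top).mp ?_
  calc 2 * coordMoment 2 i f ^ 2
      = ∑' x, ∑' y, 2 * (((x i).natAbs : ℝ≥0∞) ^ 2 * ((y i).natAbs : ℝ≥0∞) ^ 2) * (f x * f y) := by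
        rw [sq, coordMoment]
        simp only [← ENNReal.tsum_mul_left, ← ENNReal.tsum_mul_right]
        exact tsum_congr fun x => tsum_congr fun y => by ring
    _ ≤ ∑' x, ∑' y, (((x i).natAbs : ℝ≥0∞) ^ 4 + ((y i).natAbs : ℝ≥0∞) ^ 4) * (f x * f y) := by
        gcongr with x y
        exact hamgm _ _
    _ = coordMoment 4 i f * (∑' x, f x) + (∑' x, f x) * coordMoment 4 i f := by
        simp only [coordMoment, ← ENNReal.tsum_mul_left, ← ENNReal.tsum_mul_right,
          ← ENNReal.tsum_add]
        exact tsum_congr fun x => tsum_congr fun y => by ring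
    _ = 2 * ((∑' x, f x) * coordMoment 4 i f) := by ring

lemma two_mul_coordMoment_conv (k : ℕ) (i : ι) (f : (ι → ℤ) → ℝ≥0∞) (hg : ∀ x, g (-x) = g x) :
    2 * coordMoment k i (conv f g) =
      ∑' y, ∑' z, f y * g z *
        ((y i + z i).natAbs ^ k + (y i - z i).natAbs ^ k : ℕ) := by
  have hplus : coordMoment k i (conv f g) =
      ∑' y, ∑' z, f y * g z * ((y i + z i).natAbs : ℝ≥0∞) ^ k := by
    simp_rw [coordMoment, mul_comm _ (conv f g _)]
    exact tsum_conv_mul f g fun x => ((x i).natAbs : ℝ≥0∞) ^ k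
  have hminus : coordMoment k i (conv f g) =
      ∑' y, ∑' z, f y * g z * ((y i - z i).natAbs : ℝ≥0∞) ^ k := by
    rw [hplus]
    refine tsum_congr fun y => ?_
    rw [← (Equiv.neg _).tsum_eq]
    simp [hg, sub_eq_add_neg]
  rw [two_mul]
  nth_rewrite 1 [hplus]
  rw [hminus, ← ENNReal.tsum_add]
  refine tsum_congr fun y => ?_
  rw [← ENNReal.tsum_add]
  simp [mul_add]

lemma coordMoment_two_conv (i : ι) (f : (ι → ℤ) → ℝ≥0∞) (hg : ∀ x, g (-x) = g x) :
    coordMoment 2 i (conv f g) =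
      coordMoment 2 i f * (∑' x, g x) + (∑' x, f x) * coordMoment 2 i g := by
  have hsq (a b : ℤ) : (a + b).natAbs ^ 2 + (a - b).natAbs ^ 2 =
      2 * (a.natAbs ^ 2 + b.natAbs ^ 2) := by
    zify
    simp only [sq_abs]
    ring
  refine (ENNReal.mul_right_inj two_ne_zero ENNReal.ofNat_ne_top).mp ?_
  rw [two_mul_coordMoment_conv 2 i f hg]
  simp only [hsq, coordMoment, ← ENNReal.tsum_mul_left, ← ENNReal.tsum_mul_right,
    ← ENNReal.tsum_add]
  rw [ENNReal.tsum_comm]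
  refine tsum_congr fun y => tsum_congr fun z => ?_
  push_cast
  ring

lemma coordMoment_four_conv (i : ι) (f : (ι → ℤ) → ℝ≥0∞) (hg : ∀ x, g (-x) = g x) :
    coordMoment 4 i (conv f g) = coordMoment 4 i f * (∑' x, g x) +
      6 * (coordMoment 2 i f * coordMoment 2 i g) + (∑' x, f x) * coordMoment 4 i g := by
  have hpow (a b : ℤ) : (a + b).natAbs ^ 4 + (a - b).natAbs ^ 4 =
      2 * (a.natAbs ^ 4 + 6 * (a.natAbs ^ 2 * b.natAbs ^ 2) + b.natAbs ^ 4) := by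
    zify
    simp only [sq_abs, Even.pow_abs (by decide : Even 4)]
    ring
  refine (ENNReal.mul_right_inj two_ne_zero ENNReal.ofNat_ne_top).mp ?_
  rw [two_mul_coordMoment_conv 4 i f hg]
  simp only [hpow, coordMoment, ← ENNReal.tsum_mul_left, ← ENNReal.tsum_mul_right,
    ← ENNReal.tsum_add]
  rw [ENNReal.tsum_comm]
  refine tsum_congr fun y => tsum_congr fun z => ?_
  push_cast
  ring

end Moments

section Kurtosis

/-- The moments of order `0`, `2` and `4` of one coordinate under mass distributions with
`g + D = f + c • conv f g`: here `f` and `g` have masses `m` and `l * m`, `a = c * m`, and the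
kurtosis of `f` is at most `r`. As `D ≥ 0` forces `l * (1 - a) ≤ 1`, the field `gap` says that the
total mass of `D` is small. -/
structure RenewalMoments (m l a r F2 F4 G2 G4 D0 D2 D4 : ℝ) : Prop where
  mass_pos : 0 < m
  l_ge : 32 ≤ l
  r_ge : 48 ≤ r
  gap : (1 - l * (1 - a)) * (2 * l * r + 24 * l ^ 2) ≤ 1
  F2_pos : 0 < F2
  F4_nonneg : 0 ≤ F4
  G2_nonneg : 0 ≤ G2
  G4_nonneg : 0 ≤ G4
  D0_nonneg : 0 ≤ D0
  D2_nonneg : 0 ≤ D2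
  D4_nonneg : 0 ≤ D4
  mass_eq : l * m + D0 = m + a * (l * m)
  second_eq : G2 + D2 = F2 + a * (l * F2 + G2)
  fourth_eq : m * (G4 + D4) = m * F4 + a * (l * (m * F4) + 6 * (F2 * G2) + m * G4)
  f_kurtosis_le : F4 * m ≤ r * F2 ^ 2
  D2_sq_le : D2 ^ 2 ≤ D0 * D4

namespace RenewalMoments

variable {m l a r F2 F4 G2 G4 D0 D2 D4 : ℝ} (h : RenewalMoments m l a r F2 F4 G2 G4 D0 D2 D4)
include h

lemma mul_one_sub_le_one : l * (1 - a) ≤ 1 := by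
  refine le_of_mul_le_mul_left ?_ h.mass_pos
  linarith [h.mass_eq, h.D0_nonneg]

lemma half_le_mul_one_sub : 1 / 2 ≤ l * (1 - a) := by
  have hconst : 2 ≤ 2 * l * r + 24 * l ^ 2 := by nlinarith [h.l_ge, h.r_ge]
  nlinarith [h.gap, h.mul_one_sub_le_one]

lemma a_le_one : a ≤ 1 := by
  nlinarith [h.half_le_mul_one_sub, h.l_ge]

lemma one_add_mul_le : 1 + a * l ≤ 2 * l := by
  nlinarith [h.half_le_mul_one_sub, h.l_ge]

lemma G2_le : G2 ≤ 4 * l ^ 2 * F2 := by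
  have hF2 := h.F2_pos
  have hl := h.l_ge
  calc G2 ≤ 2 * (G2 * (l * (1 - a))) := by nlinarith [h.G2_nonneg, h.half_le_mul_one_sub]
    _ ≤ 2 * (l * (F2 * (1 + a * l))) := by nlinarith [h.second_eq, h.D2_nonneg]
    _ ≤ 2 * (l * (F2 * (2 * l))) := by
        gcongr
        exact h.one_add_mul_le
    _ = 4 * l ^ 2 * F2 := by ring

lemma mul_fourth_le :
    m * (G4 * (1 - a) + D4) ≤ 2 * l * (r * F2 ^ 2) + 6 * (F2 * G2) := by
  have hF2 := h.F2_pos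
  have hG2 := h.G2_nonneg
  have hl := h.l_ge
  calc m * (G4 * (1 - a) + D4) = (1 + a * l) * (F4 * m) + a * (6 * (F2 * G2)) := by
        linarith [h.fourth_eq]
    _ ≤ 2 * l * (r * F2 ^ 2) + 1 * (6 * (F2 * G2)) :=
        add_le_add
          (mul_le_mul h.one_add_mul_le h.f_kurtosis_le (mul_nonneg h.F4_nonneg h.mass_pos.le)
            (by linarith))
          (mul_le_mul_of_nonneg_right h.a_le_one (by positivity))
    _ = 2 * l * (r * F2 ^ 2) + 6 * (F2 * G2) := by ring

lemma D2_le : D2 ≤ F2 := by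
  have hm := h.mass_pos
  have hG4 : 0 ≤ m * (G4 * (1 - a)) :=
    mul_nonneg hm.le (mul_nonneg h.G4_nonneg (sub_nonneg.mpr h.a_le_one))
  have hD4 : m * D4 ≤ (2 * l * r + 24 * l ^ 2) * F2 ^ 2 := by
    nlinarith [h.mul_fourth_le, h.G2_le, h.F2_pos]
  have hD0 : D0 = (1 - l * (1 - a)) * m := by linarith [h.mass_eq]
  refine le_of_sq_le_sq ?_ h.F2_pos.le
  calc D2 ^ 2 ≤ (1 - l * (1 - a)) * (m * D4) := by rw [← mul_assoc, ← hD0]; exact h.D2_sq_le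
    _ ≤ (1 - l * (1 - a)) * ((2 * l * r + 24 * l ^ 2) * F2 ^ 2) :=
        mul_le_mul_of_nonneg_left hD4 (sub_nonneg.mpr h.mul_one_sub_le_one)
    _ ≤ 1 * F2 ^ 2 := by
        rw [← mul_assoc]
        exact mul_le_mul_of_nonneg_right h.gap (sq_nonneg F2)
    _ = F2 ^ 2 := one_mul _

lemma sq_mul_F2_le : l ^ 2 * F2 ≤ 2 * G2 := by
  have hl := h.l_ge
  have hF2 := h.F2_pos
  have hle : l ^ 2 * F2 ≤ G2 + l * F2 :=
    calc l ^ 2 * F2 ≤ l * (F2 * (1 + a * l)) := by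
          nlinarith [h.mul_one_sub_le_one, mul_pos (by linarith : 0 < l) hF2]
      _ = G2 * (l * (1 - a)) + l * D2 := by linear_combination -l * h.second_eq
      _ ≤ G2 * 1 + l * F2 := by
          have hG2 := h.G2_nonneg
          gcongr
          exacts [h.mul_one_sub_le_one, h.D2_le]
      _ = G2 + l * F2 := by rw [mul_one]
  nlinarith [mul_le_mul_of_nonneg_right hl (by positivity : 0 ≤ l * F2)]

lemma G2_pos : 0 < G2 := by
  have hl := h.l_ge
  have hF2 := h.F2_pos
  linarith [h.sq_mul_F2_le, (by positivity : 0 < l ^ 2 * F2)]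

lemma mass_mul_G4_le : m * G4 ≤ 4 * l ^ 2 * (r * F2 ^ 2) + 12 * l * (F2 * G2) := by
  have hl := h.l_ge
  have hm := h.mass_pos
  have hD4 := h.D4_nonneg
  calc m * G4 ≤ 2 * (l * (1 - a)) * (m * G4) := by
        nlinarith [h.half_le_mul_one_sub, mul_nonneg hm.le h.G4_nonneg]
    _ ≤ 2 * l * (m * (G4 * (1 - a) + D4)) := by
        nlinarith [mul_nonneg (mul_nonneg (by linarith : 0 ≤ l) hm.le) hD4]
    _ ≤ 2 * l * (2 * l * (r * F2 ^ 2) + 6 * (F2 * G2)) := by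
        gcongr
        exact h.mul_fourth_le
    _ = 4 * l ^ 2 * (r * F2 ^ 2) + 12 * l * (F2 * G2) := by ring

theorem g_kurtosis_le : G4 * (l * m) ≤ r * G2 ^ 2 := by
  have hl := h.l_ge
  have hr := h.r_ge
  have hF2 := h.F2_pos
  have hG2 := h.G2_nonneg
  have hcube : 32 * (l ^ 3 * F2 ^ 2) ≤ 4 * G2 ^ 2 := by
    calc 32 * (l ^ 3 * F2 ^ 2) ≤ l * (l ^ 3 * F2 ^ 2) := by gcongr
      _ = (l ^ 2 * F2) ^ 2 := by ring
      _ ≤ (2 * G2) ^ 2 := pow_le_pow_left₀ (by positivity) h.sq_mul_F2_le 2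
      _ = 4 * G2 ^ 2 := by ring
  have hmixed : l ^ 2 * F2 * G2 ≤ 2 * G2 * G2 := mul_le_mul_of_nonneg_right h.sq_mul_F2_le hG2
  calc G4 * (l * m) = l * (m * G4) := by ring
    _ ≤ l * (4 * l ^ 2 * (r * F2 ^ 2) + 12 * l * (F2 * G2)) := by
        gcongr
        exact h.mass_mul_G4_le
    _ = 4 * r * (l ^ 3 * F2 ^ 2) + 12 * (l ^ 2 * F2 * G2) := by ring
    _ ≤ 4 * r * (G2 ^ 2 / 8) + 12 * (2 * G2 * G2) := by
        gcongr
        linarith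
    _ ≤ r * G2 ^ 2 := by nlinarith [sq_nonneg G2]

end RenewalMoments

variable {ι : Type*} {f g D : (ι → ℤ) → ℝ≥0∞} {r l a : ℝ} {c l' : ℝ≥0∞}

lemma tsum_add_tsum_eq (hD : g + D = f + c • conv f g) :
    ∑' x, g x + ∑' x, D x = ∑' x, f x + (c * ∑' x, f x) * ∑' x, g x := by
  rw [← ENNReal.tsum_add, mul_assoc, ← tsum_conv, ← ENNReal.tsum_mul_left, ← ENNReal.tsum_add]
  exact tsum_congr (congrFun hD)

lemma coordMoment_two_add_eq (hD : g + D = f + c • conv f g) (heven : ∀ x, g (-x) = g x)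
    (hmass : ∑' x, g x = l' * ∑' x, f x) (i : ι) :
    coordMoment 2 i g + coordMoment 2 i D =
      coordMoment 2 i f + (c * ∑' x, f x) * (l' * coordMoment 2 i f + coordMoment 2 i g) := by
  rw [← coordMoment_add, hD, coordMoment_add, coordMoment_smul, coordMoment_two_conv i f heven,
    hmass]
  ring

lemma tsum_mul_coordMoment_four_add_eq (hD : g + D = f + c • conv f g)
    (heven : ∀ x, g (-x) = g x) (hmass : ∑' x, g x = l' * ∑' x, f x) (i : ι) :
    (∑' x, f x) * (coordMoment 4 i g + coordMoment 4 i D) =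
      (∑' x, f x) * coordMoment 4 i f + (c * ∑' x, f x) * (l' * ((∑' x, f x) * coordMoment 4 i f) +
        6 * (coordMoment 2 i f * coordMoment 2 i g) + (∑' x, f x) * coordMoment 4 i g) := by
  rw [← coordMoment_add, hD, coordMoment_add, coordMoment_smul, coordMoment_four_conv i f heven,
    hmass]
  ring

lemma IsIsotropicMass.ne_top_of_mul_tsum_eq [Nonempty ι] (hf : IsIsotropicMass f r)
    (hc : c * ∑' x, f x = ENNReal.ofReal a) : c ≠ ∞ := by
  rintro rfl
  exact ENNReal.ofReal_ne_top (hc ▸ ENNReal.top_mul hf.tsum_ne_zero)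

lemma IsIsotropicMass.coordMoment_conv_ne_top (hf : IsIsotropicMass f r)
    (heven : ∀ x, g (-x) = g x) (hg : ∑' x, g x ≠ ∞) {i : ι} (hg4 : coordMoment 4 i g ≠ ∞) :
    coordMoment 4 i (conv f g) ≠ ∞ := by
  have hg2 : coordMoment 2 i g ≠ ∞ := ((coordMoment_two_le_four i g).trans_lt hg4.lt_top).ne
  rw [coordMoment_four_conv i f heven]
  exact ENNReal.add_ne_top.mpr ⟨ENNReal.add_ne_top.mpr
    ⟨ENNReal.mul_ne_top (hf.coordMoment_four_ne_top i) hg,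
      ENNReal.mul_ne_top ENNReal.ofNat_ne_top
        (ENNReal.mul_ne_top (hf.coordMoment_two_ne_top i) hg2)⟩,
    ENNReal.mul_ne_top hf.tsum_ne_top hg4⟩

lemma IsIsotropicMass.coordMoment_remainder_ne_top (hf : IsIsotropicMass f r)
    (heven : ∀ x, g (-x) = g x) (hg : ∑' x, g x ≠ ∞) (hc : c ≠ ∞)
    (hD : g + D = f + c • conv f g) {i : ι} (hg4 : coordMoment 4 i g ≠ ∞) :
    coordMoment 4 i D ≠ ∞ := by
  refine ne_top_of_le_ne_top (b := coordMoment 4 i (f + c • conv f g)) ?_ ?_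
  · rw [coordMoment_add, coordMoment_smul]
    exact ENNReal.add_ne_top.mpr ⟨hf.coordMoment_four_ne_top i,
      ENNReal.mul_ne_top hc (hf.coordMoment_conv_ne_top heven hg hg4)⟩
  · rw [← hD, coordMoment_add]
    exact le_add_self

theorem IsIsotropicMass.renewalMoments [Nonempty ι] (hf : IsIsotropicMass f r)
    (heven : ∀ x, g (-x) = g x) (hl : 32 ≤ l) (hr : 48 ≤ r) (ha : 0 ≤ a)
    (hgap : (1 - l * (1 - a)) * (2 * l * r + 24 * l ^ 2) ≤ 1)
    (hc : c * ∑' x, f x = ENNReal.ofReal a) (hmass : ∑' x, g x = ENNReal.ofReal l * ∑' x, f x)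
    (hD : g + D = f + c • conv f g) {i : ι} (hg4 : coordMoment 4 i g ≠ ∞) :
    RenewalMoments (∑' x, f x).toReal l a r (coordMoment 2 i f).toReal
      (coordMoment 4 i f).toReal (coordMoment 2 i g).toReal (coordMoment 4 i g).toReal
      (∑' x, D x).toReal (coordMoment 2 i D).toReal (coordMoment 4 i D).toReal := by
  have hm0 := hf.tsum_ne_zero
  have hF2 := hf.coordMoment_two_ne_zero i
  have hkurt := hf.kurtosis_le i
  have hg : ∑' x, g x ≠ ∞ := hmass ▸ ENNReal.mul_ne_top ENNReal.ofReal_ne_top hf.tsum_ne_top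
  have hg2 := ((coordMoment_two_le_four i g).trans_lt hg4.lt_top).ne
  have hsum := tsum_add_tsum_eq hD
  have hsecond := coordMoment_two_add_eq hD heven hmass i
  have hfourth := tsum_mul_coordMoment_four_add_eq hD heven hmass i
  have hCS := coordMoment_two_sq_le i D
  have hD0 : ∑' x, D x ≠ ∞ := ne_top_of_le_ne_top (ENNReal.add_ne_top.mpr
    ⟨hf.tsum_ne_top, ENNReal.mul_ne_top (hc ▸ ENNReal.ofReal_ne_top) hg⟩)
    (le_add_self.trans_eq hsum)
  have hD4 := hf.coordMoment_remainder_ne_top heven hg (hf.ne_top_of_mul_tsum_eq hc) hD hg4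
  have hD2 := ((coordMoment_two_le_four i D).trans_lt hD4.lt_top).ne
  rw [hc, hmass] at hsum
  rw [hc] at hsecond hfourth
  clear hmass hc hg
  lift l to NNReal using by linarith
  lift r to NNReal using by linarith
  lift a to NNReal using ha
  lift ∑' x, f x to NNReal using hf.tsum_ne_top with m
  lift coordMoment 2 i f to NNReal using hf.coordMoment_two_ne_top i with F2
  lift coordMoment 4 i f to NNReal using hf.coordMoment_four_ne_top i with F4
  lift coordMoment 2 i g to NNReal using hg2 with G2
  lift coordMoment 4 i g to NNReal using hg4 with G4
  lift ∑' x, D x to NNReal using hD0 with D0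
  lift coordMoment 2 i D to NNReal using hD2 with D2
  lift coordMoment 4 i D to NNReal using hD4 with D4
  simp only [ENNReal.ofReal_coe_nnreal] at hsum hsecond hfourth hkurt
  simp only [ENNReal.coe_toReal]
  exact
    { mass_pos := by exact_mod_cast pos_iff_ne_zero.mpr hm0
      l_ge := hl, r_ge := hr, gap := hgap
      F2_pos := by exact_mod_cast pos_iff_ne_zero.mpr hF2
      F4_nonneg := F4.2, G2_nonneg := G2.2, G4_nonneg := G4.2, D0_nonneg := D0.2
      D2_nonneg := D2.2, D4_nonneg := D4.2
      mass_eq := by exact_mod_cast hsum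
      second_eq := by exact_mod_cast hsecond
      fourth_eq := by exact_mod_cast hfourth
      f_kurtosis_le := by exact_mod_cast hkurt
      D2_sq_le := by exact_mod_cast hCS }

theorem IsIsotropicMass.of_le_add_conv [Nonempty ι] (hf : IsIsotropicMass f r)
    (hsymm : ∀ (s : ι → ℤˣ) x, g (s • x) = g x)
    (hg2 : ∀ i j, coordMoment 2 i g = coordMoment 2 j g) (hg4 : ∀ i, coordMoment 4 i g ≠ ∞)
    (hl : 32 ≤ l) (hr : 48 ≤ r) (ha : 0 ≤ a)
    (hgap : (1 - l * (1 - a)) * (2 * l * r + 24 * l ^ 2) ≤ 1)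
    (hc : c * ∑' x, f x = ENNReal.ofReal a) (hmass : ∑' x, g x = ENNReal.ofReal l * ∑' x, f x)
    (hle : g ≤ f + c • conv f g) : IsIsotropicMass g r := by
  have hg : ∑' x, g x ≠ ∞ := hmass ▸ ENNReal.mul_ne_top ENNReal.ofReal_ne_top hf.tsum_ne_top
  have hren (i : ι) := hf.renewalMoments (neg_eq_of_smul_eq hsymm) hl hr ha hgap hc hmass
    (add_tsub_cancel_of_le hle) (hg4 i)
  refine ⟨hsymm, hg, hg2, fun i => (ENNReal.toReal_pos_iff.mp (hren i).G2_pos).1.ne', hg4,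
    fun i => ?_⟩
  have hle := ENNReal.ofReal_le_ofReal (hren i).g_kurtosis_le
  have h2 := ((coordMoment_two_le_four i g).trans_lt (hg4 i).lt_top).ne
  rwa [ENNReal.ofReal_mul ENNReal.toReal_nonneg, ENNReal.ofReal_mul (by linarith),
    ENNReal.ofReal_mul (by linarith), ENNReal.ofReal_toReal (hg4 i),
    ENNReal.ofReal_toReal hf.tsum_ne_top, ENNReal.ofReal_pow ENNReal.toReal_nonneg,
    ENNReal.ofReal_toReal h2, ← hmass] at hle

end Kurtosis

section ExponentialDecay

variable {d : ℕ}

lemma natAbs_le_supNorm (x : Fin d → ℤ) (i : Fin d) : ((x i).natAbs : ℝ) ≤ supNorm x :=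
  Nat.cast_le.mpr (Finset.le_sup (f := fun i => (x i).natAbs) (Finset.mem_univ i))

lemma tsum_comp_supNorm_le (u : ℝ → ℝ≥0∞) :
    ∑' x : Fin d → ℤ, u (supNorm x) ≤ ∑' n : ℕ, (2 * n + 1) ^ d * u n := by
  have hcard (n : ℕ) : (Finset.Icc (fun _ : Fin d => -(n : ℤ)) fun _ => (n : ℤ)).card =
      (2 * n + 1) ^ d := by
    rw [Pi.card_Icc, Finset.prod_const, Finset.card_fin, Int.card_Icc]
    congr 1
    lia
  have hmem (x : Fin d → ℤ) : x ∈ Finset.Icc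
      (fun _ : Fin d => -((Finset.univ.sup fun i => (x i).natAbs : ℕ) : ℤ))
      fun _ => ((Finset.univ.sup fun i => (x i).natAbs : ℕ) : ℤ) := by
    simp only [Finset.mem_Icc, Pi.le_def, ← forall_and]
    intro i
    have := Finset.le_sup (f := fun i => (x i).natAbs) (Finset.mem_univ i)
    lia
  calc ∑' x : Fin d → ℤ, u (supNorm x)
      ≤ ∑' (x : Fin d → ℤ) (n : ℕ), Set.indicator
          (Finset.Icc (fun _ : Fin d => -(n : ℤ)) fun _ => (n : ℤ)) (fun _ => u n) x := by
        refine ENNReal.tsum_le_tsum fun x => le_trans ?_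
          (ENNReal.le_tsum (Finset.univ.sup fun i => (x i).natAbs))
        rw [Set.indicator_of_mem (Finset.mem_coe.mpr (hmem x))]
        rfl
    _ = ∑' n : ℕ, (2 * n + 1) ^ d * u n := by
        rw [ENNReal.tsum_comm]
        refine tsum_congr fun n => ?_
        rw [← tsum_subtype, Finset.tsum_subtype' _ fun _ => u n, Finset.sum_const, hcard,
          nsmul_eq_mul]
        push_cast
        rfl

lemma summable_shell_mul_pow_mul_exp {c : ℝ} (hc : 0 < c) (d k : ℕ) :
    Summable fun n : ℕ => (2 * n + 1 : ℝ) ^ d * (n ^ k * Real.exp (-c * n)) := by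
  refine .of_nonneg_of_le (fun n => by positivity) (fun n => ?_)
    (((summable_nat_add_iff 1).mpr (Real.summable_pow_mul_exp_neg_nat_mul (d + k) hc)).mul_left
      (3 ^ d * Real.exp c))
  have hexp : Real.exp (-c * n) = Real.exp c * Real.exp (-c * (n + 1 : ℕ)) := by
    rw [← Real.exp_add]
    congr 1
    push_cast
    ring
  calc (2 * n + 1 : ℝ) ^ d * (n ^ k * Real.exp (-c * n))
      ≤ (3 * (n + 1 : ℕ)) ^ d * ((n + 1 : ℕ) ^ k * Real.exp (-c * n)) := by
        push_cast
        gcongr <;> linarith [(Nat.cast_nonneg n : (0 : ℝ) ≤ n)]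
    _ = 3 ^ d * Real.exp c * ((n + 1 : ℕ) ^ (d + k) * Real.exp (-c * (n + 1 : ℕ))) := by
        rw [hexp, mul_pow]
        ring

lemma tsum_supNorm_pow_mul_ne_top {f : (Fin d → ℤ) → ℝ≥0∞} {C c : ℝ} (hc : 0 < c)
    (hf : ∀ x, f x ≤ ENNReal.ofReal (C * Real.exp (-c * supNorm x))) (k : ℕ) :
    ∑' x, ENNReal.ofReal (supNorm x) ^ k * f x ≠ ∞ := by
  refine ne_top_of_le_ne_top ((summable_shell_mul_pow_mul_exp hc d k).mul_left C).tsum_ofReal_ne_top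
    ?_
  calc ∑' x, ENNReal.ofReal (supNorm x) ^ k * f x
      ≤ ∑' x : Fin d → ℤ, ENNReal.ofReal (supNorm x ^ k * (C * Real.exp (-c * supNorm x))) := by
        refine ENNReal.tsum_le_tsum fun x => ?_
        have hx : 0 ≤ supNorm x := Nat.cast_nonneg _
        rw [ENNReal.ofReal_mul (by positivity), ENNReal.ofReal_pow hx]
        exact mul_le_mul_right (hf x) _
    _ ≤ ∑' n : ℕ, (2 * n + 1) ^ d * ENNReal.ofReal (n ^ k * (C * Real.exp (-c * n))) :=
        tsum_comp_supNorm_le fun y => ENNReal.ofReal (y ^ k * (C * Real.exp (-c * y)))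
    _ = ∑' n : ℕ, ENNReal.ofReal (C * ((2 * n + 1) ^ d * (n ^ k * Real.exp (-c * n)))) := by
        refine tsum_congr fun n => ?_
        have hshell : (2 * n + 1 : ℝ≥0∞) ^ d = ENNReal.ofReal ((2 * n + 1) ^ d) := by
          exact_mod_cast (ENNReal.ofReal_natCast ((2 * n + 1) ^ d)).symm
        rw [hshell, ← ENNReal.ofReal_mul (by positivity)]
        congr 1
        ring
    _ ≤ _ := le_rfl

lemma tsum_ne_top_of_le_exp {f : (Fin d → ℤ) → ℝ≥0∞} {C c : ℝ} (hc : 0 < c)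
    (hf : ∀ x, f x ≤ ENNReal.ofReal (C * Real.exp (-c * supNorm x))) : ∑' x, f x ≠ ∞ := by
  simpa using tsum_supNorm_pow_mul_ne_top hc hf 0

lemma coordMoment_ne_top_of_le_exp {f : (Fin d → ℤ) → ℝ≥0∞} {C c : ℝ} (hc : 0 < c)
    (hf : ∀ x, f x ≤ ENNReal.ofReal (C * Real.exp (-c * supNorm x))) (k : ℕ) (i : Fin d) :
    coordMoment k i f ≠ ∞ := by
  refine ne_top_of_le_ne_top (tsum_supNorm_pow_mul_ne_top hc hf k) ?_
  refine ENNReal.tsum_le_tsum fun x => ?_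
  gcongr
  rw [← ENNReal.ofReal_natCast]
  exact ENNReal.ofReal_le_ofReal (natAbs_le_supNorm x i)

end ExponentialDecay

section QuadraticGrowth

open Set

lemma le_of_sub_le_mul_sq {φ : ℝ → ℝ} {s t K : ℝ} (hst : s ≤ t)
    (h : ∀ u ∈ Icc s t, ∀ v ∈ Icc s t, u ≤ v → φ v - φ u ≤ K * (v - u) ^ 2) : φ t ≤ φ s := by
  have hbisect (n : ℕ) : ∀ u ∈ Icc s t, ∀ v ∈ Icc s t, u ≤ v →
      φ v - φ u ≤ K * (v - u) ^ 2 * (1 / 2) ^ n := by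
    induction n with
    | zero => simpa using h
    | succ n ih =>
      intro u hu v hv huv
      have hmid : (u + v) / 2 ∈ Icc s t := ⟨by linarith [hu.1, hv.1], by linarith [hu.2, hv.2]⟩
      have hleft := ih u hu _ hmid (by linarith)
      have hright := ih _ hmid v hv (by linarith)
      calc φ v - φ u ≤ K * ((u + v) / 2 - u) ^ 2 * (1 / 2) ^ n +
            K * (v - (u + v) / 2) ^ 2 * (1 / 2) ^ n := by linarith
        _ = K * (v - u) ^ 2 * (1 / 2) ^ (n + 1) := by ring
  have hlim : Filter.Tendsto (fun n : ℕ => K * (t - s) ^ 2 * (1 / 2) ^ n)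
      Filter.atTop (nhds 0) := by
    simpa using (tendsto_pow_atTop_nhds_zero_of_lt_one (r := (1 / 2 : ℝ)) (by norm_num)
      (by norm_num)).const_mul (K * (t - s) ^ 2)
  exact sub_nonpos.mp
    (ge_of_tendsto' hlim fun n => hbisect n s (left_mem_Icc.mpr hst) t (right_mem_Icc.mpr hst) hst)

lemma lipschitzOnWith_of_monotoneOn {c : ℝ → ℝ} {S : Set ℝ} {K : NNReal} (hm : MonotoneOn c S)
    (hu : ∀ u ∈ S, ∀ v ∈ S, u ≤ v → c v - c u ≤ (v - u) * K) : LipschitzOnWith K c S := by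
  refine LipschitzOnWith.of_le_add_mul K fun u hu' v hv => ?_
  rcases le_total u v with h | h
  · exact (hm hu' hv h).trans (le_add_of_nonneg_right (by positivity))
  · rw [Real.dist_eq, abs_of_nonneg (sub_nonneg.mpr h), mul_comm]
    linarith [hu v hv u hu' h]

variable {c : ℝ → ℝ} {s t δ : ℝ}

lemma lowerBound_increment {x y z e : ℝ} (hx : 0 < x) (hxy : x ≤ y) (hyz : y ≤ z) (he : 0 ≤ e)
    (hδ0 : 0 ≤ δ) (hδ1 : δ ≤ 1) (hu : y - x ≤ e * (x * y))
    (hl : e * (x ^ 2 - δ * y ^ 2) ≤ y - x) :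
    (1 - δ) * e - (x⁻¹ - y⁻¹) ≤ 2 * z * e ^ 2 := by
  have hy := hx.trans_le hxy
  have hez : 0 ≤ e * z := mul_nonneg he (hy.le.trans hyz)
  have hratio : y / x ≤ 1 + e * z := by
    rw [div_le_iff₀ hx]
    nlinarith [mul_le_mul_of_nonneg_left hyz (mul_nonneg he hx.le)]
  have hratio' : 1 - e * z ≤ x / y := by
    rw [le_div_iff₀ hy]
    nlinarith [mul_le_mul_of_nonneg_left (hxy.trans hyz) (mul_nonneg he hy.le)]
  have hdiff : e * (x / y - δ * (y / x)) ≤ x⁻¹ - y⁻¹ := by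
    calc e * (x / y - δ * (y / x)) = e * (x ^ 2 - δ * y ^ 2) / (x * y) := by field_simp
      _ ≤ (y - x) / (x * y) := by gcongr
      _ = x⁻¹ - y⁻¹ := by field_simp
  have hmain : 1 - δ - 2 * (e * z) ≤ x / y - δ * (y / x) := by
    nlinarith [mul_le_mul_of_nonneg_left hratio hδ0, mul_le_mul_of_nonneg_right hδ1 hez]
  nlinarith [mul_le_mul_of_nonneg_left hmain he]

theorem mul_sub_le_inv_sub_inv (hst : s ≤ t) (hδ0 : 0 ≤ δ) (hδ1 : δ ≤ 1) (hpos : 0 < c s)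
    (hm : MonotoneOn c (Icc s t))
    (hu : ∀ u ∈ Icc s t, ∀ v ∈ Icc s t, u ≤ v → c v - c u ≤ (v - u) * (c u * c v))
    (hl : ∀ u ∈ Icc s t, ∀ v ∈ Icc s t, u ≤ v → (v - u) * (c u ^ 2 - δ * c v ^ 2) ≤ c v - c u) :
    (1 - δ) * (t - s) ≤ (c s)⁻¹ - (c t)⁻¹ := by
  have h := le_of_sub_le_mul_sq (φ := fun u => (c u)⁻¹ + (1 - δ) * u) (K := 2 * c t) hst
    fun u hu' v hv huv => by
      have hinc := lowerBound_increment (hpos.trans_le (hm (left_mem_Icc.mpr hst) hu' hu'.1))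
        (hm hu' hv huv) (hm hv (right_mem_Icc.mpr hst) hv.2) (sub_nonneg.mpr huv) hδ0 hδ1
        (hu u hu' v hv huv) (hl u hu' v hv huv)
      linarith
  linarith

end QuadraticGrowth

section SignedPermutations

variable {d : ℕ}

/-- The signed coordinate permutation `x ↦ (± x (π i))ᵢ`, with a minus sign where `e i` holds;
`IsSymmFun f` says that `f` is invariant under all of them. -/
def signedPerm (π : Equiv.Perm (Fin d)) (e : Fin d → Bool) : (Fin d → ℤ) ≃+ (Fin d → ℤ) where
  toFun x i := (if e i then -1 else 1) * x (π i)
  invFun x i := (if e (π.symm i) then -1 else 1) * x (π.symm i)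
  left_inv x := by ext i; simp only [Equiv.apply_symm_apply]; split_ifs <;> simp
  right_inv x := by ext i; simp only [Equiv.symm_apply_apply]; split_ifs <;> simp
  map_add' x y := by ext i; simp [mul_add]

namespace IsSymmFun

variable {f g : (Fin d → ℤ) → ℝ≥0∞}

lemma comp_signedPerm (hf : IsSymmFun f) (π : Equiv.Perm (Fin d)) (e : Fin d → Bool) :
    f ∘ signedPerm π e = f :=
  funext (hf π e)

lemma conv (hf : IsSymmFun f) (hg : IsSymmFun g) : IsSymmFun (conv f g) := by
  intro π e x
  have h := conv_map_equiv (signedPerm π e) f g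
  rw [hf.comp_signedPerm, hg.comp_signedPerm] at h
  exact (congrFun h x).symm

lemma smul_eq (hf : IsSymmFun f) (s : Fin d → ℤˣ) (x : Fin d → ℤ) : f (s • x) = f x := by
  rw [← hf 1 (fun i => s i = -1) x]
  congr 1
  ext i
  obtain hi | hi := Int.units_eq_one_or (s i) <;> simp [hi, Units.smul_def]

lemma coordMoment_eq (hf : IsSymmFun f) (k : ℕ) (i j : Fin d) :
    coordMoment k i f = coordMoment k j f := by
  rw [coordMoment, ← (signedPerm (Equiv.swap i j) fun _ => false).toEquiv.tsum_eq]
  refine tsum_congr fun x => congrArg₂ (· * ·) ?_ (hf (Equiv.swap i j) (fun _ => false) x)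
  simp [signedPerm]

end IsSymmFun

end SignedPermutations

section TermwiseDerivative

open Set

lemma mul_sub_le_sub_of_hasSum {X : Type*} {g g' : ℝ → X → ℝ} {a : X → ℝ} {A B Gs Gt s t : ℝ}
    (hst : s ≤ t)
    (hderiv : ∀ x, ∀ u ∈ Icc s t, HasDerivWithinAt (fun v => g v x) (g' u x) (Icc s t) u)
    (hmono : g s ≤ g t) (hs : HasSum (g s) Gs) (ht : HasSum (g t) Gt) (ha : HasSum a A)
    (hlow : ∀ u ∈ Icc s t, ∀ Λ : Finset X, ∑ x ∈ Λ, a x - B ≤ ∑ x ∈ Λ, g' u x) :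
    (A - B) * (t - s) ≤ Gt - Gs := by
  have hfinite (Λ : Finset X) : (∑ x ∈ Λ, a x - B) * (t - s) ≤ Gt - Gs := by
    have hsum (u) (hu : u ∈ Icc s t) :
        HasDerivWithinAt (fun v => ∑ x ∈ Λ, g v x) (∑ x ∈ Λ, g' u x) (Icc s t) u :=
      .fun_sum fun x _ => hderiv x u hu
    have hinterior (u) (hu : u ∈ interior (Icc s t)) :
        HasDerivAt (fun v => ∑ x ∈ Λ, g v x) (∑ x ∈ Λ, g' u x) u :=
      (hsum u (interior_subset hu)).hasDerivAt (mem_interior_iff_mem_nhds.mp hu)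
    calc (∑ x ∈ Λ, a x - B) * (t - s) ≤ ∑ x ∈ Λ, g t x - ∑ x ∈ Λ, g s x :=
          (convex_Icc s t).mul_sub_le_image_sub_of_le_deriv
            (fun u hu => (hsum u hu).continuousWithinAt)
            (fun u hu => (hinterior u hu).differentiableAt.differentiableWithinAt)
            (fun u hu => (hlow u (interior_subset hu) Λ).trans_eq (hinterior u hu).deriv.symm)
            s (left_mem_Icc.mpr hst) t (right_mem_Icc.mpr hst) hst
      _ = ∑ x ∈ Λ, (g t x - g s x) := (Finset.sum_sub_distrib ..).symm
      _ ≤ Gt - Gs := sum_le_hasSum Λ (fun x _ => sub_nonneg.mpr (hmono x)) (ht.sub hs)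
  exact le_of_tendsto' ((Filter.Tendsto.sub_const ha B).mul_const (t - s)) hfinite

lemma hasSum_toReal_of_tsum_eq {X : Type*} {f : X → ℝ≥0∞} {c : ℝ≥0∞} (hc : c ≠ ∞)
    (hf : ∑' x, f x = c) : HasSum (fun x => (f x).toReal) c.toReal := by
  subst hf
  rw [ENNReal.tsum_toReal_eq fun x => ENNReal.ne_top_of_tsum_ne_top hc x]
  exact ENNReal.hasSum_toReal hc

end TermwiseDerivative

section TripleConvolution

variable {A : Type*} [AddCommGroup A]

lemma tsum_prod_eq_conv_conv (f g h : A → ℝ≥0∞) (x : A) :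
    ∑' p : A × A, f p.1 * g p.2 * h (x - p.1 - p.2) = conv f (conv g h) x := by
  rw [ENNReal.tsum_prod (f := fun y z => f y * g z * h (x - y - z))]
  simp only [conv, mul_assoc, ENNReal.tsum_mul_left]

lemma hasSum_toReal_conv_conv {f g h : A → ℝ≥0∞} {x : A} (hfin : conv f (conv g h) x ≠ ∞) :
    HasSum (fun p : A × A => (f p.1).toReal * (g p.2).toReal * (h (x - p.1 - p.2)).toReal)
      (conv f (conv g h) x).toReal := by
  simpa only [ENNReal.toReal_mul] using
    hasSum_toReal_of_tsum_eq hfin (tsum_prod_eq_conv_conv f g h x)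

lemma tsum_conv_conv (f g h : A → ℝ≥0∞) :
    ∑' x, conv f (conv g h) x = (∑' x, f x) * ((∑' x, g x) * ∑' x, h x) := by
  rw [tsum_conv, tsum_conv]

end TripleConvolution

section Susceptibility

open Set

variable {d : ℕ} {c₀ : ℝ}

/-- The kernel `J` as a mass distribution with values in `ℝ≥0∞`. -/
def AdmissibleKernel.mass (K : AdmissibleKernel d c₀) (x : Fin d → ℤ) : ℝ≥0∞ :=
  ENNReal.ofReal (K.J x)

lemma AdmissibleKernel.tsum_mass (K : AdmissibleKernel d c₀) : ∑' x, K.mass x = 1 := by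
  simp only [mass, ← ENNReal.ofReal_tsum_of_nonneg K.nonneg K.summable, K.norm_one,
    ENNReal.ofReal_one]

lemma AdmissibleKernel.isSymmFun_mass (K : AdmissibleKernel d c₀) : IsSymmFun K.mass :=
  fun π e x => congrArg ENNReal.ofReal (K.symm π e x)

lemma AdmissibleKernel.coordMoment_add_mass_le (K : AdmissibleKernel d c₀) (j k : ℕ) (i : Fin d) :
    coordMoment (j + k) i K.mass ≤ ENNReal.ofReal K.R ^ j * coordMoment k i K.mass := by
  rw [coordMoment, coordMoment, ← ENNReal.tsum_mul_left]
  refine ENNReal.tsum_le_tsum fun x => ?_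
  obtain hJ | hJ := (K.nonneg x).eq_or_lt
  · simp [mass, ← hJ]
  · have hxi : ((x i).natAbs : ℝ≥0∞) ≤ ENNReal.ofReal K.R := by
      rw [← ENNReal.ofReal_natCast]
      exact ENNReal.ofReal_le_ofReal ((natAbs_le_supNorm x i).trans (K.range_le x hJ))
    rw [pow_add, mul_assoc]
    gcongr

lemma AdmissibleKernel.coordMoment_mass_ne_top (K : AdmissibleKernel d c₀) (k : ℕ) (i : Fin d) :
    coordMoment k i K.mass ≠ ∞ := by
  refine ne_top_of_le_ne_top ?_ (K.coordMoment_add_mass_le k 0 i)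
  simp [coordMoment, K.tsum_mass]

namespace Model

/-- The parameters at which `χ` is finite. -/
structure Subcritical (M : Model d c₀) (t : ℝ) : Prop where
  nonneg : 0 ≤ t
  lt_βc : ENNReal.ofReal t < M.βc

/-- The susceptibility `χ(t)` as a real number; meaningful for subcritical `t`. -/
def susc (M : Model d c₀) (t : ℝ) : ℝ := (M.chi t).toReal

/-- The error function `H_t` as a mass distribution with values in `ℝ≥0∞`. -/
def errorMass (M : Model d c₀) (t : ℝ) (x : Fin d → ℤ) : ℝ≥0∞ := ENNReal.ofReal (M.H t x)

variable {M : Model d c₀} {s t u : ℝ}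

lemma Subcritical.of_le (ht : M.Subcritical t) (hs : 0 ≤ s) (hst : s ≤ t) : M.Subcritical s :=
  ⟨hs, (ENNReal.ofReal_le_ofReal hst).trans_lt ht.lt_βc⟩

lemma F_eq_conv (M : Model d c₀) (t : ℝ) : M.F t = conv M.K.mass (M.G t) := rfl

lemma tsum_F (M : Model d c₀) (t : ℝ) : ∑' x, M.F t x = M.chi t := by
  rw [F_eq_conv, tsum_conv, M.K.tsum_mass, one_mul, chi]

lemma isSymmFun_F (M : Model d c₀) (t : ℝ) : IsSymmFun (M.F t) :=
  M.K.isSymmFun_mass.conv (M.symm t)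

lemma chi_zero (M : Model d c₀) : M.chi 0 = 1 := by
  simp [chi, M.init, tsum_ite_eq]

lemma F_zero (M : Model d c₀) : M.F 0 = M.K.mass := by
  funext x
  rw [F_eq_conv, conv_comm, conv, tsum_eq_single 0 fun y hy => by simp [M.init, hy]]
  simp [M.init]

lemma susc_zero (M : Model d c₀) : M.susc 0 = 1 := by
  rw [susc, chi_zero, ENNReal.toReal_one]

lemma G_mono (ht : M.Subcritical t) (hs : 0 ≤ s) (hst : s ≤ t) : M.G s ≤ M.G t :=
  fun x => M.mono x hs hst ht.lt_βc.le

lemma F_mono (ht : M.Subcritical t) (hs : 0 ≤ s) (hst : s ≤ t) : M.F s ≤ M.F t :=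
  conv_mono le_rfl (G_mono ht hs hst)

namespace Subcritical

lemma chi_ne_top (ht : M.Subcritical t) : M.chi t ≠ ∞ := by
  obtain ⟨C, _, c, hc, hG⟩ := M.expDecay ht.nonneg ht.lt_βc
  exact tsum_ne_top_of_le_exp hc hG

lemma ofReal_susc (ht : M.Subcritical t) : ENNReal.ofReal (M.susc t) = M.chi t :=
  ENNReal.ofReal_toReal ht.chi_ne_top

lemma hasSum_toReal_G (ht : M.Subcritical t) : HasSum (fun x => (M.G t x).toReal) (M.susc t) :=
  hasSum_toReal_of_tsum_eq ht.chi_ne_top rfl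

lemma susc_mono (ht : M.Subcritical t) (hs : 0 ≤ s) (hst : s ≤ t) : M.susc s ≤ M.susc t :=
  ENNReal.toReal_mono ht.chi_ne_top (ENNReal.tsum_le_tsum (G_mono ht hs hst))

lemma one_le_susc (ht : M.Subcritical t) : 1 ≤ M.susc t :=
  M.susc_zero.symm.trans_le (ht.susc_mono le_rfl ht.nonneg)

lemma coordMoment_four_F_ne_top (ht : M.Subcritical t) (i : Fin d) :
    coordMoment 4 i (M.F t) ≠ ∞ := by
  obtain ⟨C, _, c, hc, hG⟩ := M.expDecay ht.nonneg ht.lt_βc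
  rw [F_eq_conv, coordMoment_four_conv i _ (neg_eq_of_smul_eq (M.symm t).smul_eq), M.K.tsum_mass]
  have hK (k : ℕ) := M.K.coordMoment_mass_ne_top k i
  have hGm (k : ℕ) := coordMoment_ne_top_of_le_exp hc hG k i
  have hχ : ∑' x, M.G t x ≠ ∞ := ht.chi_ne_top
  finiteness [hK 2, hK 4, hGm 2, hGm 4]

end Subcritical

lemma G_le_add_conv (ht : M.Subcritical t) (hs : 0 ≤ s) (hst : s ≤ t) :
    M.G t ≤ M.G s + ENNReal.ofReal (t - s) • conv (M.G s) (M.F t) := by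
  intro x
  have htriple := tsum_prod_eq_conv_conv (M.G s) M.K.mass (M.G t) x
  exact (M.I1 hs hst ht.lt_βc x).trans_eq
    (congrArg (fun z => M.G s x + ENNReal.ofReal (t - s) * z) htriple)

theorem F_le_add_conv (ht : M.Subcritical t) (hs : 0 ≤ s) (hst : s ≤ t) :
    M.F t ≤ M.F s + ENNReal.ofReal (t - s) • conv (M.F s) (M.F t) := by
  calc M.F t ≤ conv M.K.mass (M.G s + ENNReal.ofReal (t - s) • conv (M.G s) (M.F t)) :=
        conv_mono le_rfl (G_le_add_conv ht hs hst)
    _ = M.F s + ENNReal.ofReal (t - s) • conv (M.F s) (M.F t) := by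
        rw [conv_add, conv_smul, ← conv_assoc, ← F_eq_conv]

theorem susc_sub_le (ht : M.Subcritical t) (hs : 0 ≤ s) (hst : s ≤ t) :
    M.susc t - M.susc s ≤ (t - s) * (M.susc s * M.susc t) := by
  have hchi : M.chi t ≤ M.chi s + ENNReal.ofReal (t - s) * (M.chi s * M.chi t) := by
    simpa [ENNReal.tsum_add, ENNReal.tsum_mul_left, tsum_conv, tsum_F] using
      ENNReal.tsum_le_tsum (F_le_add_conv ht hs hst)
  have hst' : 0 ≤ t - s := sub_nonneg.mpr hst
  have hsc := ht.of_le hs hst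
  have hpos_s := hsc.one_le_susc
  have hpos_t := ht.one_le_susc
  rw [← ht.ofReal_susc, ← hsc.ofReal_susc, ← ENNReal.ofReal_mul (by positivity),
    ← ENNReal.ofReal_mul hst', ← ENNReal.ofReal_add (by positivity) (by positivity),
    ENNReal.ofReal_le_ofReal_iff (by positivity)] at hchi
  linarith

lemma tsum_errorMass_ne_top (ht : M.Subcritical t) : ∑' x, M.errorMass t x ≠ ∞ := by
  obtain ⟨C, _, c, hc, hH⟩ := M.H_expDecay ht.nonneg ht.lt_βc
  exact tsum_ne_top_of_le_exp hc fun x => ENNReal.ofReal_le_ofReal (hH x)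

lemma toReal_tsum_errorMass (M : Model d c₀) (t : ℝ) :
    (∑' x, M.errorMass t x).toReal = ∑' x, M.H t x := by
  refine (ENNReal.tsum_toReal_eq fun x => ENNReal.ofReal_ne_top).trans ?_
  exact tsum_congr fun x => ENNReal.toReal_ofReal (M.H_nonneg t x)

lemma hasSum_toReal_conv_G_F (ht : M.Subcritical t) :
    HasSum (fun x => (conv (M.G t) (M.F t) x).toReal) (M.susc t ^ 2) := by
  have hsum : ∑' x, conv (M.G t) (M.F t) x = M.chi t * M.chi t := by
    rw [tsum_conv, tsum_F, chi]
  simpa [susc, sq] using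
    hasSum_toReal_of_tsum_eq (ENNReal.mul_ne_top ht.chi_ne_top ht.chi_ne_top) hsum

lemma hasSum_toReal_conv_errorMass (ht : M.Subcritical t) :
    HasSum (fun x => (conv (M.G t) (conv (M.errorMass t) (M.G t)) x).toReal)
      ((∑' x, M.H t x) * M.susc t ^ 2) := by
  have h := hasSum_toReal_of_tsum_eq
    (ENNReal.mul_ne_top ht.chi_ne_top
      (ENNReal.mul_ne_top (tsum_errorMass_ne_top ht) ht.chi_ne_top))
    (tsum_conv_conv (M.G t) (M.errorMass t) (M.G t))
  convert h using 1
  rw [ENNReal.toReal_mul, ENNReal.toReal_mul, toReal_tsum_errorMass, susc]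
  ring

lemma toReal_conv_sub_le_deriv (ht : M.Subcritical t) (x : Fin d → ℤ) :
    (conv (M.G t) (M.F t) x).toReal - (conv (M.G t) (conv (M.errorMass t) (M.G t)) x).toReal ≤
      M.G' t x := by
  have hJfin : ∑' y, conv (M.G t) (conv M.K.mass (M.G t)) y ≠ ∞ := by
    rw [tsum_conv_conv, M.K.tsum_mass]
    finiteness [ht.chi_ne_top]
  have hHfin : ∑' y, conv (M.G t) (conv (M.errorMass t) (M.G t)) y ≠ ∞ := by
    rw [tsum_conv_conv]
    finiteness [ht.chi_ne_top, tsum_errorMass_ne_top ht]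
  have hJ := hasSum_toReal_conv_conv (ENNReal.ne_top_of_tsum_ne_top hJfin x)
  have hH := hasSum_toReal_conv_conv (ENNReal.ne_top_of_tsum_ne_top hHfin x)
  refine ((hJ.sub hH).tsum_eq.symm.trans (tsum_congr fun p => ?_)).trans_le
    (M.I2 ht.nonneg ht.lt_βc x)
  rw [AdmissibleKernel.mass, errorMass, ENNReal.toReal_ofReal (M.K.nonneg _),
    ENNReal.toReal_ofReal (M.H_nonneg t _)]
  ring

lemma sum_lowerBound_le_sum_deriv {δ : ℝ} (ht : M.Subcritical t) (hs : 0 ≤ s) (hu : u ∈ Icc s t)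
    (hH : ∑' x, M.H u x ≤ δ) (Λ : Finset (Fin d → ℤ)) :
    ∑ x ∈ Λ, (conv (M.G s) (M.F s) x).toReal - δ * M.susc t ^ 2 ≤ ∑ x ∈ Λ, M.G' u x := by
  have hsub := ht.of_le (hs.trans hu.1) hu.2
  have hmain : ∑ x ∈ Λ, (conv (M.G s) (M.F s) x).toReal ≤
      ∑ x ∈ Λ, (conv (M.G u) (M.F u) x).toReal := by
    refine Finset.sum_le_sum fun x _ => ENNReal.toReal_mono ?_
      (conv_mono (G_mono hsub hs hu.1) (F_mono hsub hs hu.1) x)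
    refine ENNReal.ne_top_of_tsum_ne_top ?_ x
    rw [tsum_conv, tsum_F]
    finiteness [hsub.chi_ne_top]
  have herror : ∑ x ∈ Λ, (conv (M.G u) (conv (M.errorMass u) (M.G u)) x).toReal ≤
      δ * M.susc t ^ 2 := by
    have hH0 : 0 ≤ ∑' x, M.H u x := tsum_nonneg (M.H_nonneg u)
    have hδ0 := hH0.trans hH
    have hsusc := ht.susc_mono hsub.nonneg hu.2
    have hsusc0 : 0 ≤ M.susc u := ENNReal.toReal_nonneg
    refine (sum_le_hasSum Λ (fun x _ => ENNReal.toReal_nonneg)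
      (hasSum_toReal_conv_errorMass hsub)).trans ?_
    gcongr
  have hderiv := Finset.sum_le_sum fun x (_ : x ∈ Λ) => toReal_conv_sub_le_deriv hsub x
  rw [Finset.sum_sub_distrib] at hderiv
  linarith

theorem le_susc_sub {δ : ℝ} (ht : M.Subcritical t) (hs : 0 ≤ s) (hst : s ≤ t)
    (hH : ∀ u ∈ Icc s t, ∑' x, M.H u x ≤ δ) :
    (t - s) * (M.susc s ^ 2 - δ * M.susc t ^ 2) ≤ M.susc t - M.susc s := by
  have hsc := ht.of_le hs hst
  rw [mul_comm]
  refine mul_sub_le_sub_of_hasSum (g := fun v x => (M.G v x).toReal) hst (fun x u hu => ?_)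
    (fun x => ENNReal.toReal_mono (ENNReal.ne_top_of_tsum_ne_top ht.chi_ne_top x)
      (G_mono ht hs hst x))
    hsc.hasSum_toReal_G ht.hasSum_toReal_G (hasSum_toReal_conv_G_F hsc)
    fun u hu Λ => sum_lowerBound_le_sum_deriv ht hs hu (hH u hu) Λ
  have hsub := ht.of_le (hs.trans hu.1) hu.2
  exact (M.deriv x hsub.nonneg hsub.lt_βc).mono fun v hv => hs.trans hv.1

theorem mul_sub_le_inv_susc_sub_inv_susc {δ : ℝ} (ht : M.Subcritical t) (hs : 0 ≤ s) (hst : s ≤ t)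
    (hδ : δ ≤ 1) (hH : ∀ u ∈ Icc s t, ∑' x, M.H u x ≤ δ) :
    (1 - δ) * (t - s) ≤ (M.susc s)⁻¹ - (M.susc t)⁻¹ := by
  have hsub (u) (hu : u ∈ Icc s t) := ht.of_le (hs.trans hu.1) hu.2
  have hδ0 : 0 ≤ δ := (tsum_nonneg (M.H_nonneg s)).trans (hH s (left_mem_Icc.mpr hst))
  exact mul_sub_le_inv_sub_inv hst hδ0 hδ
    (zero_lt_one.trans_le (hsub s (left_mem_Icc.mpr hst)).one_le_susc)
    (fun u hu v hv huv => (hsub v hv).susc_mono (hs.trans hu.1) huv)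
    (fun u hu v hv huv => susc_sub_le (hsub v hv) (hs.trans hu.1) huv)
    fun u hu v hv huv => le_susc_sub (hsub v hv) (hs.trans hu.1) huv fun w hw =>
      hH w ⟨hu.1.trans hw.1, hw.2.trans hv.2⟩

theorem exists_susc_eq {y : ℝ} (ht : M.Subcritical t) (hs : 0 ≤ s) (hst : s ≤ t)
    (hsy : M.susc s ≤ y) (hyt : y ≤ M.susc t) : ∃ u ∈ Icc s t, M.susc u = y := by
  have hsub (u) (hu : u ∈ Icc s t) := ht.of_le (hs.trans hu.1) hu.2
  have hlip : LipschitzOnWith ((M.susc t).toNNReal ^ 2) M.susc (Icc s t) :=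
    lipschitzOnWith_of_monotoneOn
      (fun u hu v hv huv => (hsub v hv).susc_mono (hs.trans hu.1) huv) fun u hu v hv huv => by
        refine (susc_sub_le (hsub v hv) (hs.trans hu.1) huv).trans ?_
        have hu' := ht.susc_mono (hs.trans hu.1) hu.2
        have hv' := ht.susc_mono (hs.trans hv.1) hv.2
        have hv0 : 0 ≤ M.susc v := ENNReal.toReal_nonneg
        rw [NNReal.coe_pow, Real.coe_toNNReal _ (zero_le_one.trans ht.one_le_susc), sq]
        gcongr
        exact zero_le_one.trans ht.one_le_susc
  exact intermediate_value_Icc hst hlip.continuousOn ⟨hsy, hyt⟩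

end Model
end Susceptibility

section Kernel

variable {d : ℕ} {c₀ : ℝ}

lemma sqNorm_nonneg (x : Fin d → ℤ) : 0 ≤ sqNorm x :=
  Finset.sum_nonneg fun _ _ => sq_nonneg _

namespace AdmissibleKernel

lemma sigma_sq (K : AdmissibleKernel d c₀) : K.sigma ^ 2 = ∑' x, sqNorm x * K.J x :=
  Real.sq_sqrt (tsum_nonneg fun x => mul_nonneg (sqNorm_nonneg x) (K.nonneg x))

lemma sigma_pos (K : AdmissibleKernel d c₀) (hc₀ : 0 < c₀) : 0 < K.sigma :=
  (mul_pos hc₀ (zero_lt_one.trans_le K.R_ge_one)).trans_le K.sigma_lower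

lemma sum_coordMoment_two_mass (K : AdmissibleKernel d c₀) :
    ∑ i, coordMoment 2 i K.mass = ENNReal.ofReal (K.sigma ^ 2) := by
  have hsq (x : Fin d → ℤ) : ∑ i, ((x i).natAbs : ℝ≥0∞) ^ 2 = ENNReal.ofReal (sqNorm x) := by
    rw [sqNorm, ENNReal.ofReal_sum_of_nonneg fun i _ => sq_nonneg _]
    refine Finset.sum_congr rfl fun i _ => ?_
    rw [← sq_abs, ← Int.cast_abs, Int.abs_eq_natAbs, Int.cast_natCast,
      ENNReal.ofReal_pow (Nat.cast_nonneg _), ENNReal.ofReal_natCast]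
  rw [K.sigma_sq, ENNReal.ofReal_tsum_of_nonneg
    (fun x => mul_nonneg (sqNorm_nonneg x) (K.nonneg x)) K.summable_sq]
  simp only [coordMoment]
  rw [← Summable.tsum_finsetSum fun i _ => ENNReal.summable]
  refine tsum_congr fun x => ?_
  rw [← Finset.sum_mul, hsq, mass, ENNReal.ofReal_mul (sqNorm_nonneg x)]

lemma coordMoment_two_mass (K : AdmissibleKernel d c₀) (i : Fin d) :
    coordMoment 2 i K.mass = ENNReal.ofReal (K.sigma ^ 2 / d) := by
  have hd : 0 < d := i.pos
  have hsum := K.sum_coordMoment_two_mass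
  rw [Finset.sum_congr rfl fun j _ => K.isSymmFun_mass.coordMoment_eq 2 j i, Finset.sum_const,
    Finset.card_fin, nsmul_eq_mul] at hsum
  rw [ENNReal.ofReal_div_of_pos (Nat.cast_pos.mpr hd), ← hsum, ENNReal.ofReal_natCast, mul_comm,
    ENNReal.mul_div_cancel_right (Nat.cast_ne_zero.mpr hd.ne') (ENNReal.natCast_ne_top d)]

lemma sigma_le (K : AdmissibleKernel d c₀) (hd : 0 < d) : K.sigma ≤ d * K.R := by
  have hR : 0 ≤ K.R := zero_le_one.trans K.R_ge_one
  have hd1 : (1 : ℝ) ≤ d := Nat.one_le_cast.mpr hd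
  have hmoment := K.coordMoment_add_mass_le 2 0 ⟨0, hd⟩
  rw [add_zero, K.coordMoment_two_mass] at hmoment
  simp only [coordMoment, pow_zero, one_mul, K.tsum_mass, mul_one] at hmoment
  rw [← ENNReal.ofReal_pow hR, ENNReal.ofReal_le_ofReal_iff (by positivity),
    div_le_iff₀ (by positivity)] at hmoment
  refine le_of_sq_le_sq ?_ (by positivity)
  nlinarith [mul_nonneg (sub_nonneg.mpr hd1) (mul_nonneg (zero_le_one.trans hd1) (sq_nonneg K.R))]

theorem isIsotropicMass (K : AdmissibleKernel d c₀) (hd : 0 < d) (hc₀ : 0 < c₀) {r : ℝ}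
    (hr : d / c₀ ^ 2 ≤ r) : IsIsotropicMass K.mass r where
  smul_eq := K.isSymmFun_mass.smul_eq
  tsum_ne_top := by simp [K.tsum_mass]
  coordMoment_two_eq := K.isSymmFun_mass.coordMoment_eq 2
  coordMoment_two_ne_zero i := by
    have := K.sigma_pos hc₀
    rw [K.coordMoment_two_mass]
    exact (ENNReal.ofReal_pos.mpr (by positivity)).ne'
  coordMoment_four_ne_top := K.coordMoment_mass_ne_top 4
  kurtosis_le i := by
    have hR : 0 ≤ K.R := zero_le_one.trans K.R_ge_one
    have hr0 : 0 ≤ r := (by positivity : 0 ≤ d / c₀ ^ 2).trans hr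
    have hrange : K.R ^ 2 ≤ r * (K.sigma ^ 2 / d) := by
      have hlower : (c₀ * K.R) ^ 2 ≤ K.sigma ^ 2 :=
        pow_le_pow_left₀ (by positivity) K.sigma_lower 2
      calc K.R ^ 2 = d / c₀ ^ 2 * ((c₀ * K.R) ^ 2 / d) := by field_simp
        _ ≤ r * (K.sigma ^ 2 / d) := by gcongr
    rw [K.tsum_mass, mul_one, sq, ← mul_assoc]
    refine (K.coordMoment_add_mass_le 2 2 i).trans (mul_le_mul_left ?_ _)
    rw [K.coordMoment_two_mass, ← ENNReal.ofReal_pow hR, ← ENNReal.ofReal_mul hr0]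
    exact ENNReal.ofReal_le_ofReal hrange

lemma mass_le (K : AdmissibleKernel d c₀) (x : Fin d → ℤ) :
    K.mass x ≤ ENNReal.ofReal (c₀⁻¹ / K.R ^ d) :=
  ENNReal.ofReal_le_ofReal (K.J_upper x)

lemma tsum_sq_mass_le (K : AdmissibleKernel d c₀) :
    ∑' x, K.mass x ^ 2 ≤ ENNReal.ofReal (c₀⁻¹ / K.R ^ d) := by
  calc ∑' x, K.mass x ^ 2 ≤ ∑' x, K.mass x * ENNReal.ofReal (c₀⁻¹ / K.R ^ d) :=
        ENNReal.tsum_le_tsum fun x => (sq _).trans_le (mul_le_mul_right (K.mass_le x) _)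
    _ = ENNReal.ofReal (c₀⁻¹ / K.R ^ d) := by rw [ENNReal.tsum_mul_right, K.tsum_mass, one_mul]

end AdmissibleKernel

end Kernel

section Bootstrap

open Set

/-- The compatibility conditions on the constants of the multiscale induction in dimension `d`: the
susceptibility is multiplied by `l` from one scale to the next, `r` bounds the kurtosis of `F` at
every scale, and `δ` bounds the mass of the error `H`. -/
structure BootstrapConstants (d : ℕ) (l r δ : ℝ) : Prop where
  l_ge : 32 ≤ l
  r_ge : 48 ≤ r
  δ_pos : 0 < δ
  δ_mul_le : δ * l * (2 * l * r + 24 * l ^ 2) ≤ 1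
  greenConst_mul_le : 48 * (greenConst d r * (2 * l) ^ (3 / 4 : ℝ)) ≤ l / 2

namespace BootstrapConstants

variable {d : ℕ} {l r δ : ℝ}

lemma l_pos (h : BootstrapConstants d l r δ) : 0 < l := by linarith [h.l_ge]

lemma δ_mul_l_le (h : BootstrapConstants d l r δ) : δ * l ≤ 1 / 2 := by
  have hδl : 0 ≤ δ * l := (mul_pos h.δ_pos h.l_pos).le
  have htwo : 2 ≤ 2 * l * r + 24 * l ^ 2 := by nlinarith [h.l_ge, h.r_ge]
  nlinarith [h.δ_mul_le, mul_le_mul_of_nonneg_left htwo hδl]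

lemma δ_le (h : BootstrapConstants d l r δ) : δ ≤ 1 / 2 := by
  nlinarith [h.δ_mul_l_le, h.l_ge, h.δ_pos]

lemma exists_of_le (hd : 0 < d) (hr : 48 ≤ r) : ∃ l δ, BootstrapConstants d l r δ := by
  obtain ⟨A, hA, hA0⟩ : ∃ A, A = 192 * greenConst d r ∧ 192 ≤ A :=
    ⟨_, rfl, by linarith [one_le_greenConst hd (by linarith : 1 ≤ r)]⟩
  have hA4 : 192 ^ 4 ≤ A ^ 4 := pow_le_pow_left₀ (by norm_num) hA0 4
  have hrpow : (A ^ 4) ^ (3 / 4 : ℝ) = A ^ 3 := by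
    rw [← Real.rpow_natCast, ← Real.rpow_mul (by linarith), ← Real.rpow_natCast]
    norm_num
  refine ⟨A ^ 4 / 2, (A ^ 4 / 2 * (2 * (A ^ 4 / 2) * r + 24 * (A ^ 4 / 2) ^ 2))⁻¹, by linarith, hr,
    by positivity, ?_, ?_⟩
  · rw [mul_assoc, inv_mul_cancel₀ (by positivity)]
  · rw [mul_div_cancel₀ _ two_ne_zero, hrpow]
    exact (show 48 * (greenConst d r * A ^ 3) = A ^ 4 / 2 / 2 by rw [hA]; ring).le

end BootstrapConstants

lemma one_sub_mul_le_of_inv_sub_inv {x y e l δ : ℝ} (hx : 0 < x) (hxy : x ≤ y) (hyl : y ≤ l * x)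
    (hδ : 0 ≤ δ) (hδl : δ * l < 1)
    (h : (1 - δ) * e ≤ x⁻¹ - y⁻¹) : 1 - δ * l ≤ l * (1 - e * x) := by
  have hy : 0 < y := hx.trans_le hxy
  have hratio1 : 1 ≤ y / x := (one_le_div hx).mpr hxy
  have hratio : y / x ≤ l := (div_le_iff₀ hx).mpr hyl
  have hδratio : δ * (y / x) ≤ δ * l := mul_le_mul_of_nonneg_left hratio hδ
  have hmul : y / x * ((1 - δ) * (e * x)) ≤ y / x - 1 := by
    have := mul_le_mul_of_nonneg_left h hy.le
    field_simp at this ⊢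
    linarith
  have hex : e * x ≤ 1 := by
    by_contra! hlt
    have hcoeff : 0 ≤ y / x - δ * (y / x) := by linarith
    linarith [mul_nonneg hcoeff (sub_nonneg.mpr hlt.le)]
  calc 1 - δ * l ≤ 1 - δ * (y / x) * (e * x) := by
        have : 0 ≤ δ * (y / x) := by positivity
        nlinarith
    _ ≤ y / x * (1 - e * x) := by linarith
    _ ≤ l * (1 - e * x) := mul_le_mul_of_nonneg_right hratio (sub_nonneg.mpr hex)

namespace Model

variable {d : ℕ} {c₀ l r δ s t : ℝ} {M : Model d c₀}

section Step

variable (ht : M.Subcritical t) (hs : 0 ≤ s) (hst : s ≤ t)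

include ht hs hst

lemma ofReal_sub_mul_tsum_F :
    ENNReal.ofReal (t - s) * ∑' x, M.F s x = ENNReal.ofReal ((t - s) * M.susc s) := by
  rw [tsum_F, ← (ht.of_le hs hst).ofReal_susc, ENNReal.ofReal_mul (sub_nonneg.mpr hst)]

lemma F_le_add_tsum_sq (x : Fin d → ℤ) :
    M.F t x ≤ M.F s x + ENNReal.ofReal (t - s) * (2 * ∑' y, M.F t y ^ 2) := by
  refine (F_le_add_conv ht hs hst x).trans (add_le_add le_rfl (mul_le_mul_right ?_ _))
  refine (conv_le_tsum_sq_add_tsum_sq _ _ x).trans ?_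
  rw [two_mul]
  exact add_le_add (ENNReal.tsum_le_tsum fun y => pow_le_pow_left' (F_mono ht hs hst y) 2) le_rfl

variable (hc : BootstrapConstants d l r δ) (hH : ∀ u ∈ Icc s t, ∑' x, M.H u x ≤ δ)

include hc hH

lemma one_sub_mul_le_mul_one_sub (hl : M.susc t ≤ l * M.susc s) :
    1 - δ * l ≤ l * (1 - (t - s) * M.susc s) :=
  have hδ1 : δ ≤ 1 := hc.δ_le.trans (by norm_num)
  one_sub_mul_le_of_inv_sub_inv (zero_lt_one.trans_le (ht.of_le hs hst).one_le_susc)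
    (ht.susc_mono hs hst) hl hc.δ_pos.le (hc.δ_mul_l_le.trans_lt (by norm_num))
    (mul_sub_le_inv_susc_sub_inv_susc ht hs hst hδ1 hH)

theorem tsum_sq_F_le (hd : 2 < d) (hF : IsIsotropicMass (M.F s) r) (hl : M.susc t ≤ l * M.susc s) :
    ∑' x, M.F t x ^ 2 ≤ ENNReal.ofReal (l / 2) * ∑' x, M.F s x ^ 2 := by
  have hl0 := hc.l_pos
  have hr : 1 ≤ r := by linarith [hc.r_ge]
  have ha : 0 ≤ (t - s) * M.susc s := mul_nonneg (sub_nonneg.mpr hst) ENNReal.toReal_nonneg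
  have hgap : (2 * l)⁻¹ ≤ 1 - (t - s) * M.susc s := by
    rw [inv_le_iff_one_le_mul₀ (by positivity)]
    linarith [one_sub_mul_le_mul_one_sub ht hs hst hc hH hl, hc.δ_mul_l_le]
  have hgap0 : 0 < 1 - (t - s) * M.susc s := lt_of_lt_of_le (by positivity) hgap
  have hpow : (1 - (t - s) * M.susc s) ^ (-3 / 4 : ℝ) ≤ (2 * l) ^ (3 / 4 : ℝ) :=
    calc _ ≤ (2 * l)⁻¹ ^ (-3 / 4 : ℝ) :=
          Real.rpow_le_rpow_of_nonpos (by positivity) hgap (by norm_num)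
      _ = _ := by rw [neg_div, Real.rpow_neg_eq_inv_rpow, inv_inv]
  have hG := one_le_greenConst (by lia : 0 < d) hr
  refine (hF.tsum_sq_le (by simpa using hd) hr ha (by linarith)
    (ofReal_sub_mul_tsum_F ht hs hst) (by rw [tsum_F]; exact ht.chi_ne_top)
    (F_le_add_conv ht hs hst)).trans (mul_le_mul_left ?_ _)
  rw [Fintype.card_fin, ← ENNReal.ofReal_ofNat 48, ← ENNReal.ofReal_mul (by norm_num)]
  refine ENNReal.ofReal_le_ofReal (le_trans ?_ hc.greenConst_mul_le)
  gcongr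

theorem isIsotropicMass_F (hd : 0 < d) (hF : IsIsotropicMass (M.F s) r)
    (hl : M.susc t = l * M.susc s) : IsIsotropicMass (M.F t) r := by
  have : Nonempty (Fin d) := Fin.pos_iff_nonempty.mp hd
  have hl0 := hc.l_pos
  have hr0 : 0 ≤ r := by linarith [hc.r_ge]
  have hgap : 1 - l * (1 - (t - s) * M.susc s) ≤ δ * l := by
    linarith [one_sub_mul_le_mul_one_sub ht hs hst hc hH hl.le]
  refine hF.of_le_add_conv (M.isSymmFun_F t).smul_eq ((M.isSymmFun_F t).coordMoment_eq 2)
    ht.coordMoment_four_F_ne_top hc.l_ge hc.r_ge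
    (mul_nonneg (sub_nonneg.mpr hst) ENNReal.toReal_nonneg)
    ((mul_le_mul_of_nonneg_right hgap (by positivity)).trans hc.δ_mul_le)
    (ofReal_sub_mul_tsum_F ht hs hst) ?_ (F_le_add_conv ht hs hst)
  rw [tsum_F, tsum_F, ← ht.ofReal_susc, ← (ht.of_le hs hst).ofReal_susc, hl,
    ENNReal.ofReal_mul hl0.le]

end Step

/-- The state of the multiscale induction at the scale `s` with `χ(s) = l ^ n`, in units of an upper
bound `U` for `F₀ = J` and for `∑ J²`. -/
structure AtScale (M : Model d c₀) (l r : ℝ) (U : ℝ≥0∞) (n : ℕ) (s : ℝ) : Prop where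
  susc_eq : M.susc s = l ^ n
  isIsotropicMass : IsIsotropicMass (M.F s) r
  tsum_sq_le : ∑' x, M.F s x ^ 2 ≤ ENNReal.ofReal ((l / 2) ^ n) * U
  F_le : ∀ x, M.F s x ≤ ENNReal.ofReal (1 + 2 * l * (1 - (1 / 2) ^ n)) * U

lemma atScale_zero (hd : 0 < d) (hc₀ : 0 < c₀) (hr : d / c₀ ^ 2 ≤ r) :
    M.AtScale l r (ENNReal.ofReal (c₀⁻¹ / M.K.R ^ d)) 0 0 where
  susc_eq := by rw [susc_zero, pow_zero]
  isIsotropicMass := by rw [F_zero]; exact M.K.isIsotropicMass hd hc₀ hr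
  tsum_sq_le := by simpa [F_zero] using M.K.tsum_sq_mass_le
  F_le x := by simpa [F_zero] using M.K.mass_le x

section AtScale

variable {U : ℝ≥0∞} {n : ℕ} (hscale : M.AtScale l r U n s) (ht : M.Subcritical t) (hs : 0 ≤ s)
  (hst : s ≤ t) (hc : BootstrapConstants d l r δ) (hH : ∀ u ∈ Icc s t, ∑' x, M.H u x ≤ δ)

include hscale ht hs hst hc hH

lemma AtScale.tsum_sq_le_succ (hd : 2 < d) (hl : M.susc t ≤ l ^ (n + 1)) :
    ∑' x, M.F t x ^ 2 ≤ ENNReal.ofReal ((l / 2) ^ (n + 1)) * U := by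
  have hl0 := hc.l_pos
  rw [pow_succ', ← hscale.susc_eq] at hl
  refine (tsum_sq_F_le ht hs hst hc hH hd hscale.isIsotropicMass hl).trans ?_
  rw [pow_succ', ENNReal.ofReal_mul (by positivity), mul_assoc]
  exact mul_le_mul_right hscale.tsum_sq_le _

lemma AtScale.F_le_succ (hd : 2 < d) (hl : M.susc t ≤ l ^ (n + 1)) (x : Fin d → ℤ) :
    M.F t x ≤ ENNReal.ofReal (1 + 2 * l * (1 - (1 / 2) ^ (n + 1))) * U := by
  have hl0 := hc.l_pos
  have htime : t - s ≤ (l ^ n)⁻¹ := by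
    have hgap := one_sub_mul_le_mul_one_sub ht hs hst hc hH
      (by rwa [hscale.susc_eq, ← pow_succ'])
    have hpos : 0 < 1 - (t - s) * l ^ n := by
      rw [hscale.susc_eq] at hgap
      exact pos_of_mul_pos_right (by linarith [hc.δ_mul_l_le]) hl0.le
    rw [← one_div, le_div_iff₀ (by positivity)]
    linarith
  have hpow : 0 ≤ 1 - (1 / 2 : ℝ) ^ n :=
    sub_nonneg.mpr (pow_le_one₀ (by norm_num) (by norm_num))
  have hincrement : (l ^ n)⁻¹ * (2 * (l / 2) ^ (n + 1)) = l * (1 / 2) ^ n := by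
    rw [pow_succ, div_pow, div_pow, one_pow]
    field_simp
  calc M.F t x ≤ M.F s x + ENNReal.ofReal (t - s) * (2 * ∑' y, M.F t y ^ 2) :=
        F_le_add_tsum_sq ht hs hst x
    _ ≤ ENNReal.ofReal (1 + 2 * l * (1 - (1 / 2) ^ n)) * U +
          ENNReal.ofReal (l ^ n)⁻¹ * (2 * (ENNReal.ofReal ((l / 2) ^ (n + 1)) * U)) :=
        add_le_add (hscale.F_le x) (mul_le_mul' (ENNReal.ofReal_le_ofReal htime)
          (mul_le_mul_right (hscale.tsum_sq_le_succ ht hs hst hc hH hd hl) 2))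
    _ = ENNReal.ofReal (1 + 2 * l * (1 - (1 / 2) ^ (n + 1))) * U := by
        rw [← mul_assoc 2, ← ENNReal.ofReal_ofNat 2, ← ENNReal.ofReal_mul zero_le_two, ← mul_assoc,
          ← ENNReal.ofReal_mul (by positivity), hincrement, ← add_mul,
          ← ENNReal.ofReal_add (by positivity) (by positivity)]
        congr 2
        ring

lemma AtScale.succ (hd : 2 < d) (hl : M.susc t = l ^ (n + 1)) : M.AtScale l r U (n + 1) t where
  susc_eq := hl
  isIsotropicMass := isIsotropicMass_F ht hs hst hc hH (by lia) hscale.isIsotropicMass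
    (by rw [hl, pow_succ', hscale.susc_eq])
  tsum_sq_le := hscale.tsum_sq_le_succ ht hs hst hc hH hd hl.le
  F_le := hscale.F_le_succ ht hs hst hc hH hd hl.le

end AtScale

variable {b : ℝ}

theorem exists_atScale (hb : M.Subcritical b) (hd : 2 < d) (hc₀ : 0 < c₀) (hr : d / c₀ ^ 2 ≤ r)
    (hc : BootstrapConstants d l r δ) (hH : ∀ u ∈ Icc 0 b, ∑' x, M.H u x ≤ δ) (n : ℕ)
    (hn : l ^ n ≤ M.susc b) :
    ∃ s ∈ Icc 0 b, M.AtScale l r (ENNReal.ofReal (c₀⁻¹ / M.K.R ^ d)) n s := by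
  have hl1 : 1 ≤ l := by linarith [hc.l_ge]
  induction n with
  | zero => exact ⟨0, left_mem_Icc.mpr hb.nonneg, atScale_zero (by lia) hc₀ hr⟩
  | succ n ih =>
    have hpow : l ^ n ≤ l ^ (n + 1) := pow_le_pow_right₀ hl1 n.le_succ
    obtain ⟨s, hs, hscale⟩ := ih (hpow.trans hn)
    obtain ⟨t, ht, hχ⟩ := exists_susc_eq hb hs.1 hs.2 (hscale.susc_eq.trans_le hpow) hn
    have ht0 : 0 ≤ t := hs.1.trans ht.1
    exact ⟨t, ⟨ht0, ht.2⟩, hscale.succ (hb.of_le ht0 ht.2) hs.1 ht.1 hc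
      (fun u hu => hH u ⟨hs.1.trans hu.1, hu.2.trans ht.2⟩) hd hχ⟩

theorem F_le_of_tsum_H_le (hb : M.Subcritical b) (hd : 2 < d) (hc₀ : 0 < c₀) (hr : d / c₀ ^ 2 ≤ r)
    (hc : BootstrapConstants d l r δ) (hH : ∀ u ∈ Icc 0 b, ∑' x, M.H u x ≤ δ) (x : Fin d → ℤ) :
    M.F b x ≤ ENNReal.ofReal ((1 + 2 * l) * (c₀⁻¹ / M.K.R ^ d)) := by
  have hl0 := hc.l_pos
  obtain ⟨n, hn, hn'⟩ := exists_nat_pow_near hb.one_le_susc (by linarith [hc.l_ge] : 1 < l)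
  obtain ⟨s, hs, hscale⟩ := exists_atScale hb hd hc₀ hr hc hH n hn
  refine (hscale.F_le_succ hb hs.1 hs.2 hc (fun u hu => hH u ⟨hs.1.trans hu.1, hu.2⟩) hd hn'.le
    x).trans ?_
  rw [ENNReal.ofReal_mul (by positivity)]
  refine mul_le_mul_left (ENNReal.ofReal_le_ofReal ?_) _
  have := mul_nonneg hl0.le (by positivity : 0 ≤ (1 / 2 : ℝ) ^ (n + 1))
  linarith

lemma exists_E_lt_of_lt_betaOf (M : Model d c₀) (hb0 : 0 ≤ b) (hb : b < M.betaOf δ) :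
    ∃ β, b < β ∧ ENNReal.ofReal β < M.βc ∧ M.E β < ENNReal.ofReal δ := by
  have hne : {β | 0 ≤ β ∧ ENNReal.ofReal β < M.βc ∧ M.E β < ENNReal.ofReal δ}.Nonempty := by
    by_contra! hempty
    rw [betaOf, hempty, Real.sSup_empty] at hb
    exact hb.not_ge hb0
  obtain ⟨β, ⟨_, hβ⟩, hbβ⟩ := exists_lt_of_lt_csSup hne hb
  exact ⟨β, hbβ, hβ⟩

lemma lt_βc_of_lt_betaOf (M : Model d c₀) (hb0 : 0 ≤ b) (hb : b < M.betaOf δ) :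
    ENNReal.ofReal b < M.βc := by
  obtain ⟨β, hbβ, hβ, _⟩ := M.exists_E_lt_of_lt_betaOf hb0 hb
  exact (ENNReal.ofReal_le_ofReal hbβ.le).trans_lt hβ

lemma tsum_H_le_of_lt_betaOf (M : Model d c₀) (hb0 : 0 ≤ b) (hb : b < M.betaOf δ) :
    ∀ t ∈ Icc 0 b, ∑' x, M.H t x ≤ δ := by
  intro t ht
  obtain ⟨β, hbβ, _, hE⟩ := M.exists_E_lt_of_lt_betaOf hb0 hb
  have hle : ENNReal.ofReal (∑' x, M.H t x) ≤ M.E β :=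
    le_self_add.trans (le_iSup₂ (f := fun t _ => ENNReal.ofReal (∑' x, M.H t x) +
      ENNReal.ofReal (∑' x, sqNorm x * M.H t x) / M.xiSq t) t ⟨ht.1, ht.2.trans hbβ.le⟩)
  exact (ENNReal.ofReal_lt_ofReal_iff'.mp (hle.trans_lt hE)).1.le

end Model

lemma div_pow_le_mul_rpow {C σ y : ℝ} {d : ℕ} (hC : 0 ≤ C) (hσ : 0 < σ) (hy : y ≤ 2 * σ)
    (hd : 2 ≤ d) : C / σ ^ d ≤ 2 ^ d * C / σ ^ d * (σ / max σ y) ^ ((d : ℝ) - 2) := by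
  have hmax : max σ y ≤ 2 * σ := max_le (by linarith) hy
  have hmax0 : 0 < max σ y := lt_max_of_lt_left hσ
  have hd2 : (0 : ℝ) ≤ d - 2 := sub_nonneg.mpr (by exact_mod_cast hd)
  have hratio : (2 ^ d)⁻¹ ≤ (σ / max σ y) ^ ((d : ℝ) - 2) :=
    calc ((2 : ℝ) ^ d)⁻¹ = (1 / 2) ^ (d : ℝ) := by rw [Real.rpow_natCast, one_div, inv_pow]
      _ ≤ (1 / 2) ^ ((d : ℝ) - 2) :=
        Real.rpow_le_rpow_of_exponent_ge (by norm_num) (by norm_num) (by linarith)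
      _ ≤ (σ / max σ y) ^ ((d : ℝ) - 2) := by
        refine Real.rpow_le_rpow (by norm_num) ?_ hd2
        rw [div_le_div_iff₀ two_pos hmax0]
        linarith
  calc C / σ ^ d = 2 ^ d * C / σ ^ d * (2 ^ d)⁻¹ := by field_simp
    _ ≤ 2 ^ d * C / σ ^ d * (σ / max σ y) ^ ((d : ℝ) - 2) := by gcongr

end Bootstrap

end Blackbox

theorem statement16_general (d : ℕ) (hd : 2 < d) (c₀ : ℝ) (hc₀ : 0 < c₀) :
    ∃ δs : ℝ, δs ∈ Set.Ioc (0:ℝ) (1/2) ∧ ∃ C > (0:ℝ),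
      ∀ M : Model d c₀, ∀ β : ℝ, 0 ≤ β → ENNReal.ofReal β < M.βc →
        (∀ t ∈ Set.Icc 0 β, ∑' y, M.H t y ≤ δs) →
        ∀ x : Fin d → ℤ, M.F β x ≤ ENNReal.ofReal (C / M.sigma ^ d) := by
  obtain ⟨l, δ, hc⟩ := BootstrapConstants.exists_of_le (r := max 48 (d / c₀ ^ 2))
    (by lia : 0 < d) (le_max_left _ _)
  have hl0 := hc.l_pos
  refine ⟨δ, ⟨hc.δ_pos, hc.δ_le⟩, (1 + 2 * l) * c₀⁻¹ * d ^ d, by positivity,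
    fun M β hβ0 hβ hH x => ?_⟩
  refine (Model.F_le_of_tsum_H_le ⟨hβ0, hβ⟩ hd hc₀ (le_max_right _ _) hc hH x).trans
    (ENNReal.ofReal_le_ofReal ?_)
  have hR := zero_lt_one.trans_le M.K.R_ge_one
  have hσ : 0 < M.sigma := M.K.sigma_pos hc₀
  have hσR : M.sigma ^ d ≤ (d * M.K.R) ^ d :=
    pow_le_pow_left₀ hσ.le (M.K.sigma_le (by lia)) d
  calc (1 + 2 * l) * (c₀⁻¹ / M.K.R ^ d)
      = (1 + 2 * l) * c₀⁻¹ * d ^ d / (d * M.K.R) ^ d := by rw [mul_pow]; field_simp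
    _ ≤ (1 + 2 * l) * c₀⁻¹ * d ^ d / M.sigma ^ d := by gcongr

/-- bounds at small scales `|x| ≤ 2σ_J` (`Prop:smallx`). -/
theorem statement16 (d : ℕ) (hd : 2 < d) (c₀ : ℝ) (hc₀ : c₀ ∈ Set.Ioc (0:ℝ) 1) :
    ∃ δs : ℝ, δs ∈ Set.Ioc (0:ℝ) (1/2) ∧ ∃ C > (0:ℝ),
      ∀ M : Model d c₀, ∀ β : ℝ, 0 ≤ β → β < M.betaOf δs →
        ∀ x : Fin d → ℤ, supNorm x ≤ 2 * M.sigma →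
          M.F β x ≤ ENNReal.ofReal (C / M.sigma ^ d *
            (M.sigma / max M.sigma (supNorm x)) ^ ((d:ℝ) - 2)) := by
  obtain ⟨δs, hδs, C, hC, hF⟩ := statement16_general d hd c₀ hc₀.1
  exact ⟨δs, hδs, 2 ^ d * C, by positivity, fun M β hβ0 hβ x hx =>
    (hF M β hβ0 (M.lt_βc_of_lt_betaOf hβ0 hβ) (M.tsum_H_le_of_lt_betaOf hβ0 hβ) x).trans
      (ENNReal.ofReal_le_ofReal (div_pow_le_mul_rpow hC.le (M.K.sigma_pos hc₀.1) hx hd.le))⟩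
end
end

section
/- Let d > 2 be an integer, let a, b, c₁, c₂, σ, ξ, μ > 0, and let ε ∈ [0,1]. Suppose f, g : ℤ^d → [0,∞) satisfy, for every x ∈ ℤ^d: f(x) ≤ c₁·σ^{−d}·(σ/(σ∨|x|))^{d−2−ε}·exp(−a|x|/ξ) and ∑_{y ∈ Λ_ξ(x)} g(y) ≤ c₂·(ξ/(ξ∨|x|))^{d−2}·exp(−b|x|/ξ), and suppose ‖g‖₁ := ∑_{y ∈ ℤ^d} g(y) < ∞. Then there exists a constant C > 0 depending only on (a, μ, d) such that for every x ∈ ℤ^d with |x| ≥ 2·max{σ, ξ}: ∑_{y ∉ Λ_{μξ}(0)} f(y)·g(x−y) ≤ (c₁/(σ²·|x|^{d−2}))·(|x|/σ)^ε·( 2^d·‖g‖₁·exp(−a|x|/(2ξ)) + c₂·C·(ξ/|x|)^ε·exp(−b|x|/(2ξ)) ). -/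
open scoped ENNReal

noncomputable section

open Blackbox

/-!
Split the sum at `‖y‖ = ‖x‖ / 2`. For `‖y‖ ≥ ‖x‖ / 2` the factor `f y` is at most its bound at
radius `‖x‖ / 2`, and the remaining sum of `g` is at most `‖g‖₁`. For `‖y‖ ≤ ‖x‖ / 2`, cut `ℤ^d`
into blocks indexed by `k`, each within `ξ` of its corner `n • k`, where `n ≈ ξ`. On such a block
the exponential in the bound on `f` is at most `exp (-a ‖k‖)`, which is summable over `k`, while
`x - y` stays within `ξ` of a point of norm at least `‖x‖ / 2`, so that the local bound on `g`
applies to the sum over the block.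
-/

namespace Blackbox

theorem supNorm_eq_norm {d : ℕ} : (supNorm : (Fin d → ℤ) → ℝ) = norm := by
  ext x
  rw [Pi.norm_def, supNorm, ← NNReal.coe_natCast,
    Finset.apply_sup_eq_sup_comp_of_linearOrder _ Nat.mono_cast Nat.cast_zero]
  simp only [Function.comp_def, NNReal.natCast_natAbs]

section Summation

variable {α β : Type*}

theorem summable_prod_pi {ι : Type*} [Fintype ι] {κ : ι → Type*} {f : ∀ i, κ i → ℝ}
    (hf_nonneg : ∀ i k, 0 ≤ f i k) (hf : ∀ i, Summable (f i)) :
    Summable fun k : ∀ i, κ i => ∏ i, f i (k i) := by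
  classical
  refine summable_of_sum_le (c := ∏ i, ∑' k, f i k)
    (fun k => Finset.prod_nonneg fun i _ => hf_nonneg i (k i)) fun s => ?_
  calc ∑ k ∈ s, ∏ i, f i (k i)
      ≤ ∑ k ∈ Fintype.piFinset fun i => s.image (· i), ∏ i, f i (k i) :=
        Finset.sum_le_sum_of_subset_of_nonneg
          (fun k hk => Fintype.mem_piFinset.2 fun i => Finset.mem_image_of_mem (· i) hk)
          fun k _ _ => Finset.prod_nonneg fun i _ => hf_nonneg i (k i)
    _ = ∏ i, ∑ k ∈ s.image (· i), f i k := (Finset.prod_univ_sum _ _).symm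
    _ ≤ ∏ i, ∑' k, f i k :=
        Finset.prod_le_prod (fun i _ => Finset.sum_nonneg fun k _ => hf_nonneg i k)
          fun i _ => (hf i).sum_le_tsum _ fun k _ => hf_nonneg i k

theorem sum_comp_le_tsum_subtype {g : β → ℝ} (hg_nonneg : ∀ y, 0 ≤ g y) (hg : Summable g)
    {e : α → β} (he : Function.Injective e) {T : Finset α} {p : β → Prop}
    (hp : ∀ y ∈ T, p (e y)) : ∑ y ∈ T, g (e y) ≤ ∑' z : {z // p z}, g z := by
  rw [← Finset.tsum_subtype]
  exact Summable.tsum_le_tsum_of_inj (fun y : T => (⟨e y, hp y y.2⟩ : {z // p z}))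
    (fun y₁ y₂ h => Subtype.ext (he (congrArg Subtype.val h))) (fun z _ => hg_nonneg z)
    (fun _ => le_rfl) (Summable.of_finite) (hg.subtype _)

theorem sum_comp_sub_left_le_tsum [AddCommGroup α] {g : α → ℝ} (hg_nonneg : ∀ y, 0 ≤ g y)
    (hg : Summable g) (x : α) (T : Finset α) : ∑ y ∈ T, g (x - y) ≤ ∑' y, g y := by
  rw [← (Equiv.subLeft x).tsum_eq g]
  exact ((Equiv.subLeft x).summable_iff.2 hg).sum_le_tsum T fun y _ => hg_nonneg _

theorem sum_mul_comp_sub_le_of_le_const [AddCommGroup α] {f g : α → ℝ} {B : ℝ} {T : Finset α}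
    (hB : 0 ≤ B) (hg_nonneg : ∀ y, 0 ≤ g y) (hg : Summable g) (hf : ∀ y ∈ T, f y ≤ B) (x : α) :
    ∑ y ∈ T, f y * g (x - y) ≤ B * ∑' y, g y :=
  calc ∑ y ∈ T, f y * g (x - y)
      ≤ ∑ y ∈ T, B * g (x - y) :=
        Finset.sum_le_sum fun y hy => mul_le_mul_of_nonneg_right (hf y hy) (hg_nonneg _)
    _ = B * ∑ y ∈ T, g (x - y) := (Finset.mul_sum _ _ _).symm
    _ ≤ B * ∑' y, g y :=
        mul_le_mul_of_nonneg_left (sum_comp_sub_left_le_tsum hg_nonneg hg x T) hB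

theorem sum_mul_le_tsum_mul_of_fiber_sum_le [DecidableEq β] {T : Finset α} {κ : α → β}
    {w h : α → ℝ} {u : β → ℝ} {G : ℝ} (hu_nonneg : ∀ k, 0 ≤ u k) (hu : Summable u)
    (hh : ∀ y ∈ T, 0 ≤ h y) (hw : ∀ y ∈ T, w y ≤ u (κ y)) (hG_nonneg : 0 ≤ G)
    (hG : ∀ y₀ ∈ T, ∑ y ∈ T with κ y = κ y₀, h y ≤ G) :
    ∑ y ∈ T, w y * h y ≤ (∑' k, u k) * G := by
  have fiber_le : ∀ k ∈ T.image κ, ∑ y ∈ T with κ y = k, w y * h y ≤ u k * G := by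
    intro k hk
    obtain ⟨y₀, hy₀, rfl⟩ := Finset.mem_image.1 hk
    calc ∑ y ∈ T with κ y = κ y₀, w y * h y
        ≤ ∑ y ∈ T with κ y = κ y₀, u (κ y₀) * h y := by
          refine Finset.sum_le_sum fun y hy => ?_
          obtain ⟨hyT, hκ⟩ := Finset.mem_filter.1 hy
          exact mul_le_mul_of_nonneg_right (hκ ▸ hw y hyT) (hh y hyT)
      _ = u (κ y₀) * ∑ y ∈ T with κ y = κ y₀, h y := (Finset.mul_sum _ _ _).symm
      _ ≤ u (κ y₀) * G := mul_le_mul_of_nonneg_left (hG y₀ hy₀) (hu_nonneg _)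
  calc ∑ y ∈ T, w y * h y
      = ∑ k ∈ T.image κ, ∑ y ∈ T with κ y = k, w y * h y :=
        (Finset.sum_fiberwise_of_maps_to (fun _ => Finset.mem_image_of_mem κ) _).symm
    _ ≤ ∑ k ∈ T.image κ, u k * G := Finset.sum_le_sum fiber_le
    _ = (∑ k ∈ T.image κ, u k) * G := (Finset.sum_mul _ _ _).symm
    _ ≤ (∑' k, u k) * G :=
        mul_le_mul_of_nonneg_right (hu.sum_le_tsum _ fun k _ => hu_nonneg k) hG_nonneg

end Summation

section Lattice

variable {ι : Type*} [Fintype ι]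

theorem summable_exp_neg_mul_abs_intCast {c : ℝ} (hc : 0 < c) :
    Summable fun n : ℤ => Real.exp (-c * |(n : ℝ)|) := by
  have hnat : Summable fun n : ℕ => Real.exp (-c * n) := by
    simpa only [mul_comm] using Real.summable_exp_nat_mul_iff.2 (neg_lt_zero.2 hc)
  exact .of_nat_of_neg (by simpa using hnat) (by simpa using hnat)

theorem summable_exp_neg_mul_norm {c : ℝ} (hc : 0 < c) :
    Summable fun k : ι → ℤ => Real.exp (-c * ‖k‖) := by
  set r : ℝ := c / (Fintype.card ι + 1) with hr
  have hr_pos : 0 < r := by positivity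
  refine (summable_prod_pi (fun _ _ => (Real.exp_pos _).le)
    fun _ : ι => summable_exp_neg_mul_abs_intCast hr_pos).of_nonneg_of_le
      (fun _ => (Real.exp_pos _).le) fun k => ?_
  rw [← Real.exp_sum, ← Finset.mul_sum, Real.exp_le_exp, neg_mul, neg_mul, neg_le_neg_iff]
  calc r * ∑ i, |(k i : ℝ)|
      ≤ r * ∑ _i : ι, ‖k‖ := by
        gcongr with i
        exact (Int.norm_eq_abs (k i)).symm.trans_le (norm_le_pi_norm k i)
    _ = r * (Fintype.card ι * ‖k‖) := by
        rw [Finset.sum_const, Finset.card_univ, nsmul_eq_mul]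
    _ ≤ r * ((Fintype.card ι + 1) * ‖k‖) := by gcongr; exact le_add_of_nonneg_right zero_le_one
    _ = c * ‖k‖ := by rw [hr]; field_simp

/-- The index of the block of side length `n` containing `y`. Division rounds towards zero, so that
the corner `n • blockIndex n y` of the block is no farther from the origin than `y`. -/
def blockIndex (n : ℤ) (y : ι → ℤ) : ι → ℤ := fun i => (y i).tdiv n

theorem norm_smul_blockIndex_le (n : ℤ) (y : ι → ℤ) : ‖n • blockIndex n y‖ ≤ ‖y‖ := by
  refine (pi_norm_le_iff_of_nonneg (norm_nonneg y)).2 fun i => (norm_le_pi_norm y i).trans' ?_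
  have natAbs_le : (n * (y i).tdiv n).natAbs ≤ (y i).natAbs := by
    rw [Int.natAbs_mul, Int.natAbs_tdiv]
    exact Nat.mul_div_le _ _
  rw [Int.norm_eq_abs, Int.norm_eq_abs, ← Int.cast_abs, ← Int.cast_abs, Int.cast_le,
    Int.abs_eq_natAbs, Int.abs_eq_natAbs]
  exact Int.ofNat_le.2 natAbs_le

theorem norm_sub_smul_blockIndex_le {n : ℤ} (hn : 0 < n) (y : ι → ℤ) :
    ‖y - n • blockIndex n y‖ ≤ n - 1 := by
  have hn_one : (1 : ℝ) ≤ n := by exact_mod_cast hn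
  refine (pi_norm_le_iff_of_nonneg (sub_nonneg.2 hn_one)).2 fun i => ?_
  have coord_eq : (y - n • blockIndex n y) i = (y i).tmod n :=
    sub_eq_of_eq_add' (Int.mul_tdiv_add_tmod (y i) n).symm
  have natAbs_lt : ((y i).tmod n).natAbs < n.natAbs := by
    rw [Int.natAbs_tmod]
    exact Nat.mod_lt _ (Int.natAbs_pos.2 hn.ne')
  have abs_le : |(y i).tmod n| ≤ n - 1 := by
    rw [Int.abs_eq_natAbs]
    omega
  rw [coord_eq, Int.norm_eq_abs]
  exact_mod_cast abs_le

end Lattice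

section Convolution

variable {ι : Type*} [Fintype ι] {a b c ξ σ r R B G p q : ℝ} {f g : (ι → ℤ) → ℝ}
  {x : ι → ℤ} {T : Finset (ι → ℤ)}

theorem sum_mul_comp_sub_le_of_le_exp (ha : 0 < a) (hξ : 0 < ξ) (hB : 0 ≤ B) (hG_nonneg : 0 ≤ G)
    (hg_nonneg : ∀ y, 0 ≤ g y) (hg : Summable g) (hT : ∀ y ∈ T, ‖y‖ ≤ ‖x‖ - R)
    (hf : ∀ y ∈ T, f y ≤ B * Real.exp (-a * ‖y‖ / ξ))
    (hG : ∀ z : ι → ℤ, R ≤ ‖z‖ → ∑' y : {y // ‖y - z‖ ≤ ξ}, g y ≤ G) :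
    ∑ y ∈ T, f y * g (x - y) ≤ B * (∑' k : ι → ℤ, Real.exp (-a * ‖k‖)) * G := by
  set n : ℤ := ⌊ξ⌋ + 1 with hn
  have hn_pos : 0 < n := by positivity
  have hξ_le : ξ ≤ n := by simpa [hn] using (Int.lt_floor_add_one ξ).le
  have hn_le : (n : ℝ) - 1 ≤ ξ := by simpa [hn] using Int.floor_le ξ
  have mul_norm_blockIndex_le (y : ι → ℤ) : ξ * ‖blockIndex n y‖ ≤ ‖y‖ := by
    refine le_trans ?_ (norm_smul_blockIndex_le n y)
    rw [norm_smul, Int.norm_eq_abs, abs_of_pos (Int.cast_pos.2 hn_pos)]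
    gcongr
  rw [← tsum_mul_left]
  refine sum_mul_le_tsum_mul_of_fiber_sum_le (κ := blockIndex n) (fun k => by positivity)
    ((summable_exp_neg_mul_norm ha).mul_left B) (fun y _ => hg_nonneg _)
    (fun y hy => (hf y hy).trans ?_) hG_nonneg fun y₀ hy₀ => ?_
  · gcongr
    rw [div_le_iff₀ hξ]
    linarith [mul_le_mul_of_nonneg_left (mul_norm_blockIndex_le y) ha.le]
  · have center_far : R ≤ ‖x - n • blockIndex n y₀‖ := by
      linarith [norm_sub_norm_le x (n • blockIndex n y₀), norm_smul_blockIndex_le n y₀, hT y₀ hy₀]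
    refine (sum_comp_le_tsum_subtype hg_nonneg hg sub_right_injective fun y hy => ?_).trans
      (hG _ center_far)
    rw [← (Finset.mem_filter.1 hy).2, sub_sub_sub_cancel_left, norm_sub_rev]
    exact (norm_sub_smul_blockIndex_le hn_pos y).trans hn_le

theorem rpow_div_max_le (hσ : 0 ≤ σ) (hr : 0 < r) (hrR : r ≤ R) (hp : 0 ≤ p) :
    (σ / max σ R) ^ p ≤ (σ / r) ^ p := by
  gcongr
  exact hrR.trans (le_max_right _ _)

theorem rpow_div_max_mul_exp_le (hσ : 0 ≤ σ) (hξ : 0 < ξ) (ha : 0 ≤ a) (hp : 0 ≤ p) (hr : 0 < r)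
    (hrR : r ≤ R) :
    (σ / max σ R) ^ p * Real.exp (-a * R / ξ) ≤ (σ / r) ^ p * Real.exp (-a * r / ξ) := by
  refine mul_le_mul (rpow_div_max_le hσ hr hrR hp) ?_ (Real.exp_pos _).le (by positivity)
  simp only [neg_mul]
  gcongr

theorem sum_mul_comp_sub_le (ha : 0 < a) (hb : 0 ≤ b) (hB : 0 ≤ B) (hc : 0 ≤ c) (hσ : 0 ≤ σ)
    (hξ : 0 < ξ) (hp : 0 ≤ p) (hq : 0 ≤ q) (hr : 0 < r) (hg_nonneg : ∀ y, 0 ≤ g y)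
    (hg : Summable g)
    (hf_le : ∀ y, f y ≤ B * (σ / max σ ‖y‖) ^ p * Real.exp (-a * ‖y‖ / ξ))
    (hg_le : ∀ z : ι → ℤ, ∑' y : {y // ‖y - z‖ ≤ ξ}, g y ≤
      c * (ξ / max ξ ‖z‖) ^ q * Real.exp (-b * ‖z‖ / ξ))
    (hR : 0 < R) (hRx : 2 * R ≤ ‖x‖) (hT : ∀ y ∈ T, r ≤ ‖y‖) :
    ∑ y ∈ T, f y * g (x - y) ≤
      B * (σ / R) ^ p * Real.exp (-a * R / ξ) * ∑' y, g y +
      B * (σ / r) ^ p * (∑' k : ι → ℤ, Real.exp (-a * ‖k‖)) *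
        (c * (ξ / R) ^ q * Real.exp (-b * R / ξ)) := by
  have f_le_far (y : ι → ℤ) (hy : R ≤ ‖y‖) :
      f y ≤ B * (σ / R) ^ p * Real.exp (-a * R / ξ) := by
    refine (hf_le y).trans ?_
    rw [mul_assoc, mul_assoc]
    exact mul_le_mul_of_nonneg_left (rpow_div_max_mul_exp_le hσ hξ ha.le hp hR hy) hB
  have f_le_near (y : ι → ℤ) (hy : r ≤ ‖y‖) :
      f y ≤ B * (σ / r) ^ p * Real.exp (-a * ‖y‖ / ξ) := by
    refine (hf_le y).trans ?_
    gcongr B * ?_ * _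
    exact rpow_div_max_le hσ hr hy hp
  have local_sum_le (z : ι → ℤ) (hz : R ≤ ‖z‖) :
      ∑' y : {y // ‖y - z‖ ≤ ξ}, g y ≤ c * (ξ / R) ^ q * Real.exp (-b * R / ξ) := by
    refine (hg_le z).trans ?_
    rw [mul_assoc, mul_assoc]
    exact mul_le_mul_of_nonneg_left (rpow_div_max_mul_exp_le hξ.le hξ hb hq hR hz) hc
  rw [← Finset.sum_filter_add_sum_filter_not T (fun y => R ≤ ‖y‖)]
  refine add_le_add
    (sum_mul_comp_sub_le_of_le_const (by positivity) hg_nonneg hg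
      (fun y hy => f_le_far y (Finset.mem_filter.1 hy).2) x)
    (sum_mul_comp_sub_le_of_le_exp ha hξ (by positivity) (by positivity) hg_nonneg hg
      (fun y hy => ?_) (fun y hy => f_le_near y (hT y (Finset.mem_filter.1 hy).1)) local_sum_le)
  linarith [not_le.1 (Finset.mem_filter.1 hy).2]

end Convolution

section Exponents

variable {c ε σ ξ μ X : ℝ}

theorem div_pow_mul_div_rpow {d : ℕ} (hd : 2 ≤ d) {s : ℝ} (hσ : 0 < σ) (hX : 0 < X) (hs : 0 < s) :
    c / σ ^ d * (σ / s) ^ ((d : ℝ) - 2 - ε) =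
      c / (σ ^ 2 * X ^ (d - 2)) * (X / σ) ^ ε * (X / s) ^ ((d : ℝ) - 2 - ε) := by
  obtain ⟨m, rfl⟩ := Nat.exists_eq_add_of_le' hd
  have exponent_eq : ((m + 2 : ℕ) : ℝ) - 2 = m := by push_cast; ring
  rw [exponent_eq, Nat.add_sub_cancel, Real.rpow_sub (by positivity), Real.rpow_sub (by positivity),
    Real.rpow_natCast, Real.rpow_natCast, Real.div_rpow hσ.le hs.le, Real.div_rpow hX.le hσ.le,
    Real.div_rpow hX.le hs.le, div_pow, div_pow, pow_add]
  field_simp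

theorem div_rpow_sub_mul_div_rpow (q : ℝ) (hξ : 0 < ξ) (hμ : 0 < μ) (hX : 0 < X) :
    (X / (μ * ξ)) ^ (q - ε) * (ξ / (X / 2)) ^ q = 2 ^ q * μ⁻¹ ^ (q - ε) * (ξ / X) ^ ε := by
  have hX_eq : X / (μ * ξ) = μ⁻¹ * (ξ / X)⁻¹ := by field_simp
  have hξ_eq : ξ / (X / 2) = 2 * (ξ / X) := by field_simp
  have ratio_pos : 0 < ξ / X := by positivity
  rw [hX_eq, hξ_eq, Real.mul_rpow (by positivity) (by positivity),
    Real.mul_rpow (by positivity) ratio_pos.le, Real.inv_rpow ratio_pos.le,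
    ← Real.rpow_neg ratio_pos.le]
  have exponents_add : (ξ / X) ^ (-(q - ε)) * (ξ / X) ^ q = (ξ / X) ^ ε := by
    rw [← Real.rpow_add ratio_pos]
    ring_nf
  rw [← exponents_add]
  ring

theorem rpow_le_max_one_pow {d : ℕ} {t p : ℝ} (ht : 0 ≤ t) (hp : 0 ≤ p) (hpd : p ≤ d) :
    t ^ p ≤ max 1 t ^ d :=
  calc t ^ p ≤ max 1 t ^ p := Real.rpow_le_rpow ht (le_max_right _ _) hp
    _ ≤ max 1 t ^ (d : ℝ) := Real.rpow_le_rpow_of_exponent_le (le_max_left _ _) hpd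
    _ = max 1 t ^ d := Real.rpow_natCast _ _

theorem div_pow_mul_div_half_rpow_le {d : ℕ} (hd : 2 ≤ d) (hc : 0 ≤ c) (hσ : 0 < σ) (hX : 0 < X)
    (hε : -2 ≤ ε) :
    c / σ ^ d * (σ / (X / 2)) ^ ((d : ℝ) - 2 - ε) ≤
      c / (σ ^ 2 * X ^ (d - 2)) * (X / σ) ^ ε * 2 ^ d := by
  rw [div_pow_mul_div_rpow hd hσ hX (half_pos hX), div_div_cancel₀ hX.ne', ← Real.rpow_natCast 2 d]
  gcongr
  · exact one_le_two
  · linarith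

theorem div_pow_mul_div_rpow_mul_div_half_rpow_le {d : ℕ} (hd : 2 ≤ d) (hc : 0 ≤ c) (hσ : 0 < σ)
    (hξ : 0 < ξ) (hμ : 0 < μ) (hX : 0 < X) (hε : ε ∈ Set.Icc (-2 : ℝ) (d - 2)) :
    c / σ ^ d * (σ / (μ * ξ)) ^ ((d : ℝ) - 2 - ε) * (ξ / (X / 2)) ^ ((d : ℝ) - 2) ≤
      c / (σ ^ 2 * X ^ (d - 2)) * (X / σ) ^ ε *
        (2 ^ ((d : ℝ) - 2) * max 1 μ⁻¹ ^ d * (ξ / X) ^ ε) := by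
  rw [div_pow_mul_div_rpow hd hσ hX (mul_pos hμ hξ), mul_assoc,
    div_rpow_sub_mul_div_rpow _ hξ hμ hX]
  gcongr
  exact rpow_le_max_one_pow (inv_nonneg.2 hμ.le) (by linarith [hε.2]) (by linarith [hε.1])

theorem far_add_near_le {d : ℕ} {a b c₁ c₂ N K : ℝ} (hd : 2 ≤ d) (hc₁ : 0 ≤ c₁) (hc₂ : 0 ≤ c₂)
    (hσ : 0 < σ) (hξ : 0 < ξ) (hμ : 0 < μ) (hX : 0 < X) (hε : ε ∈ Set.Icc (-2 : ℝ) (d - 2))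
    (hN : 0 ≤ N) (hK : 0 ≤ K) :
    c₁ / σ ^ d * (σ / (X / 2)) ^ ((d : ℝ) - 2 - ε) * Real.exp (-a * (X / 2) / ξ) * N +
        c₁ / σ ^ d * (σ / (μ * ξ)) ^ ((d : ℝ) - 2 - ε) * K *
          (c₂ * (ξ / (X / 2)) ^ ((d : ℝ) - 2) * Real.exp (-b * (X / 2) / ξ)) ≤
      c₁ / (σ ^ 2 * X ^ (d - 2)) * (X / σ) ^ ε *
        (2 ^ d * N * Real.exp (-a * X / (2 * ξ)) +
          c₂ * (2 ^ ((d : ℝ) - 2) * max 1 μ⁻¹ ^ d * K) * (ξ / X) ^ ε *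
            Real.exp (-b * X / (2 * ξ))) := by
  have half_exponent (t : ℝ) : -t * (X / 2) / ξ = -t * X / (2 * ξ) := by ring
  have far_le := mul_le_mul_of_nonneg_right
    (div_pow_mul_div_half_rpow_le hd hc₁ hσ hX hε.1)
    (mul_nonneg hN (Real.exp_pos (-a * X / (2 * ξ))).le)
  have near_le := mul_le_mul_of_nonneg_right
    (div_pow_mul_div_rpow_mul_div_half_rpow_le hd hc₁ hσ hξ hμ hX hε)
    (mul_nonneg (mul_nonneg hc₂ hK) (Real.exp_pos (-b * X / (2 * ξ))).le)
  rw [half_exponent, half_exponent]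
  linear_combination far_le + near_le

end Exponents

end Blackbox

theorem statement19_general (d : ℕ) (hd : 2 ≤ d) (a μ : ℝ) (ha : 0 < a) (hμ : 0 < μ) :
    ∃ C > (0 : ℝ), ∀ b c₁ c₂ σ ξ ε : ℝ, 0 ≤ b → 0 ≤ c₁ → 0 ≤ c₂ → 0 < σ → 0 < ξ →
      ε ∈ Set.Icc (-2 : ℝ) (d - 2) → ∀ f g : (Fin d → ℤ) → ℝ,
      (∀ x, 0 ≤ f x) → (∀ x, 0 ≤ g x) → Summable g →
      (∀ x, f x ≤ c₁ / σ ^ d * (σ / max σ ‖x‖) ^ ((d : ℝ) - 2 - ε) * Real.exp (-a * ‖x‖ / ξ)) →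
      (∀ x : Fin d → ℤ, ∑' y : {y // ‖y - x‖ ≤ ξ}, g y ≤
        c₂ * (ξ / max ξ ‖x‖) ^ ((d : ℝ) - 2) * Real.exp (-b * ‖x‖ / ξ)) →
      ∀ x : Fin d → ℤ, x ≠ 0 →
        Summable (fun y : {y : Fin d → ℤ // ¬ ‖y‖ ≤ μ * ξ} => f y.1 * g (x - y.1)) ∧
        ∑' y : {y : Fin d → ℤ // ¬ ‖y‖ ≤ μ * ξ}, f y.1 * g (x - y.1) ≤
          c₁ / (σ ^ 2 * ‖x‖ ^ (d - 2)) * (‖x‖ / σ) ^ ε *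
            (2 ^ d * (∑' y, g y) * Real.exp (-a * ‖x‖ / (2 * ξ)) +
              c₂ * C * (ξ / ‖x‖) ^ ε * Real.exp (-b * ‖x‖ / (2 * ξ))) := by
  set K : ℝ := ∑' k : Fin d → ℤ, Real.exp (-a * ‖k‖)
  have hK : 0 < K :=
    (summable_exp_neg_mul_norm ha).tsum_pos (fun _ => (Real.exp_pos _).le) 0 (Real.exp_pos _)
  refine ⟨2 ^ ((d : ℝ) - 2) * max 1 μ⁻¹ ^ d * K, by positivity, ?_⟩
  intro b c₁ c₂ σ ξ ε hb hc₁ hc₂ hσ hξ hε f g hf_nonneg hg_nonneg hg hf_le hg_le x hx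
  have hX : 0 < ‖x‖ := norm_pos_iff.2 hx
  have hd_real : (2 : ℝ) ≤ d := by exact_mod_cast hd
  have sum_le (s : Finset {y : Fin d → ℤ // ¬ ‖y‖ ≤ μ * ξ}) :=
    calc ∑ y ∈ s, f y.1 * g (x - y.1)
        = ∑ y ∈ s.map (Function.Embedding.subtype _), f y * g (x - y) := by
          rw [Finset.sum_map]; rfl
      _ ≤ _ := sum_mul_comp_sub_le ha hb (by positivity) hc₂ hσ.le hξ
          (sub_nonneg.2 hε.2) (sub_nonneg.2 hd_real) (mul_pos hμ hξ) hg_nonneg hg hf_le hg_le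
          (half_pos hX) (mul_div_cancel₀ _ two_ne_zero).le fun y hy => by
            obtain ⟨w, -, rfl⟩ := Finset.mem_map.1 hy
            exact (not_le.1 w.2).le
      _ ≤ _ := far_add_near_le hd hc₁ hc₂ hσ hξ hμ hX hε (tsum_nonneg hg_nonneg) hK.le
  have terms_nonneg (y : {y : Fin d → ℤ // ¬ ‖y‖ ≤ μ * ξ}) : 0 ≤ f y.1 * g (x - y.1) :=
    mul_nonneg (hf_nonneg _) (hg_nonneg _)
  exact ⟨summable_of_sum_le terms_nonneg sum_le, Real.tsum_le_of_sum_le terms_nonneg sum_le⟩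

/-- convolution estimate (`lemma:fstarg`).  `C` depends only on `(a, μ, d)`. -/
theorem statement19 (d : ℕ) (hd : 2 < d) (a μ : ℝ) (ha : 0 < a) (hμ : 0 < μ) :
    ∃ C > (0:ℝ), ∀ b c₁ c₂ σ ξ ε : ℝ, 0 < b → 0 < c₁ → 0 < c₂ → 0 < σ → 0 < ξ →
      ε ∈ Set.Icc (0:ℝ) 1 → ∀ f g : (Fin d → ℤ) → ℝ,
      (∀ x, 0 ≤ f x) → (∀ x, 0 ≤ g x) → Summable g →
      (∀ x : Fin d → ℤ, f x ≤ c₁ / σ ^ d *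
          (σ / max σ (supNorm x)) ^ ((d:ℝ) - 2 - ε) * Real.exp (-a * supNorm x / ξ)) →
      (∀ x : Fin d → ℤ,
        (∑' y : {y : Fin d → ℤ // supNorm (y - x) ≤ ξ}, g y.1) ≤
          c₂ * (ξ / max ξ (supNorm x)) ^ ((d:ℝ) - 2) * Real.exp (-b * supNorm x / ξ)) →
      ∀ x : Fin d → ℤ, 2 * max σ ξ ≤ supNorm x →
        (∑' y : {y : Fin d → ℤ // ¬ supNorm y ≤ μ * ξ}, f y.1 * g (x - y.1)) ≤
          c₁ / (σ ^ 2 * supNorm x ^ (d - 2)) * (supNorm x / σ) ^ ε *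
            (2 ^ d * (∑' y, g y) * Real.exp (-a * supNorm x / (2 * ξ)) +
              c₂ * C * (ξ / supNorm x) ^ ε * Real.exp (-b * supNorm x / (2 * ξ))) := by
  rw [supNorm_eq_norm]
  obtain ⟨C, hC, bound⟩ := statement19_general d hd.le a μ ha hμ
  have hd_real : (3 : ℝ) ≤ d := by exact_mod_cast hd
  refine ⟨C, hC, fun b c₁ c₂ σ ξ ε hb hc₁ hc₂ hσ hξ hε f g hf hg hgs hf_le hg_le x hx => ?_⟩
  have hx_ne : x ≠ 0 := norm_pos_iff.1 (by linarith [le_max_left σ ξ])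
  exact (bound b c₁ c₂ σ ξ ε hb.le hc₁.le hc₂.le hσ hξ ⟨by linarith [hε.1], by linarith [hε.2]⟩
    f g hf hg hgs hf_le hg_le x hx_ne).2
end
end
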